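/- arXiv:2507.07546 — 5 statements merged into one kernel-verified Lean document; each statement's English description precedes it below -/
import Mathlib

section
/- Osgood's lemma: Let T > 0, let ρ : [0,T] → [0,∞) be a measurable function, let γ : [0,T] → [0,∞) be locally integrable, and let μ : [0,∞) → [0,∞) be a continuous nondecreasing function with μ(r) > 0 for r > 0 and ∫₀¹ dr/μ(r) = +∞. Let a ≥ 0 and assume that ρ(t) ≤ a + ∫₀ᵗ γ(s) μ(ρ(s)) ds for all t ∈ [0,T]. Then: (i) if a = 0, the function ρ is identically zero on [0,T]; (ii) if a > 0, then for all t ∈ [0,T], −M(ρ(t)) + M(a) ≤ ∫₀ᵗ γ(s) ds, where M(x) := ∫ₓ¹ dr/μ(r) for x > 0. -/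
open MeasureTheory Set

/-!
Fix `t` and put `R(s) = a + ∫₀ˢ γ μ(ρ)`, a continuous nondecreasing majorant of `ρ`. If `γ μ(ρ)` is not
integrable on `[0,t]`, the (junk) value of its integral is `0`, so `ρ(t) ≤ a` and both claims are
immediate. Otherwise, for `u ≤ v` the monotonicity of `μ` gives
`∫_{R(u)}^{R(v)} dr/μ(r) ≤ (R(v) - R(u)) / μ(R(u)) ≤ (μ(R(v)) / μ(R(u))) ∫_u^v γ`.
For `a > 0` the ratio is at most `1 + ε` when `v` is close to `u`, so continuous induction on `[0,t]`
yields `∫_a^{R(t)} dr/μ(r) ≤ (1 + ε) ∫₀ᵗ γ` (`osgood_majorant`), and `ε → 0` gives the second claim.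

For `a = 0`, the hypothesis holds with every `b > 0` in place of `a`. If `ρ(t) > 0`, then
`∫_b^1 dr/μ(r)` is bounded uniformly in `b`, which contradicts the divergence of `∫₀¹ dr/μ(r)`.
-/

lemma osgood_inv_integrable {μ : ℝ → ℝ} (hμ_cont : ContinuousOn μ (Ici (0:ℝ)))
    (hμ_pos : ∀ r : ℝ, 0 < r → 0 < μ r) {x y : ℝ} (hx : 0 < x) (hy : 0 < y) :
    IntervalIntegrable (fun r => 1 / μ r) volume x y := by
  have hsub : ∀ r ∈ uIcc x y, 0 < r := fun r hr => lt_of_lt_of_le (lt_min hx hy) hr.1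
  refine ContinuousOn.intervalIntegrable ?_
  refine continuousOn_const.div (hμ_cont.mono fun r hr => (hsub r hr).le) ?_
  exact fun r hr => (hμ_pos r (hsub r hr)).ne'

/-- The integral form of Osgood's inequality for the majorant `R(s) = a + ∫₀ˢ f`, where `f` plays
the role of `γ μ(ρ)`. -/
lemma osgood_majorant {t a : ℝ} (ht : 0 ≤ t) (ha : 0 < a) {f γ μ : ℝ → ℝ}
    (hμ_cont : ContinuousOn μ (Ici (0:ℝ))) (hμ_mono : MonotoneOn μ (Ici (0:ℝ)))
    (hμ_pos : ∀ r : ℝ, 0 < r → 0 < μ r)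
    (hγ : IntervalIntegrable γ volume 0 t) (hf : IntervalIntegrable f volume 0 t)
    (hγ0 : ∀ s ∈ Icc 0 t, 0 ≤ γ s) (hf0 : ∀ s ∈ Icc 0 t, 0 ≤ f s)
    (hfγ : ∀ s ∈ Icc 0 t, f s ≤ γ s * μ (a + ∫ x in (0:ℝ)..s, f x)) :
    ∫ r in a..(a + ∫ x in (0:ℝ)..t, f x), 1 / μ r ≤ ∫ s in (0:ℝ)..t, γ s := by
  set R : ℝ → ℝ := fun s => a + ∫ x in (0:ℝ)..s, f x with hR
  have hint : ∀ {g : ℝ → ℝ}, IntervalIntegrable g volume 0 t → ∀ u ∈ Icc 0 t, ∀ v ∈ Icc 0 t,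
      IntervalIntegrable g volume u v := by
    intro g hg u hu v hv
    refine hg.mono_set ?_
    rw [uIcc_of_le ht]
    exact ordConnected_Icc.uIcc_subset hu hv
  have h0 : (0:ℝ) ∈ Icc 0 t := ⟨le_rfl, ht⟩
  have htt : t ∈ Icc 0 t := ⟨ht, le_rfl⟩
  have hcontP : ∀ {g : ℝ → ℝ}, IntervalIntegrable g volume 0 t →
      ContinuousOn (fun s => ∫ x in (0:ℝ)..s, g x) (Icc 0 t) := by
    intro g hg
    have := intervalIntegral.continuousOn_primitive_interval' hg left_mem_uIcc
    rwa [uIcc_of_le ht] at this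
  have hRsub : ∀ u ∈ Icc 0 t, ∀ v ∈ Icc 0 t, R v - R u = ∫ x in u..v, f x := by
    intro u hu v hv
    simp only [hR]
    rw [← intervalIntegral.integral_add_adjacent_intervals (hint hf 0 h0 u hu) (hint hf u hu v hv)]
    ring
  have hRmono : ∀ u ∈ Icc 0 t, ∀ v ∈ Icc 0 t, u ≤ v → R u ≤ R v := by
    intro u hu v hv huv
    have h1 : 0 ≤ ∫ x in u..v, f x := intervalIntegral.integral_nonneg huv
      fun x hx => hf0 x ⟨hu.1.trans hx.1, hx.2.trans hv.2⟩
    linarith [hRsub u hu v hv]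
  have hR0 : R 0 = a := by simp [hR]
  have hRa : ∀ u ∈ Icc 0 t, a ≤ R u := fun u hu => hR0 ▸ hRmono 0 h0 u hu hu.1
  have hRpos : ∀ u ∈ Icc 0 t, 0 < R u := fun u hu => ha.trans_le (hRa u hu)
  have hRcont : ContinuousOn R (Icc 0 t) := continuousOn_const.add (hcontP hf)
  have hI : ∀ {x y : ℝ}, 0 < x → 0 < y → IntervalIntegrable (fun r => 1 / μ r) volume x y :=
    fun hx hy => osgood_inv_integrable hμ_cont hμ_pos hx hy
  have hGcont : ContinuousOn (fun s => ∫ r in a..R s, 1 / μ r) (Icc 0 t) := by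
    have h1 := intervalIntegral.continuousOn_primitive_interval' (hI ha (hRpos t htt))
      left_mem_uIcc
    rw [uIcc_of_le (hRa t htt)] at h1
    exact h1.comp hRcont fun s hs => ⟨hRa s hs, hRmono s hs t htt hs.2⟩
  have hμR : ContinuousOn (fun s => μ (R s)) (Icc 0 t) :=
    hμ_cont.comp hRcont fun s hs => (hRpos s hs).le
  -- The local estimate on `[u, v]`, with the distortion factor `μ(R v) / μ(R u)`.
  have hloc : ∀ u ∈ Icc 0 t, ∀ v ∈ Icc 0 t, u ≤ v →
      (∫ r in R u..R v, 1 / μ r) * μ (R u) ≤ μ (R v) * ∫ x in u..v, γ x := by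
    intro u hu v hv huv
    have hmem : ∀ x ∈ Icc u v, x ∈ Icc 0 t := fun x hx => ⟨hu.1.trans hx.1, hx.2.trans hv.2⟩
    have h1 : ∫ r in R u..R v, 1 / μ r ≤ ∫ r in R u..R v, 1 / μ (R u) := by
      refine intervalIntegral.integral_mono_on (hRmono u hu v hv huv)
        (hI (hRpos u hu) (hRpos v hv)) intervalIntegrable_const fun r hr => ?_
      exact one_div_le_one_div_of_le (hμ_pos _ (hRpos u hu))
        (hμ_mono (hRpos u hu).le ((hRpos u hu).le.trans hr.1) hr.1)
    rw [intervalIntegral.integral_const, smul_eq_mul, mul_one_div,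
      le_div_iff₀ (hμ_pos _ (hRpos u hu)), hRsub u hu v hv] at h1
    refine h1.trans ?_
    rw [← intervalIntegral.integral_const_mul]
    refine intervalIntegral.integral_mono_on huv (hint hf u hu v hv)
      ((hint hγ u hu v hv).const_mul _) fun x hx => ?_
    have hx' := hmem x hx
    calc f x ≤ γ x * μ (R x) := hfγ x hx'
      _ ≤ γ x * μ (R v) := mul_le_mul_of_nonneg_left
          (hμ_mono (hRpos x hx').le (hRpos v hv).le (hRmono x hx' v hv hx.2)) (hγ0 x hx')
      _ = μ (R v) * γ x := mul_comm _ _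
  have key : ∀ ε : ℝ, 0 < ε →
      ∫ r in a..R t, 1 / μ r ≤ (1 + ε) * ∫ s in (0:ℝ)..t, γ s := by
    intro ε hε
    let S : Set ℝ := {s | ∫ r in a..R s, 1 / μ r ≤ (1 + ε) * ∫ x in (0:ℝ)..s, γ x}
    have hclosed : IsClosed (S ∩ Icc 0 t) := by
      have := isClosed_Icc.isClosed_le hGcont ((hcontP hγ).const_mul (1 + ε))
      convert this using 1
      ext s
      simp only [S, mem_inter_iff, mem_ofPred_eq]
      tauto
    have hsub : Icc 0 t ⊆ S := by
      refine hclosed.Icc_subset_of_forall_mem_nhdsWithin ?_ ?_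
      · simp [S, hR0]
      · rintro u ⟨huS, hu⟩
        have hu' : u ∈ Icc 0 t := ⟨hu.1, hu.2.le⟩
        have hμu := hμ_pos _ (hRpos u hu')
        have hlt : μ (R u) < (1 + ε) * μ (R u) := by nlinarith
        have hev : ∀ᶠ v in nhdsWithin u (Icc 0 t), μ (R v) < (1 + ε) * μ (R u) :=
          (hμR u hu').eventually (gt_mem_nhds hlt)
        have hle : nhdsWithin u (Ioi u) ≤ nhdsWithin u (Icc 0 t) := by
          rw [← nhdsWithin_Ioo_eq_nhdsGT hu.2]
          exact nhdsWithin_mono _ fun x hx => ⟨hu.1.trans hx.1.le, hx.2.le⟩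
        filter_upwards [hle hev, hle self_mem_nhdsWithin, self_mem_nhdsWithin] with v hv1 hv huv
        have huv' : u ≤ v := le_of_lt huv
        have h1 := hloc u hu' v hv huv'
        have hγuv : 0 ≤ ∫ x in u..v, γ x := intervalIntegral.integral_nonneg huv'
          fun x hx => hγ0 x ⟨hu.1.trans hx.1, hx.2.trans hv.2⟩
        have h2 : ∫ r in R u..R v, 1 / μ r ≤ (1 + ε) * ∫ x in u..v, γ x := by
          refine le_of_mul_le_mul_right (h1.trans ?_) hμu
          calc μ (R v) * ∫ x in u..v, γ x ≤ ((1 + ε) * μ (R u)) * ∫ x in u..v, γ x :=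
                mul_le_mul_of_nonneg_right hv1.le hγuv
            _ = _ := by ring
        have e1 := intervalIntegral.integral_add_adjacent_intervals
          (hI ha (hRpos u hu')) (hI (hRpos u hu') (hRpos v hv))
        have e2 := intervalIntegral.integral_add_adjacent_intervals
          (hint hγ 0 h0 u hu') (hint hγ u hu' v hv)
        simp only [S, mem_ofPred_eq] at huS ⊢
        rw [← e1, ← e2, mul_add]
        exact add_le_add huS h2
    exact hsub htt
  have hΓ : 0 ≤ ∫ s in (0:ℝ)..t, γ s := intervalIntegral.integral_nonneg ht hγ0
  refine le_of_forall_pos_le_add fun δ hδ => ?_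
  have h1 := key (δ / ((∫ s in (0:ℝ)..t, γ s) + 1)) (by positivity)
  have h2 : δ / ((∫ s in (0:ℝ)..t, γ s) + 1) * ∫ s in (0:ℝ)..t, γ s ≤ δ := by
    rw [div_mul_eq_mul_div, div_le_iff₀ (by positivity)]
    nlinarith
  linarith

/-- **Osgood's lemma.** If `ρ(t) ≤ a + ∫₀ᵗ γ(s) μ(ρ(s)) ds` on `[0,T]` with `μ`
continuous, nondecreasing, positive on `(0,∞)` and `∫₀¹ dr/μ(r) = +∞`, then either
`a = 0` and `ρ ≡ 0`, or `a > 0` and `−M(ρ(t)) + M(a) ≤ ∫₀ᵗ γ(s) ds` where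
`M(x) = ∫ₓ¹ dr/μ(r)`. -/
theorem osgood_lemma (T : ℝ) (hT : 0 < T)
    (ρ γ μ : ℝ → ℝ) (a : ℝ)
    (hρ_meas : Measurable ρ)
    (hρ_nonneg : ∀ t ∈ Icc (0:ℝ) T, 0 ≤ ρ t)
    (hγ_nonneg : ∀ t ∈ Icc (0:ℝ) T, 0 ≤ γ t)
    (hγ_loc : LocallyIntegrableOn γ (Icc (0:ℝ) T))
    (hμ_cont : ContinuousOn μ (Ici (0:ℝ)))
    (hμ_mono : MonotoneOn μ (Ici (0:ℝ)))
    (hμ_nonneg : ∀ r : ℝ, 0 ≤ r → 0 ≤ μ r)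
    (hμ_pos : ∀ r : ℝ, 0 < r → 0 < μ r)
    (hμ_int : ∫⁻ r in Ioc (0:ℝ) 1, ENNReal.ofReal (1 / μ r) = ⊤)
    (ha : 0 ≤ a)
    (hineq : ∀ t ∈ Icc (0:ℝ) T, ρ t ≤ a + ∫ s in (0:ℝ)..t, γ s * μ (ρ s)) :
    (a = 0 → ∀ t ∈ Icc (0:ℝ) T, ρ t = 0) ∧
    (0 < a → ∀ t ∈ Icc (0:ℝ) T, 0 < ρ t →
      -(∫ r in (ρ t)..1, 1 / μ r) + (∫ r in a..1, 1 / μ r) ≤ ∫ s in (0:ℝ)..t, γ s) := by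
  -- The second claim is needed for every positive starting value, also in the proof of the first.
  have main : ∀ b : ℝ, 0 < b → a ≤ b → ∀ t ∈ Icc (0:ℝ) T, 0 < ρ t →
      -(∫ r in (ρ t)..1, 1 / μ r) + (∫ r in b..1, 1 / μ r) ≤ ∫ s in (0:ℝ)..t, γ s := by
    intro b hb hab t ht hρt
    have hI : ∀ {x y : ℝ}, 0 < x → 0 < y → IntervalIntegrable (fun r => 1 / μ r) volume x y :=
      fun hx hy => osgood_inv_integrable hμ_cont hμ_pos hx hy
    have hsplit : -(∫ r in (ρ t)..1, 1 / μ r) + (∫ r in b..1, 1 / μ r)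
        = ∫ r in b..ρ t, 1 / μ r := by
      rw [← intervalIntegral.integral_add_adjacent_intervals (hI hb hρt) (hI hρt one_pos)]
      ring
    rw [hsplit]
    have hsubT : Icc 0 t ⊆ Icc 0 T := Icc_subset_Icc_right ht.2
    have hγ : IntervalIntegrable γ volume 0 t := by
      rw [intervalIntegrable_iff_integrableOn_Icc_of_le ht.1]
      exact (hγ_loc.integrableOn_isCompact isCompact_Icc).mono_set hsubT
    have hγ0 : ∀ s ∈ Icc 0 t, 0 ≤ γ s := fun s hs => hγ_nonneg s (hsubT hs)
    -- Extending the upper limit of `∫ dr/μ(r)` past `ρ t` increases it.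
    have hup : ∀ y, ρ t ≤ y → ∫ r in b..ρ t, 1 / μ r ≤ ∫ r in b..y, 1 / μ r := by
      intro y hy
      rw [← intervalIntegral.integral_add_adjacent_intervals (hI hb hρt)
        (hI hρt (hρt.trans_le hy))]
      have : 0 ≤ ∫ r in ρ t..y, 1 / μ r := intervalIntegral.integral_nonneg hy
        fun r hr => one_div_nonneg.2 (hμ_pos r (hρt.trans_le hr.1)).le
      linarith
    by_cases hf : IntervalIntegrable (fun s => γ s * μ (ρ s)) volume 0 t
    · have hle : ∀ s ∈ Icc 0 T, ρ s ≤ b + ∫ x in (0:ℝ)..s, γ x * μ (ρ x) :=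
        fun s hs => (hineq s hs).trans (by linarith)
      refine (hup _ (hle t ht)).trans ?_
      refine osgood_majorant ht.1 hb hμ_cont hμ_mono hμ_pos hγ hf hγ0 ?_ ?_
      · exact fun s hs => mul_nonneg (hγ0 s hs) (hμ_nonneg _ (hρ_nonneg s (hsubT hs)))
      · intro s hs
        have h0 := hρ_nonneg s (hsubT hs)
        have h1 := hle s (hsubT hs)
        exact mul_le_mul_of_nonneg_left (hμ_mono h0 (h0.trans h1) h1) (hγ0 s hs)
    · have h1 := hineq t ht
      -- The integral of a non-integrable function is `0`.
      rw [intervalIntegral.integral_undef hf, add_zero] at h1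
      refine (hup b (h1.trans hab)).trans ?_
      rw [intervalIntegral.integral_same]
      exact intervalIntegral.integral_nonneg ht.1 hγ0
  refine ⟨fun ha0 t ht => ?_, fun ha' => main a ha' le_rfl⟩
  by_contra hne
  have hρt : 0 < ρ t := lt_of_le_of_ne (hρ_nonneg t ht) (Ne.symm hne)
  have hlim : Filter.Tendsto (fun n : ℕ => 1 / ((n:ℝ) + 1)) Filter.atTop (nhds 0) :=
    tendsto_one_div_add_atTop_nhds_zero_nat
  have hpos : ∀ n : ℕ, 0 < 1 / ((n:ℝ) + 1) := fun n => Nat.one_div_pos_of_nat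
  have hle1 : ∀ n : ℕ, 1 / ((n:ℝ) + 1) ≤ 1 := fun n => by
    rw [div_le_one (by positivity)]
    linarith [n.cast_nonneg (α := ℝ)]
  have hint : IntegrableOn (fun r => 1 / μ r) (Ioc 0 1) := by
    refine integrableOn_Ioc_of_intervalIntegral_norm_bounded_left
      (I := (∫ s in (0:ℝ)..t, γ s) + ∫ r in (ρ t)..1, 1 / μ r) (fun n => ?_) hlim
      (Filter.Eventually.of_forall fun n => ?_)
    · exact (osgood_inv_integrable hμ_cont hμ_pos (hpos n) one_pos).1
    · have h1 := main _ (hpos n) (ha0 ▸ (hpos n).le) t ht hρt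
      have h2 : ∫ r in Ioc (1 / ((n:ℝ) + 1)) 1, ‖1 / μ r‖ = ∫ r in (1 / ((n:ℝ) + 1))..1, 1 / μ r := by
        rw [intervalIntegral.integral_of_le (hle1 n)]
        refine setIntegral_congr_fun measurableSet_Ioc fun r hr => ?_
        exact Real.norm_of_nonneg (one_div_nonneg.2 (hμ_pos r ((hpos n).trans hr.1)).le)
      rw [h2]
      linarith
  exact hint.lintegral_lt_top.ne hμ_int
end

section
/- Sobolev embedding on ℝ^d with explicit growth of the constant: Let d ≥ 1. There exists a constant C_d, depending only on d, such that for every s ∈ (0, d/2), setting p = 2d/(d − 2s), every Schwartz function u : ℝ^d → ℂ satisfies ‖u‖_{L^p(ℝ^d)} ≤ C_d √p ( ∫_{ℝ^d} |ξ|^{2s} |û(ξ)|² dξ )^{1/2}, where û denotes the Fourier transform of u. -/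
open MeasureTheory SchwartzMap
open scoped FourierTransform

/-!
The proof splits frequencies at a threshold depending on the level of `u`. Write `N` for the
homogeneous Sobolev norm, `n` for the dimension and `e = (n - 2s) / 2 = n / p`.

By Cauchy–Schwarz, the part `u₁` of `u` with frequencies below `2A` satisfies
`‖u₁‖_∞ ≲ √p A ^ e N` (`low_frequency_bound`). Given a level `t > 0`, choose `A` so that the right
side is `t / 2`, i.e. `t = D A ^ e` with `D ≲ √p N`. Where `‖u‖ > t`, the remainder `u₂ = u - u₁`
satisfies `‖u‖ ≤ 2 ‖u₂‖`, so Plancherel gives (`lintegral_level_le`)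

  `∫_{‖u‖ > t} ‖u‖² ≤ 4 ∫_{D ‖ξ‖ ^ e ≥ t} ‖𝓕 u‖²`.

Integrating this against `(p - 2) t ^ (p - 3) dt` (`layercake_compare`) yields, since
`e (p - 2) = 2s`,

  `∫ ‖u‖ ^ p ≤ 4 D ^ (p - 2) ∫ ‖ξ‖ ^ (2s) ‖𝓕 u‖² = 4 D ^ (p - 2) N²`,

and the `p`-th root is at most a constant times `√p N`. Comparing the masses of `‖u‖²` on level sets,
instead of the measures of the level sets, is what keeps the constant bounded as `p → 2`: the latter
would leave a factor `p / (p - 2)`.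
-/

section Helpers

open Set Metric
open scoped ContDiff

variable {V : Type*} [NormedAddCommGroup V] [InnerProductSpace ℝ V] [FiniteDimensional ℝ V]
  [MeasurableSpace V] [BorelSpace V]

/-- Comparison of truncated `L²` masses at every level `t` gives a comparison of integrals weighted
by `q`-th powers: both sides are layer-cake integrals for the measures `f² dμ` and `g² dν`.
Because the factor `q` appears on both sides, it cancels and `K` does not depend on `q`. -/
theorem layercake_compare {X Y : Type*} [MeasurableSpace X] [MeasurableSpace Y]
    {μ : Measure X} {ν : Measure Y} {f : X → ℝ} {g h : Y → ℝ}
    (hf : Measurable f) (hg : Measurable g) (hh : Measurable h)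
    (hf0 : ∀ x, 0 ≤ f x) (hh0 : ∀ y, 0 ≤ h y) {q K : ℝ} (hq : 0 < q)
    (H : ∀ t : ℝ, 0 < t →
      ∫⁻ x in {x | t < f x}, ENNReal.ofReal (f x ^ 2) ∂μ
        ≤ ENNReal.ofReal K * ∫⁻ y in {y | t ≤ h y}, ENNReal.ofReal (g y ^ 2) ∂ν) :
    ∫⁻ x, ENNReal.ofReal (f x ^ 2 * f x ^ q) ∂μ
      ≤ ENNReal.ofReal K * ∫⁻ y, ENNReal.ofReal (g y ^ 2 * h y ^ q) ∂ν := by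
  have mf : Measurable fun x => ENNReal.ofReal (f x ^ 2) := by fun_prop
  have mg : Measurable fun x => ENNReal.ofReal (g x ^ 2) := by fun_prop
  have e1 := lintegral_rpow_eq_lintegral_meas_lt_mul
    (μ := μ.withDensity fun x => ENNReal.ofReal (f x ^ 2))
    (Filter.Eventually.of_forall hf0) hf.aemeasurable hq
  have e2 := lintegral_rpow_eq_lintegral_meas_le_mul
    (μ := ν.withDensity fun y => ENNReal.ofReal (g y ^ 2))
    (Filter.Eventually.of_forall hh0) hh.aemeasurable hq
  rw [lintegral_withDensity_eq_lintegral_mul _ mf (by fun_prop)] at e1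
  rw [lintegral_withDensity_eq_lintegral_mul _ mg (by fun_prop)] at e2
  simp only [Pi.mul_apply, ← ENNReal.ofReal_mul (sq_nonneg _)] at e1 e2
  rw [e1, e2, mul_left_comm]
  gcongr
  rw [← lintegral_const_mul' _ _ ENNReal.ofReal_ne_top]
  refine setLIntegral_mono' measurableSet_Ioi fun t ht => ?_
  rw [withDensity_apply _ (measurableSet_lt measurable_const hf),
    withDensity_apply _ (measurableSet_le measurable_const hh), ← mul_assoc]
  gcongr
  exact H t ht

theorem radial_integral [Nontrivial V] {a R : ℝ} (ha : a < Module.finrank ℝ V) (hR : 0 < R) :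
    IntegrableOn (fun ξ : V => ‖ξ‖ ^ (-a)) (ball 0 R) ∧
    ∫ ξ in ball (0 : V) R, ‖ξ‖ ^ (-a) =
      (volume : Measure V).real (ball 0 1) * (Module.finrank ℝ V / (Module.finrank ℝ V - a)) *
        R ^ (Module.finrank ℝ V - a) := by
  have hd : 0 < Module.finrank ℝ V := Module.finrank_pos
  have hc : ∀ y ∈ Ioo 0 R, y ^ (Module.finrank ℝ V - 1) • y ^ (-a)
      = y ^ ((Module.finrank ℝ V : ℝ) - a - 1) := by
    intro y hy
    rw [smul_eq_mul, ← Real.rpow_natCast, ← Real.rpow_add hy.1, Nat.cast_sub hd]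
    congr 1
    push_cast
    ring
  constructor
  · rw [integrableOn_fun_norm_addHaar volume (f := fun y => y ^ (-a)),
      integrableOn_congr_fun hc measurableSet_Ioo,
      ← intervalIntegrable_iff_integrableOn_Ioo_of_le hR.le]
    exact intervalIntegral.intervalIntegrable_rpow' (by linarith)
  · have h1 : ∫ ξ in ball (0 : V) R, ‖ξ‖ ^ (-a)
        = ∫ ξ : V, (Iio R).indicator (fun y => y ^ (-a)) ‖ξ‖ := by
      rw [← integral_indicator measurableSet_ball]
      congr 1 with x
      simp [indicator]
    have h2 : ∫ y in Ioi (0 : ℝ), y ^ (Module.finrank ℝ V - 1) •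
        (Iio R).indicator (fun y => y ^ (-a)) y
        = ∫ y in Ioo 0 R, y ^ ((Module.finrank ℝ V : ℝ) - a - 1) := by
      rw [← setIntegral_congr_fun measurableSet_Ioo hc, ← Ioi_inter_Iio,
        ← setIntegral_indicator measurableSet_Iio]
      congr 1 with y
      by_cases hy : y < R <;> simp [hy]
    rw [h1, integral_fun_norm_addHaar, h2, ← integral_Ioc_eq_integral_Ioo,
      ← intervalIntegral.integral_of_le hR.le, integral_rpow (Or.inl (by linarith)),
      sub_add_cancel, Real.zero_rpow (by linarith), nsmul_eq_mul, smul_eq_mul]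
    ring

theorem integrable_rpow_mul_sq (f : 𝓢(V, ℂ)) {a : ℝ} (ha : 0 ≤ a) :
    Integrable fun ξ => ‖ξ‖ ^ a * ‖f ξ‖ ^ 2 := by
  obtain ⟨C, hC⟩ := f.decay 0 0
  obtain ⟨n, hn⟩ := exists_nat_ge a
  have hC' : ∀ x, ‖f x‖ ≤ C := fun x => by simpa using hC.2 x
  refine (((f.integrable_pow_mul volume 0).add (f.integrable_pow_mul volume n)).mul_const C).mono'
    (Continuous.aestronglyMeasurable ?_) (Filter.Eventually.of_forall fun ξ => ?_)
  · exact (continuous_norm.rpow_const fun _ => Or.inr ha).mul (f.continuous.norm.pow 2)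
  · have h1 : ‖ξ‖ ^ a ≤ 1 + ‖ξ‖ ^ n := by
      rcases le_total ‖ξ‖ 1 with h | h
      · have := Real.rpow_le_one (norm_nonneg ξ) h ha
        have : 0 ≤ ‖ξ‖ ^ n := by positivity
        linarith
      · have := Real.rpow_le_rpow_of_exponent_le h hn
        rw [Real.rpow_natCast] at this
        linarith
    rw [Real.norm_of_nonneg (by positivity)]
    have : ‖f ξ‖ ^ 2 ≤ ‖f ξ‖ * C := by
      rw [sq]
      gcongr
      exact hC' ξ
    calc ‖ξ‖ ^ a * ‖f ξ‖ ^ 2 ≤ (1 + ‖ξ‖ ^ n) * (‖f ξ‖ * C) := by gcongr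
      _ = _ := by simp only [Pi.add_apply]; ring

/-- Cauchy–Schwarz with weight `‖ξ‖ ^ (-s) * ‖ξ‖ ^ s`: the `L¹` norm of `f` on a ball is controlled
by its weighted `L²` norm. For `p = 2n / (n - 2s)`, `n` the dimension, the factor
`n / (n - 2s) = p / 2` under the root is the source of the growth `√p`. -/
theorem low_frequency_bound [Nontrivial V] (f : 𝓢(V, ℂ)) {s R : ℝ} (hs : 0 ≤ s)
    (hsd : 2 * s < Module.finrank ℝ V) (hR : 0 < R) :
    ∫ ξ in ball (0 : V) R, ‖f ξ‖ ≤
      √((volume : Measure V).real (ball 0 1) *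
          (Module.finrank ℝ V / (Module.finrank ℝ V - 2 * s)) *
        R ^ (Module.finrank ℝ V - 2 * s)) * √(∫ ξ, ‖ξ‖ ^ (2 * s) * ‖f ξ‖ ^ 2) := by
  obtain ⟨hi, he⟩ := radial_integral (V := V) hsd hR
  have hN := integrable_rpow_mul_sq f (a := 2 * s) (by linarith)
  have e1 : ∀ ξ : V, (‖ξ‖ ^ (-s)) ^ 2 = ‖ξ‖ ^ (-(2 * s)) := fun ξ => by
    rw [← Real.rpow_natCast, ← Real.rpow_mul (norm_nonneg _)]
    congr 1
    push_cast
    ring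
  have e2 : ∀ ξ : V, (‖ξ‖ ^ s * ‖f ξ‖) ^ 2 = ‖ξ‖ ^ (2 * s) * ‖f ξ‖ ^ 2 := fun ξ => by
    rw [mul_pow, ← Real.rpow_natCast, ← Real.rpow_mul (norm_nonneg _)]
    congr 2
    push_cast
    ring
  have m1 : MemLp (fun ξ : V => ‖ξ‖ ^ (-s)) 2 (volume.restrict (ball 0 R)) := by
    rw [memLp_two_iff_integrable_sq (measurable_norm.pow_const _).aestronglyMeasurable]
    simp only [e1]
    exact hi
  have m2 : MemLp (fun ξ : V => ‖ξ‖ ^ s * ‖f ξ‖) 2 (volume.restrict (ball 0 R)) := by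
    refine (memLp_two_iff_integrable_sq ((measurable_norm.pow_const _).mul
      f.continuous.norm.measurable).aestronglyMeasurable).2 ?_
    simp only [Pi.mul_apply, e2]
    exact hN.integrableOn
  have cs := integral_mul_le_Lp_mul_Lq_of_nonneg (μ := volume.restrict (ball (0 : V) R))
    (f := fun ξ => ‖ξ‖ ^ (-s)) (g := fun ξ => ‖ξ‖ ^ s * ‖f ξ‖) Real.HolderConjugate.two_two
    (Filter.Eventually.of_forall fun ξ => by positivity)
    (Filter.Eventually.of_forall fun ξ => by positivity) (by simpa using m1) (by simpa using m2)
  simp only [Real.rpow_two, e1, e2, he, ← Real.sqrt_eq_rpow] at cs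
  calc ∫ ξ in ball (0 : V) R, ‖f ξ‖
      = ∫ ξ in ball (0 : V) R, ‖ξ‖ ^ (-s) * (‖ξ‖ ^ s * ‖f ξ‖) := by
        refine integral_congr_ae (ae_restrict_of_ae ?_)
        -- At `ξ = 0` the weights `0 ^ (-s)` and `0 ^ s` take junk values.
        filter_upwards [Measure.ae_ne volume (0 : V)] with ξ hξ
        rw [← mul_assoc, ← Real.rpow_add (norm_pos_iff.2 hξ)]
        simp
    _ ≤ _ := cs
    _ ≤ _ := by
        refine mul_le_mul_of_nonneg_left (Real.sqrt_le_sqrt ?_) (Real.sqrt_nonneg _)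
        exact setIntegral_le_integral hN (Filter.Eventually.of_forall fun ξ => by positivity)

/-- If the frequencies of `u` below `2A` contribute at most `t / 2` in sup norm, then on the level set
`{t < ‖u‖}` the function `u` is at most twice its high-frequency part, whose `L²` mass is given by
Plancherel. The frequency cutoff is smooth, so both parts of `u` remain Schwartz functions. -/
theorem lintegral_level_le (u : 𝓢(V, ℂ)) {A t : ℝ} (hA : 0 < A)
    (ht : ∫ ξ in ball (0 : V) (2 * A), ‖𝓕 u ξ‖ ≤ t / 2) :
    ∫⁻ x in {x | t < ‖u x‖}, ENNReal.ofReal (‖u x‖ ^ 2)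
      ≤ ENNReal.ofReal 4 * ∫⁻ ξ in {ξ | A ≤ ‖ξ‖}, ENNReal.ofReal (‖𝓕 u ξ‖ ^ 2) := by
  let χ : ContDiffBump (0 : V) := ⟨A, 2 * A, hA, by linarith⟩
  -- `w₁` and `w₂` are the low- and high-frequency parts of `𝓕 u`.
  have hcs : HasCompactSupport fun ξ => (χ ξ : ℂ) * 𝓕 u ξ :=
    (χ.hasCompactSupport.comp_left (g := fun r : ℝ => (r : ℂ)) (by simp)).mul_right
  have hcd : ContDiff ℝ ∞ fun ξ => (χ ξ : ℂ) * 𝓕 u ξ :=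
    (Complex.ofRealCLM.contDiff.comp χ.contDiff).mul ((𝓕 u).smooth ⊤)
  let w₁ : 𝓢(V, ℂ) := hcs.toSchwartzMap hcd
  let w₂ : 𝓢(V, ℂ) := 𝓕 u - w₁
  have hw₁ : ∀ ξ, w₁ ξ = (χ ξ : ℂ) * 𝓕 u ξ := fun ξ => rfl
  have hw₂ : ∀ ξ, w₂ ξ = (1 - (χ ξ : ℂ)) * 𝓕 u ξ := fun ξ => by
    change 𝓕 u ξ - w₁ ξ = _
    rw [hw₁]; ring
  have hsum : ∀ x, u x = 𝓕⁻ w₁ x + 𝓕⁻ w₂ x := fun x => by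
    have : u = 𝓕⁻ w₁ + 𝓕⁻ w₂ := by
      rw [← FourierTransform.fourierInv_add]
      simp [w₂]
    exact congrArg (fun f : 𝓢(V, ℂ) => f x) this
  have hb₁ : ∀ x, ‖𝓕⁻ w₁ x‖ ≤ t / 2 := fun x => by
    refine le_trans ?_ ht
    rw [fourierInv_coe, Real.fourierInv_eq]
    refine (norm_integral_le_integral_norm _).trans ?_
    rw [← integral_indicator measurableSet_ball]
    refine integral_mono_of_nonneg (Filter.Eventually.of_forall fun ξ => norm_nonneg _)
      ((𝓕 u).integrable.norm.indicator measurableSet_ball) (Filter.Eventually.of_forall fun ξ => ?_)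
    simp only [Circle.norm_smul, hw₁, norm_mul, Complex.norm_real]
    by_cases hξ : ξ ∈ ball (0 : V) (2 * A)
    · rw [indicator_of_mem hξ, Real.norm_of_nonneg χ.nonneg]
      exact mul_le_of_le_one_left (norm_nonneg _) χ.le_one
    · rw [indicator_of_notMem hξ, χ.zero_of_le_dist (by simpa using hξ)]
      simp
  have hb₂ : ∀ x, t < ‖u x‖ → ‖u x‖ ^ 2 ≤ 4 * ‖𝓕⁻ w₂ x‖ ^ 2 := fun x hx => by
    have h1 := norm_add_le (𝓕⁻ w₁ x) (𝓕⁻ w₂ x)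
    rw [← hsum] at h1
    have h2 := hb₁ x
    have h3 : ‖u x‖ ≤ 2 * ‖𝓕⁻ w₂ x‖ := by linarith
    calc ‖u x‖ ^ 2 ≤ (2 * ‖𝓕⁻ w₂ x‖) ^ 2 := by gcongr
      _ = _ := by ring
  have int2 : ∀ f : 𝓢(V, ℂ), Integrable fun x => ‖f x‖ ^ 2 := fun f => by
    simpa using integrable_rpow_mul_sq f le_rfl
  have pl : ∫⁻ x, ENNReal.ofReal (‖𝓕⁻ w₂ x‖ ^ 2) = ∫⁻ ξ, ENNReal.ofReal (‖w₂ ξ‖ ^ 2) := by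
    have := integral_norm_sq_fourier (𝓕⁻ w₂)
    rw [FourierTransform.fourier_fourierInv_eq] at this
    rw [← ofReal_integral_eq_lintegral_ofReal (int2 _)
        (Filter.Eventually.of_forall fun _ => sq_nonneg _),
      ← ofReal_integral_eq_lintegral_ofReal (int2 _)
        (Filter.Eventually.of_forall fun _ => sq_nonneg _), this]
  have mset : MeasurableSet {x | t < ‖u x‖} :=
    measurableSet_lt measurable_const u.continuous.norm.measurable
  have mset' : MeasurableSet {ξ : V | A ≤ ‖ξ‖} := measurableSet_le measurable_const measurable_norm
  calc ∫⁻ x in {x | t < ‖u x‖}, ENNReal.ofReal (‖u x‖ ^ 2)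
      ≤ ∫⁻ x in {x | t < ‖u x‖}, ENNReal.ofReal (4 * ‖𝓕⁻ w₂ x‖ ^ 2) :=
        setLIntegral_mono' mset fun x hx => ENNReal.ofReal_le_ofReal (hb₂ x hx)
    _ ≤ ∫⁻ x, ENNReal.ofReal (4 * ‖𝓕⁻ w₂ x‖ ^ 2) := setLIntegral_le_lintegral _ _
    _ = ENNReal.ofReal 4 * ∫⁻ ξ, ENNReal.ofReal (‖w₂ ξ‖ ^ 2) := by
        rw [← pl, ← lintegral_const_mul' _ _ ENNReal.ofReal_ne_top]
        simp only [ENNReal.ofReal_mul (zero_le_four : (0 : ℝ) ≤ 4)]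
    _ ≤ _ := by
        refine mul_le_mul_right ?_ _
        rw [← lintegral_indicator mset']
        refine lintegral_mono fun ξ => ?_
        rw [hw₂, norm_mul, mul_pow, ← Complex.ofReal_one, ← Complex.ofReal_sub, Complex.norm_real]
        by_cases hξ : A ≤ ‖ξ‖
        · rw [indicator_of_mem (by exact hξ)]
          refine ENNReal.ofReal_le_ofReal (mul_le_of_le_one_left (sq_nonneg _) ?_)
          have h0 := χ.nonneg (x := ξ)
          have h1 := χ.le_one (x := ξ)
          rw [Real.norm_of_nonneg (by linarith)]
          exact pow_le_one₀ (by linarith) (by linarith)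
        · have : χ ξ = 1 := χ.one_of_mem_closedBall (by simpa using (not_le.1 hξ).le)
          simp [this]

/-- The Sobolev inequality in integrated form. The bound `M` on the Sobolev norm is kept separate from
the norm itself so that `M > 0` is available even if the norm vanishes. -/
theorem integral_rpow_le [Nontrivial V] (u : 𝓢(V, ℂ)) {s p c M : ℝ} (hs : 0 < s)
    (hsd : 2 * s < Module.finrank ℝ V)
    (hp : p = 2 * Module.finrank ℝ V / (Module.finrank ℝ V - 2 * s))
    (hc1 : 1 ≤ c)
    (hc : 2 * √((volume : Measure V).real (ball 0 1)) * 2 ^ ((Module.finrank ℝ V : ℝ) / 2) ≤ c)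
    (hM : 0 < M) (hNM : √(∫ ξ, ‖ξ‖ ^ (2 * s) * ‖𝓕 u ξ‖ ^ 2) ≤ M) :
    ∫ x, ‖u x‖ ^ p ≤ 4 * (c * √p * M) ^ (p - 2) * ∫ ξ, ‖ξ‖ ^ (2 * s) * ‖𝓕 u ξ‖ ^ 2 := by
  set n : ℝ := ((Module.finrank ℝ V : ℕ) : ℝ) with hn
  set κ := (volume : Measure V).real (ball 0 1)
  set N₂ := ∫ ξ, ‖ξ‖ ^ (2 * s) * ‖𝓕 u ξ‖ ^ 2 with hN₂
  have hns : 0 < n - 2 * s := by linarith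
  have hp2 : p - 2 = 4 * s / (n - 2 * s) := by rw [hp]; field_simp; ring
  have hq : 0 < p - 2 := by rw [hp2]; positivity
  have hp0 : 0 < p := by linarith
  set D := c * √p * M with hD
  have hD0 : 0 < D := by positivity
  set e := (n - 2 * s) / 2 with he
  have he0 : 0 < e := by positivity
  have heq : e * (p - 2) = 2 * s := by rw [hp2, he]; field_simp; ring
  have key := layercake_compare (μ := (volume : Measure V)) (ν := (volume : Measure V))
    (f := fun x => ‖u x‖) (g := fun ξ => ‖𝓕 u ξ‖) (h := fun ξ => D * ‖ξ‖ ^ e) (K := 4)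
    u.continuous.norm.measurable (𝓕 u).continuous.norm.measurable (by fun_prop)
    (fun x => norm_nonneg _) (fun ξ => by positivity) hq (fun t ht => by
      -- The cutoff frequency `A` at level `t` solves `D * A ^ e = t`.
      set A := (t / D) ^ (1 / e) with hAdef
      have hA : 0 < A := by positivity
      have hAe : D * A ^ e = t := by
        rw [hAdef, ← Real.rpow_mul (by positivity), one_div_mul_cancel he0.ne', Real.rpow_one]
        field_simp
      have hset : {ξ : V | t ≤ D * ‖ξ‖ ^ e} = {ξ | A ≤ ‖ξ‖} := by
        ext ξ
        simp only [mem_ofPred_eq]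
        rw [← hAe, mul_le_mul_iff_right₀ hD0, Real.rpow_le_rpow_iff hA.le (norm_nonneg _) he0]
      rw [hset]
      refine lintegral_level_le u hA ?_
      refine (low_frequency_bound (𝓕 u) hs.le hsd (by positivity)).trans ?_
      rw [← hn, show n / (n - 2 * s) = p / 2 by rw [hp]; ring,
        show n - 2 * s = e * 2 by rw [he]; ring, Real.rpow_mul (by positivity), Real.rpow_two,
        Real.sqrt_mul (by positivity), Real.sqrt_mul (by positivity),
        Real.sqrt_sq (by positivity), Real.mul_rpow (by norm_num) hA.le, ← hAe, hD]
      have h1 : √(p / 2) ≤ √p := Real.sqrt_le_sqrt (by linarith)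
      have h2 : (2 : ℝ) ^ e ≤ 2 ^ (n / 2) :=
        Real.rpow_le_rpow_of_exponent_le (by norm_num) (by rw [he]; linarith)
      calc √κ * √(p / 2) * (2 ^ e * A ^ e) * √N₂
          ≤ √κ * √p * (2 ^ (n / 2) * A ^ e) * M := by gcongr
        _ = (2 * √κ * 2 ^ (n / 2)) * √p * M * A ^ e / 2 := by ring
        _ ≤ c * √p * M * A ^ e / 2 := by gcongr)
  have hN := integrable_rpow_mul_sq (𝓕 u) (a := 2 * s) (by linarith)
  have el : ∀ x, ‖u x‖ ^ 2 * ‖u x‖ ^ (p - 2) = ‖u x‖ ^ p := fun x => by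
    rw [← Real.rpow_two, ← Real.rpow_add_of_nonneg (norm_nonneg _) (by norm_num) hq.le]
    congr 1; ring
  have er : ∀ ξ, ‖𝓕 u ξ‖ ^ 2 * (D * ‖ξ‖ ^ e) ^ (p - 2)
      = D ^ (p - 2) * (‖ξ‖ ^ (2 * s) * ‖𝓕 u ξ‖ ^ 2) := fun ξ => by
    rw [Real.mul_rpow hD0.le (by positivity), ← Real.rpow_mul (norm_nonneg _), heq]
    ring
  simp only [el, er] at key
  rw [← ofReal_integral_eq_lintegral_ofReal (hN.const_mul _)
    (Filter.Eventually.of_forall fun ξ => by positivity), integral_const_mul,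
    ← ENNReal.ofReal_mul (by norm_num)] at key
  rw [integral_eq_lintegral_of_nonneg_ae (Filter.Eventually.of_forall fun x => by positivity)
    (u.continuous.norm.rpow_const fun _ => Or.inr hp0.le).aestronglyMeasurable]
  refine (ENNReal.toReal_mono ENNReal.ofReal_ne_top key).trans_eq ?_
  rw [ENNReal.toReal_ofReal (by positivity)]
  ring

end Helpers

/-- **Sobolev embedding on `ℝ^d` with explicit growth of the constant**: there is a
constant `C_d` depending only on `d` such that for `0 < s < d/2` and `p = 2d/(d−2s)`,
`‖u‖_{L^p} ≤ C_d √p ‖u‖_{Ḣ^s}` for every Schwartz function `u`. -/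
theorem sobolev_embedding_sqrt_p (d : ℕ) (hd : 1 ≤ d) :
    ∃ C : ℝ, ∀ s : ℝ, 0 < s → s < (d : ℝ) / 2 →
      ∀ u : SchwartzMap (EuclideanSpace ℝ (Fin d)) ℂ,
        (∫ x : EuclideanSpace ℝ (Fin d),
            ‖u x‖ ^ (2 * (d : ℝ) / ((d : ℝ) - 2 * s))) ^ (((d : ℝ) - 2 * s) / (2 * (d : ℝ)))
          ≤ C * Real.sqrt (2 * (d : ℝ) / ((d : ℝ) - 2 * s)) *
            (∫ ξ : EuclideanSpace ℝ (Fin d),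
              ‖ξ‖ ^ (2 * s) * ‖𝓕 (⇑u) ξ‖ ^ 2) ^ ((1:ℝ)/2) := by
  set c : ℝ := max 1 (2 * √((volume : Measure (EuclideanSpace ℝ (Fin d))).real
    (Metric.ball 0 1)) * 2 ^ ((d : ℝ) / 2)) with hcdef
  have hc1 : 1 ≤ c := le_max_left _ _
  refine ⟨4 * c, fun s hs hsd u => ?_⟩
  have hfin : Module.finrank ℝ (EuclideanSpace ℝ (Fin d)) = d := by simp
  have : Nontrivial (EuclideanSpace ℝ (Fin d)) :=
    Module.nontrivial_of_finrank_pos (R := ℝ) (by omega)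
  have hns : 0 < (d : ℝ) - 2 * s := by linarith
  have hd0 : (0 : ℝ) < d := by exact_mod_cast hd
  rw [← SchwartzMap.fourier_coe, ← Real.sqrt_eq_rpow,
    show ((d : ℝ) - 2 * s) / (2 * d) = (2 * (d : ℝ) / (d - 2 * s))⁻¹ from (inv_div _ _).symm]
  set p := 2 * (d : ℝ) / (d - 2 * s) with hp
  have hp2 : 2 < p := by rw [hp, lt_div_iff₀ hns]; linarith
  set N₂ := ∫ ξ, ‖ξ‖ ^ (2 * s) * ‖𝓕 u ξ‖ ^ 2 with hN₂
  have hN₂0 : 0 ≤ N₂ := integral_nonneg fun ξ => by positivity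
  have hI0 : 0 ≤ ∫ x, ‖u x‖ ^ p := integral_nonneg fun ξ => by positivity
  have main : ∀ M, 0 < M → √N₂ ≤ M →
      ∫ x, ‖u x‖ ^ p ≤ 4 * (c * √p * M) ^ (p - 2) * N₂ := fun M hM hNM =>
    integral_rpow_le u hs (by rw [hfin]; linarith) (by rw [hfin]) hc1
      (by rw [hfin]; exact le_max_right _ _) hM hNM
  rw [Real.rpow_inv_le_iff_of_pos hI0 (by positivity) (by linarith)]
  rcases hN₂0.eq_or_lt with h0 | h0
  · -- If the Sobolev norm vanishes, the estimate with `M = 1` already forces `∫ ‖u‖ ^ p = 0`.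
    refine (main 1 one_pos (by simp [← h0])).trans ?_
    rw [← h0, mul_zero]
    positivity
  · refine (main √N₂ (Real.sqrt_pos.2 h0) le_rfl).trans ?_
    have hp1 : 1 ≤ √p := Real.one_le_sqrt.2 (by linarith)
    have hs0 : 0 < √N₂ := Real.sqrt_pos.2 h0
    have hcp : 1 ≤ c * √p := one_le_mul_of_one_le_of_one_le hc1 hp1
    set T := c * √p * √N₂ with hT
    have hT0 : 0 < T := by positivity
    have hNT : N₂ ≤ T ^ 2 := by
      rw [← Real.sq_sqrt hN₂0]
      gcongr
      exact le_mul_of_one_le_left hs0.le hcp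
    have h4 : (4 : ℝ) ≤ 4 ^ p := by
      simpa using Real.rpow_le_rpow_of_exponent_le (by norm_num : (1 : ℝ) ≤ 4)
        (by linarith : (1 : ℝ) ≤ p)
    calc 4 * T ^ (p - 2) * N₂ ≤ 4 ^ p * T ^ (p - 2) * T ^ 2 := by gcongr
      _ = 4 ^ p * T ^ p := by
        rw [mul_assoc, ← Real.rpow_two, ← Real.rpow_add hT0, sub_add_cancel]
      _ = (4 * c * √p * √N₂) ^ p := by
        rw [← Real.mul_rpow (by norm_num) hT0.le, hT]
        congr 1
        ring
end

section
/- Sobolev embedding on the torus with explicit growth of the constant: Let d ≥ 1. There exists a constant C_d, depending only on d, such that for every s ∈ (0, d/2), setting p = 2d/(d − 2s), every smooth function u : ℝ^d → ℂ that is 2-periodic in each variable satisfies ‖u‖_{L^p([−1,1]^d)} ≤ C_d √p ( ∑_{n ∈ ℤ^d} (1 + |n|²)^s |û_n|² )^{1/2}, where û_n := 2^{−d} ∫_{[−1,1]^d} u(x) e^{−iπ n·x} dx are the Fourier coefficients of u. -/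
/-! The proof compares two distribution functions. Put `e = d - 2s`, so that `p = 2d/e`, let `M` be
the Sobolev norm of `u`, and take `b` of size `C_d √p M`.

For `t > 0` call a frequency `n` low if `b (1+|n|²)^{e/4} ≤ t`. By the Cauchy–Schwarz inequality the
low part of the Fourier series has sup norm at most `(∑_{n low} (1+|n|²)^{-s})^{1/2} M`. The lattice
sum over a ball of radius `A` is `O(A^e / e)` uniformly in `s` (`sum_weight_le`), and since
`1/e = p/(2d)` the choice of `b` makes the low part at most `t/2` (`exists_low`). This is the only
place where the factor `√p` arises.

Hence `|u| ≤ 2 |u_high|` on `{|u| > t}`, and Parseval's identity shows that the measure `|u|² dx`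
gives `{|u| > t}` at most the mass which the weights `4·2^d |û_n|²` give to the high frequencies
`{n : b (1+|n|²)^{e/4} > t}` (`measure_superlevel_le`). Integrating this against `(p-2) t^{p-3} dt`
(the layer-cake formula on both sides) gives, because `(e/4)(p-2) = s`,
`∫ |u|^p ≤ 4·2^d b^{p-2} ∑ (1+|n|²)^s |û_n|² = 4·2^d b^{p-2} M²` (`lintegral_rpow_le`).
Working with `|u|² dx` rather than with Lebesgue measure is what avoids a constant which blows up
as `p → 2`.

Parseval's identity is transferred from Mathlib's `UnitAddTorus`. Finiteness of the Sobolev norm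
(needed because a divergent `∑'` would be `0`) follows from Parseval's identity for the partial
derivatives of `u`, whose Fourier coefficients are computed with the divergence theorem. -/

open MeasureTheory Set

/-- The `n`-th Fourier coefficient of a `2`-periodic function on `ℝ^d`:
`û_n = 2^{−d} ∫_{[−1,1]^d} u(x) e^{−iπ n·x} dx`. -/
noncomputable def fourierCoeffCube {d : ℕ} (u : (Fin d → ℝ) → ℂ) (n : Fin d → ℤ) : ℂ :=
  (1 / 2 ^ d : ℂ) * ∫ x in Icc (-1 : Fin d → ℝ) 1,
    u x * Complex.exp (-(Real.pi : ℂ) * Complex.I * ∑ i, (n i : ℂ) * (x i : ℂ))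

/-! ### Parseval's identity on the cube -/

noncomputable section Parseval

open scoped Pointwise

/-- Mathlib's results on `UnitAddTorus` are stated for the Haar probability measure on each factor. -/
local instance instMeasureSpaceUnitAddCircleHaar : MeasureSpace UnitAddCircle :=
  ⟨AddCircle.haarAddCircle⟩

local instance instIsProbabilityMeasureUnitAddCircleHaar :
    IsProbabilityMeasure (volume : Measure UnitAddCircle) :=
  inferInstanceAs (IsProbabilityMeasure AddCircle.haarAddCircle)

/-- Integrals over the unit cell of the torus, rescaled by `2` to integrals over the cube. -/
lemma integral_cell_comp_two_smul {d : ℕ} {E : Type*} [NormedAddCommGroup E] [NormedSpace ℝ E]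
    (g : (Fin d → ℝ) → E) :
    ∫ x in {x : Fin d → ℝ | ∀ i, x i ∈ Ioc ((fun _ => -1 / 2 : Fin d → ℝ) i)
        ((fun _ => -1 / 2 : Fin d → ℝ) i + 1)}, g ((2 : ℝ) • x)
      = ((2 : ℝ) ^ d)⁻¹ • ∫ x in Icc (-1 : Fin d → ℝ) 1, g x := by
  rw [Measure.setIntegral_comp_smul_of_pos _ _ _ (by norm_num : (0 : ℝ) < 2)]
  have h1 : (2 : ℝ) • {x : Fin d → ℝ | ∀ i, x i ∈ Ioc ((fun _ => -1 / 2 : Fin d → ℝ) i)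
        ((fun _ => -1 / 2 : Fin d → ℝ) i + 1)} =
      Set.pi univ (fun i => Ioc ((-1 : Fin d → ℝ) i) ((1 : Fin d → ℝ) i)) := by
    ext y
    rw [Set.mem_smul_set_iff_inv_smul_mem₀ (by norm_num)]
    simp only [mem_ofPred_eq, mem_pi, mem_univ, true_imp_iff, Pi.smul_apply, smul_eq_mul, mem_Ioc,
      Pi.neg_apply, Pi.one_apply]
    refine forall_congr' fun i => ?_
    constructor <;> rintro ⟨h, h'⟩ <;> constructor <;> linarith
  rw [h1]
  congr 1
  · simp
  · exact setIntegral_congr_set Measure.univ_pi_Ioc_ae_eq_Icc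

/-- **Parseval's identity** on the cube `[-1,1]^d`. -/
lemma hasSum_sq_fourierCoeffCube {d : ℕ} {u : (Fin d → ℝ) → ℂ} (hu : Continuous u) :
    HasSum (fun n => ‖fourierCoeffCube u n‖ ^ 2)
      (((2 : ℝ) ^ d)⁻¹ * ∫ x in Icc (-1 : Fin d → ℝ) 1, ‖u x‖ ^ 2) := by
  set a : Fin d → ℝ := fun _ => -1 / 2 with ha
  set e := UnitAddTorus.measurableEquivPiIoc a with he
  -- the pull-back of `u` to the torus
  set v : UnitAddTorus (Fin d) → ℂ := fun t => u ((2 : ℝ) • (e t).1) with hv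
  have hvx : ∀ x ∈ {x : Fin d → ℝ | ∀ i, x i ∈ Ioc (a i) (a i + 1)},
      v (fun i => (x i : UnitAddCircle)) = u ((2 : ℝ) • x) := by
    intro x hx
    have : e (fun i => (x i : UnitAddCircle)) = ⟨x, hx⟩ := by
      rw [← UnitAddTorus.coe_symm_measurableEquivPiIoc_apply a ⟨x, hx⟩]
      exact e.apply_symm_apply _
    simp only [hv, this]
  have hms : MeasurableSet {x : Fin d → ℝ | ∀ i, x i ∈ Ioc (a i) (a i + 1)} := by
    have : {x : Fin d → ℝ | ∀ i, x i ∈ Ioc (a i) (a i + 1)} =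
      Set.pi univ (fun i => Ioc (a i) (a i + 1)) := by ext; simp
    rw [this]
    exact MeasurableSet.univ_pi fun i => measurableSet_Ioc
  have hvm : Measurable v :=
    hu.measurable.comp ((measurable_subtype_coe.comp e.measurable).const_smul (2 : ℝ))
  obtain ⟨K, hK⟩ := (isCompact_Icc (a := (-1 : Fin d → ℝ)) (b := 1)).exists_bound_of_continuousOn
    hu.continuousOn
  have hvK : ∀ t, ‖v t‖ ≤ K := by
    intro t
    refine hK _ ⟨fun i => ?_, fun i => ?_⟩
    · have := ((e t).2 i).1
      simp only [ha] at this
      simp only [Pi.neg_apply, Pi.one_apply, Pi.smul_apply, smul_eq_mul]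
      linarith
    · have := ((e t).2 i).2
      simp only [ha] at this
      simp only [Pi.one_apply, Pi.smul_apply, smul_eq_mul]
      linarith
  have hLp : MemLp v 2 volume :=
    MemLp.of_bound hvm.aestronglyMeasurable K (Filter.Eventually.of_forall hvK)
  have key := UnitAddTorus.hasSum_sq_mFourierCoeff (hLp.toLp v)
  have h1 : ∀ n, UnitAddTorus.mFourierCoeff (hLp.toLp v) n = fourierCoeffCube u n := by
    intro n
    have : UnitAddTorus.mFourierCoeff (hLp.toLp v) n = UnitAddTorus.mFourierCoeff v n :=
      integral_congr_ae (by
        filter_upwards [hLp.coeFn_toLp] with t ht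
        rw [ht])
    rw [this, UnitAddTorus.mFourierCoeff_eq_integral _ _ a, fourierCoeffCube]
    have h2 := integral_cell_comp_two_smul (d := d) (fun x =>
      u x * Complex.exp (-(Real.pi : ℂ) * Complex.I * ∑ i, (n i : ℂ) * (x i : ℂ)))
    rw [setIntegral_congr_fun (g := fun x => u ((2 : ℝ) • x) * Complex.exp (-(Real.pi : ℂ) *
      Complex.I * ∑ i, (n i : ℂ) * ((((2 : ℝ) • x) i : ℝ) : ℂ))) hms]
    · rw [h2, Complex.real_smul]
      push_cast
      rw [one_div]
    · intro x hx
      simp only [hvx x hx, smul_eq_mul]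
      rw [mul_comm]
      congr 1
      simp only [UnitAddTorus.mFourier, ContinuousMap.coe_mk, fourier_coe_apply,
        ← Complex.exp_sum]
      congr 1
      rw [Finset.mul_sum]
      refine Finset.sum_congr rfl fun i _ => ?_
      simp
      ring
  have h2 : ∫ t, ‖(hLp.toLp v) t‖ ^ 2 =
      ((2 : ℝ) ^ d)⁻¹ * ∫ x in Icc (-1 : Fin d → ℝ) 1, ‖u x‖ ^ 2 := by
    have : ∫ t, ‖(hLp.toLp v) t‖ ^ 2 = ∫ t, ‖v t‖ ^ 2 :=
      integral_congr_ae (by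
        filter_upwards [hLp.coeFn_toLp] with t ht
        rw [ht])
    rw [this, UnitAddTorus.integral_preimage _ a, ← smul_eq_mul, ← integral_cell_comp_two_smul]
    refine setIntegral_congr_fun hms fun x hx => ?_
    simp only [hvx x hx]
  rw [h2] at key
  simpa only [h1] using key

end Parseval

/-! ### Fourier coefficients of derivatives -/

section Derivative

/-- The `i`-th partial derivative. -/
noncomputable def partialDeriv {d : ℕ} (i : Fin d) (u : (Fin d → ℝ) → ℂ) : (Fin d → ℝ) → ℂ :=
  fun x => fderiv ℝ u x (Pi.single i 1)

/-- `2`-periodicity in each variable. -/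
def IsTwoPeriodic {d : ℕ} (u : (Fin d → ℝ) → ℂ) : Prop :=
  ∀ (x : Fin d → ℝ) (i : Fin d), u (Function.update x i (x i + 2)) = u x

lemma update_add_two {d : ℕ} (x : Fin d → ℝ) (i : Fin d) :
    Function.update x i (x i + 2) = x + Pi.single i 2 := by
  ext j
  by_cases h : j = i
  · subst h; simp
  · simp [h]

lemma IsTwoPeriodic.partialDeriv {d : ℕ} {u : (Fin d → ℝ) → ℂ} (hu : IsTwoPeriodic u)
    (i : Fin d) : IsTwoPeriodic (partialDeriv i u) := by
  intro x j
  have h : (fun y => u (y + Pi.single j 2)) = u := by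
    funext y
    rw [← update_add_two, hu]
  unfold _root_.partialDeriv
  rw [update_add_two, ← fderiv_comp_add_right, h]

lemma contDiff_partialDeriv {d : ℕ} {u : (Fin d → ℝ) → ℂ} (hu : ContDiff ℝ (⊤ : ℕ∞) u)
    (i : Fin d) : ContDiff ℝ (⊤ : ℕ∞) (partialDeriv i u) :=
  (hu.fderiv_right (m := ((⊤ : ℕ∞) : WithTop ℕ∞)) (by simp)).clm_apply contDiff_const

/-- By the divergence theorem, a partial derivative of a periodic function has mean zero: the
contributions of opposite faces cancel. -/
lemma integral_partialDeriv_eq_zero {d : ℕ} {u : (Fin d → ℝ) → ℂ} (hu : ContDiff ℝ 1 u)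
    (hper : IsTwoPeriodic u) (i : Fin d) :
    ∫ x in Icc (-1 : Fin d → ℝ) 1, partialDeriv i u x = 0 := by
  obtain _ | m := d
  · exact i.elim0
  have hc : Continuous (partialDeriv i u) :=
    (hu.continuous_fderiv (by simp)).clm_apply continuous_const
  have key := integral_divergence_of_hasFDerivAt_off_countable' (-1 : Fin (m + 1) → ℝ) 1
    (fun j => by simp) (fun j => if j = i then u else 0)
    (fun j x => if j = i then fderiv ℝ u x else 0) ∅ countable_empty
    (fun j => by
      split_ifs
      · exact hu.continuous.continuousOn
      · exact continuousOn_const)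
    (fun x _ j => by
      split_ifs
      · exact ((hu.differentiable (by simp)) x).hasFDerivAt
      · exact hasFDerivAt_const _ _)
  have hsum : ∀ x : Fin (m + 1) → ℝ, ∑ j, (if j = i then fderiv ℝ u x else 0) (Pi.single j 1) =
      partialDeriv i u x := by
    intro x
    rw [Finset.sum_eq_single i]
    · simp [partialDeriv]
    · intro j _ hj; simp [hj]
    · simp
  simp only [hsum] at key
  rw [key (hc.continuousOn.integrableOn_compact isCompact_Icc)]
  refine Finset.sum_eq_zero fun j _ => ?_
  by_cases hj : j = i
  · simp only [hj, if_true]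
    rw [sub_eq_zero]
    refine setIntegral_congr_fun measurableSet_Icc fun x _ => ?_
    rw [← hper (i.insertNth ((-1 : Fin (m + 1) → ℝ) i) x) i]
    congr 1
    rw [Fin.insertNth_apply_same, Fin.update_insertNth]
    congr 1
    simp; norm_num
  · simp [hj]

/-- The character `x ↦ exp(iπ n·x)`. -/
noncomputable def character {d : ℕ} (n : Fin d → ℤ) (x : Fin d → ℝ) : ℂ :=
  Complex.exp ((Real.pi : ℂ) * Complex.I * ∑ i, (n i : ℂ) * (x i : ℂ))

lemma fourierCoeffCube_eq {d : ℕ} (u : (Fin d → ℝ) → ℂ) (n : Fin d → ℤ) :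
    fourierCoeffCube u n =
      (1 / 2 ^ d : ℂ) * ∫ x in Icc (-1 : Fin d → ℝ) 1, u x * character (-n) x := by
  simp [fourierCoeffCube, character]

lemma norm_character {d : ℕ} (n : Fin d → ℤ) (x : Fin d → ℝ) : ‖character n x‖ = 1 := by
  have : (Real.pi : ℂ) * Complex.I * ∑ i, (n i : ℂ) * (x i : ℂ) =
      ((Real.pi * ∑ i, (n i : ℝ) * x i : ℝ) : ℂ) * Complex.I := by
    push_cast; ring
  rw [character, this, Complex.norm_exp_ofReal_mul_I]

lemma character_mul {d : ℕ} (m n : Fin d → ℤ) (x : Fin d → ℝ) :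
    character m x * character n x = character (m + n) x := by
  simp only [character, ← Complex.exp_add, ← mul_add, ← Finset.sum_add_distrib, Pi.add_apply]
  push_cast
  simp only [add_mul]

lemma contDiff_character {d : ℕ} (n : Fin d → ℤ) {k : WithTop ℕ∞} :
    ContDiff ℝ k (character n) := by
  have h : ∀ i : Fin d, ContDiff ℝ k (fun x : Fin d → ℝ => ((x i : ℝ) : ℂ)) := fun i =>
    Complex.ofRealCLM.contDiff.comp (contDiff_apply ℝ ℝ i)
  unfold character
  exact (contDiff_const.mul (ContDiff.sum fun i _ => contDiff_const.mul (h i))).cexp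

lemma isTwoPeriodic_character {d : ℕ} (n : Fin d → ℤ) : IsTwoPeriodic (character n) := by
  intro x i
  have h : ∑ j, (n j : ℂ) * ((Function.update x i (x i + 2) j : ℝ) : ℂ) =
      ∑ j, (n j : ℂ) * (x j : ℂ) + 2 * n i := by
    rw [update_add_two]
    simp only [Pi.add_apply, Complex.ofReal_add, mul_add, Finset.sum_add_distrib]
    congr 1
    rw [Finset.sum_eq_single i]
    · simp [mul_comm]
    · intro j _ hj; simp [hj]
    · simp
  unfold character
  rw [h, mul_add, Complex.exp_add]
  have : (Real.pi : ℂ) * Complex.I * (2 * (n i : ℂ)) = n i * (2 * Real.pi * Complex.I) := by ring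
  rw [this, Complex.exp_int_mul_two_pi_mul_I, mul_one]

lemma partialDeriv_character {d : ℕ} (n : Fin d → ℤ) (i : Fin d) :
    partialDeriv i (character n) = fun x => (Real.pi * Complex.I * n i) * character n x := by
  funext x
  have hd : HasFDerivAt (character n) (character n x •
      ((Real.pi : ℂ) * Complex.I) • ∑ j, (n j : ℂ) • Complex.ofRealCLM.comp
        (ContinuousLinearMap.proj (R := ℝ) (φ := fun _ : Fin d => ℝ) j)) x := by
    refine HasFDerivAt.cexp (HasFDerivAt.const_mul ?_ _)
    refine HasFDerivAt.fun_sum fun j _ => HasFDerivAt.const_mul ?_ _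
    exact (Complex.ofRealCLM.comp
        (ContinuousLinearMap.proj (R := ℝ) (φ := fun _ : Fin d => ℝ) j)).hasFDerivAt
  unfold partialDeriv
  rw [hd.fderiv]
  simp [Pi.single_apply, apply_ite (Complex.ofReal)]
  ring

/-- Integration by parts: `∂_i` acts on Fourier coefficients as multiplication by `iπ n_i`. -/
lemma fourierCoeffCube_partialDeriv {d : ℕ} {u : (Fin d → ℝ) → ℂ} (hu : ContDiff ℝ 1 u)
    (hper : IsTwoPeriodic u) (i : Fin d) (n : Fin d → ℤ) :
    fourierCoeffCube (partialDeriv i u) n = (Real.pi * Complex.I * n i) * fourierCoeffCube u n := by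
  have h0 := integral_partialDeriv_eq_zero (u := fun x => u x * character (-n) x)
    (hu.mul (contDiff_character _)) (fun x j => by
      beta_reduce
      rw [hper x j, isTwoPeriodic_character (-n) x j]) i
  have h1 : ∀ x, partialDeriv i (fun x => u x * character (-n) x) x =
      partialDeriv i u x * character (-n) x -
        (Real.pi * Complex.I * n i) * (u x * character (-n) x) := by
    intro x
    have h2 := congrFun (partialDeriv_character (-n) i) x
    unfold partialDeriv at h2 ⊢
    rw [fderiv_fun_mul (hu.differentiable (by simp) x)
      ((contDiff_character (k := 1) (-n)).differentiable (by simp) x)]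
    simp [h2]
    ring
  have hc : Continuous (partialDeriv i u) :=
    (hu.continuous_fderiv (by simp)).clm_apply continuous_const
  have hχ : Continuous (character (-n)) := (contDiff_character (k := 1) (-n)).continuous
  simp only [h1] at h0
  rw [integral_sub, integral_const_mul, sub_eq_zero] at h0
  · rw [fourierCoeffCube_eq, fourierCoeffCube_eq, h0]; ring
  · exact (hc.mul hχ).continuousOn.integrableOn_compact isCompact_Icc
  · exact (continuous_const.mul (hu.continuous.mul hχ)).continuousOn.integrableOn_compact
      isCompact_Icc

lemma fourierCoeffCube_character {d : ℕ} (m n : Fin d → ℤ) :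
    fourierCoeffCube (character m) n = if n = m then 1 else 0 := by
  split_ifs with h
  · subst h
    have : ∀ x : Fin d → ℝ, character n x * character (-n) x = 1 := by
      intro x
      rw [character_mul]; simp [character]
    simp only [fourierCoeffCube_eq, this]
    have hv : (volume : Measure (Fin d → ℝ)).real (Icc (-1 : Fin d → ℝ) 1) = 2 ^ d := by
      rw [Measure.real, Real.volume_Icc_pi_toReal (fun j => by simp)]
      simp; norm_num
    rw [setIntegral_const, hv]
    simp
  · obtain ⟨i, hi⟩ := Function.ne_iff.mp h
    have h1 := fourierCoeffCube_partialDeriv (contDiff_character m) (isTwoPeriodic_character m) i n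
    rw [partialDeriv_character] at h1
    have h2 : fourierCoeffCube (fun x => (Real.pi * Complex.I * m i) * character m x) n =
        (Real.pi * Complex.I * m i) * fourierCoeffCube (character m) n := by
      simp only [fourierCoeffCube_eq, mul_assoc, integral_const_mul]
      ring
    rw [h2, ← sub_eq_zero, ← sub_mul, mul_eq_zero, ← mul_sub] at h1
    refine h1.resolve_left ?_
    have : (m i : ℂ) - n i ≠ 0 := by
      rw [sub_ne_zero]; exact_mod_cast Ne.symm hi
    simp [this, Real.pi_ne_zero]

/-- Parseval's identity for the `k`-th power of `∂_i` applied to `u`. -/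
lemma summable_coord_pow_mul {d : ℕ} (i : Fin d) (k : ℕ) {u : (Fin d → ℝ) → ℂ}
    (hu : ContDiff ℝ (⊤ : ℕ∞) u) (hper : IsTwoPeriodic u) :
    Summable (fun n : Fin d → ℤ => ((n i : ℝ) ^ 2) ^ k * ‖fourierCoeffCube u n‖ ^ 2) := by
  induction k generalizing u with
  | zero => simpa using (hasSum_sq_fourierCoeffCube hu.continuous).summable
  | succ k ih =>
    have h := ih (contDiff_partialDeriv hu i) (hper.partialDeriv i)
    refine (h.mul_left (Real.pi ^ 2)⁻¹).congr fun n => ?_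
    rw [fourierCoeffCube_partialDeriv (hu.of_le (by exact_mod_cast le_top)) hper]
    have hp : Real.pi ^ 2 ≠ 0 := pow_ne_zero _ Real.pi_ne_zero
    simp only [norm_mul, Complex.norm_real, Complex.norm_I, Complex.norm_intCast, mul_pow,
      Real.norm_eq_abs, sq_abs]
    field_simp
    ring

/-- Smooth periodic functions have finite Sobolev norms of every order. -/
lemma summable_sobolev {d : ℕ} (s : ℝ) {u : (Fin d → ℝ) → ℂ}
    (hu : ContDiff ℝ (⊤ : ℕ∞) u) (hper : IsTwoPeriodic u) :
    Summable (fun n : Fin d → ℤ =>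
      (1 + ∑ i, ((n i : ℝ)) ^ 2) ^ s * ‖fourierCoeffCube u n‖ ^ 2) := by
  obtain ⟨k, hk⟩ := exists_nat_ge s
  have h1 : Summable (fun n : Fin d → ℤ => (2 : ℝ) ^ k * (‖fourierCoeffCube u n‖ ^ 2 +
      (d : ℝ) ^ k * ∑ i, ((n i : ℝ) ^ 2) ^ (k + 1) * ‖fourierCoeffCube u n‖ ^ 2)) :=
    (((hasSum_sq_fourierCoeffCube hu.continuous).summable).add
      ((summable_sum fun i _ => summable_coord_pow_mul i (k + 1) hu hper).mul_left _)).mul_left _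
  refine Summable.of_nonneg_of_le (fun n => by positivity) (fun n => ?_) h1
  have hS : 0 ≤ ∑ i, ((n i : ℝ)) ^ 2 := by positivity
  have h2 : (1 + ∑ i, ((n i : ℝ)) ^ 2) ^ s ≤ (1 + ∑ i, ((n i : ℝ)) ^ 2) ^ (k + 1) := by
    rw [← Real.rpow_natCast]
    exact Real.rpow_le_rpow_of_exponent_le (by linarith) (by push_cast; linarith)
  have h3 := add_pow_le (zero_le_one (α := ℝ)) hS (k + 1)
  have h4 : (∑ i, ((n i : ℝ)) ^ 2) ^ (k + 1) ≤ (d : ℝ) ^ k * ∑ i, ((n i : ℝ) ^ 2) ^ (k + 1) := by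
    obtain rfl | hd := Nat.eq_zero_or_pos d
    · simp
    · have h5 := pow_sum_div_card_le_sum_pow (s := Finset.univ) (f := fun i => (n i : ℝ) ^ 2)
        (fun i _ => by positivity) k
      rwa [Finset.card_univ, Fintype.card_fin, div_le_iff₀' (by positivity)] at h5
  calc _ ≤ ((2 : ℝ) ^ k * (1 + (d : ℝ) ^ k * ∑ i, ((n i : ℝ) ^ 2) ^ (k + 1))) *
        ‖fourierCoeffCube u n‖ ^ 2 := by
        gcongr
        refine h2.trans (h3.trans ?_)
        simp only [Nat.add_sub_cancel, one_pow]
        gcongr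
    _ = _ := by rw [← Finset.sum_mul]; ring

end Derivative

/-! ### Lattice sums -/

section LatticeSum

/-- The lattice points of the cube `[-K, K]^d`. -/
noncomputable def latticeBox (d K : ℕ) : Finset (Fin d → ℤ) :=
  Fintype.piFinset fun _ => Finset.Icc (-(K : ℤ)) K

lemma mem_latticeBox {d K : ℕ} {n : Fin d → ℤ} : n ∈ latticeBox d K ↔ ∀ i, |n i| ≤ (K : ℤ) := by
  simp [latticeBox, abs_le]

lemma card_latticeBox (d K : ℕ) : (latticeBox d K).card = (2 * K + 1) ^ d := by
  rw [latticeBox, Fintype.card_piFinset]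
  simp only [Int.card_Icc, Finset.prod_const, Finset.card_univ, Fintype.card_fin]
  congr 1
  omega

lemma latticeBox_subset (d K : ℕ) : latticeBox d K ⊆ latticeBox d (K + 1) := by
  intro n hn
  rw [mem_latticeBox] at hn ⊢
  intro i
  have := hn i
  push_cast
  linarith

/-- The telescoping step for the lattice sums; its factor `e`, used with `e = d - 2s`, is what makes
their bound proportional to `1/(d-2s)`. -/
lemma rpow_succ_sub_rpow_ge {d : ℕ} (hd : 1 ≤ d) {e : ℝ} (he : 0 < e) (hed : e ≤ d) (K : ℕ) :
    e / d * ((K : ℝ) + 1) ^ (e - 1) ≤ ((K : ℝ) + 1) ^ e - (K : ℝ) ^ e := by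
  have hd' : (1 : ℝ) ≤ d := by exact_mod_cast hd
  have hK : (0 : ℝ) < (K : ℝ) + 1 := by positivity
  have hsplit : ((K : ℝ) + 1) ^ e = ((K : ℝ) + 1) ^ (e - 1) * (K + 1) := by
    rw [← Real.rpow_add_one hK.ne', sub_add_cancel]
  have hP : 0 < ((K : ℝ) + 1) ^ (e - 1) := Real.rpow_pos_of_pos hK _
  rcases le_total e 1 with h1 | h1
  · -- Bernoulli's inequality for exponents at most `1`
    have hB := rpow_one_add_le_one_add_mul_self (s := -1 / ((K : ℝ) + 1))
      (by rw [le_div_iff₀ hK]; linarith [(Nat.cast_nonneg K : (0 : ℝ) ≤ K)]) he.le h1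
    have hq : (1 + -1 / ((K : ℝ) + 1)) = K / (K + 1) := by field_simp; ring
    rw [hq, Real.div_rpow (by positivity) hK.le, div_le_iff₀ (Real.rpow_pos_of_pos hK _)] at hB
    have h2 : (1 + e * (-1 / ((K : ℝ) + 1))) * ((K : ℝ) + 1) ^ e =
        ((K : ℝ) + 1) ^ e - e * ((K : ℝ) + 1) ^ (e - 1) := by
      rw [hsplit]; field_simp
      ring
    rw [h2] at hB
    have h3 : e / d * ((K : ℝ) + 1) ^ (e - 1) ≤ e * ((K : ℝ) + 1) ^ (e - 1) := by
      gcongr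
      exact div_le_self he.le hd'
    linarith
  · have h2 : (K : ℝ) ^ e ≤ K * ((K : ℝ) + 1) ^ (e - 1) := by
      rcases Nat.eq_zero_or_pos K with rfl | hK0
      · simp [Real.zero_rpow he.ne']
      · have hK0' : (0 : ℝ) < K := by exact_mod_cast hK0
        have : (K : ℝ) ^ e = K * (K : ℝ) ^ (e - 1) := by
          rw [mul_comm, ← Real.rpow_add_one hK0'.ne', sub_add_cancel]
        rw [this]
        gcongr
        linarith
    have h3 : e / d * ((K : ℝ) + 1) ^ (e - 1) ≤ 1 * ((K : ℝ) + 1) ^ (e - 1) := by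
      gcongr
      rw [div_le_one (by linarith)]
      exact hed
    rw [hsplit]
    linarith

lemma card_shell_le {d : ℕ} (K : ℕ) :
    (((latticeBox d (K + 1)) \ (latticeBox d K)).card : ℝ) ≤
      2 * d * 3 ^ d * ((K : ℝ) + 1) ^ (d - 1) := by
  rw [Finset.cast_card_sdiff (latticeBox_subset d K), card_latticeBox, card_latticeBox]
  push_cast
  have h := abs_pow_sub_pow_le (2 * ((K : ℝ) + 1) + 1) (2 * (K : ℝ) + 1) d
  have hm : max |2 * ((K : ℝ) + 1) + 1| |2 * (K : ℝ) + 1| = 2 * ((K : ℝ) + 1) + 1 := by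
    rw [abs_of_nonneg (by positivity), abs_of_nonneg (by positivity)]
    exact max_eq_left (by linarith)
  have ha : |2 * ((K : ℝ) + 1) + 1 - (2 * (K : ℝ) + 1)| = 2 := by
    rw [show 2 * ((K : ℝ) + 1) + 1 - (2 * (K : ℝ) + 1) = 2 by ring]; norm_num
  rw [hm, ha] at h
  refine (le_abs_self _).trans (h.trans ?_)
  have h3 : (2 * ((K : ℝ) + 1) + 1) ^ (d - 1) ≤ 3 ^ d * ((K : ℝ) + 1) ^ (d - 1) := by
    calc (2 * ((K : ℝ) + 1) + 1) ^ (d - 1) ≤ (3 * ((K : ℝ) + 1)) ^ (d - 1) := by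
          gcongr
          linarith [(Nat.cast_nonneg K : (0 : ℝ) ≤ K)]
      _ = 3 ^ (d - 1) * ((K : ℝ) + 1) ^ (d - 1) := mul_pow _ _ _
      _ ≤ _ := by
          gcongr
          · norm_num
          · omega
  calc 2 * (d : ℝ) * (2 * ((K : ℝ) + 1) + 1) ^ (d - 1)
      ≤ 2 * d * (3 ^ d * ((K : ℝ) + 1) ^ (d - 1)) := by gcongr
    _ = _ := by ring

/-- Induction on `K`: passing from `[-K,K]^d` to `[-(K+1),K+1]^d` adds `O((K+1)^{d-1})` points, each
of weight at most `(K+1)^{-2s}`. -/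
lemma sum_latticeBox_le {d : ℕ} (hd : 1 ≤ d) {s : ℝ} (hs : 0 < s) (hsd : s < (d : ℝ) / 2)
    (K : ℕ) (hK : 1 ≤ K) :
    ∑ n ∈ latticeBox d K, (1 + ∑ i, ((n i : ℝ)) ^ 2) ^ (-s) ≤
      2 * (d : ℝ) ^ 2 * 3 ^ d / (d - 2 * s) * (K : ℝ) ^ ((d : ℝ) - 2 * s) := by
  have hd' : (1 : ℝ) ≤ d := by exact_mod_cast hd
  have he : 0 < (d : ℝ) - 2 * s := by linarith
  induction K, hK using Nat.le_induction with
  | base =>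
    have h1 : ∑ n ∈ latticeBox d 1, (1 + ∑ i, ((n i : ℝ)) ^ 2) ^ (-s) ≤
        ∑ n ∈ latticeBox d 1, (1 : ℝ) := by
      refine Finset.sum_le_sum fun n _ => ?_
      refine Real.rpow_le_one_of_one_le_of_nonpos ?_ (by linarith)
      have : 0 ≤ ∑ i, ((n i : ℝ)) ^ 2 := by positivity
      linarith
    rw [Finset.sum_const, card_latticeBox] at h1
    norm_num at h1
    refine h1.trans ?_
    rw [Nat.cast_one, Real.one_rpow, mul_one, le_div_iff₀ he]
    have : (3 : ℝ) ^ d * (d - 2 * s) ≤ 3 ^ d * (2 * (d : ℝ) ^ 2) := by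
      gcongr
      nlinarith
    linarith
  | succ K hK ih =>
    rw [← Finset.sum_sdiff (latticeBox_subset d K)]
    have h1 : ∑ n ∈ latticeBox d (K + 1) \ latticeBox d K, (1 + ∑ i, ((n i : ℝ)) ^ 2) ^ (-s) ≤
        ∑ n ∈ latticeBox d (K + 1) \ latticeBox d K, ((K : ℝ) + 1) ^ (-(2 * s)) := by
      refine Finset.sum_le_sum fun n hn => ?_
      rw [Finset.mem_sdiff, mem_latticeBox, mem_latticeBox] at hn
      obtain ⟨i, hi⟩ := not_forall.mp hn.2
      have hi' : ((K : ℝ) + 1) ≤ |(n i : ℝ)| := by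
        have : (K : ℤ) + 1 ≤ |n i| := by omega
        exact_mod_cast this
      have hi2 : ((K : ℝ) + 1) ^ 2 ≤ (n i : ℝ) ^ 2 := by
        rw [← sq_abs (n i : ℝ)]
        gcongr
      have hi3 : (n i : ℝ) ^ 2 ≤ ∑ j, ((n j : ℝ)) ^ 2 :=
        Finset.single_le_sum (f := fun j => (n j : ℝ) ^ 2) (fun j _ => sq_nonneg _)
          (Finset.mem_univ i)
      have : ((K : ℝ) + 1) ^ (-(2 * s)) = (((K : ℝ) + 1) ^ 2) ^ (-s) := by
        rw [← Real.rpow_natCast, ← Real.rpow_mul (by positivity)]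
        congr 1
        push_cast; ring
      rw [this]
      exact Real.rpow_le_rpow_of_nonpos (by positivity) (by linarith) (by linarith)
    rw [Finset.sum_const, nsmul_eq_mul] at h1
    have h2 := rpow_succ_sub_rpow_ge hd he (by linarith) K
    have h3 : ((K : ℝ) + 1) ^ (d - 1) * ((K : ℝ) + 1) ^ (-(2 * s)) =
        ((K : ℝ) + 1) ^ ((d : ℝ) - 2 * s - 1) := by
      rw [← Real.rpow_natCast, ← Real.rpow_add (by positivity)]
      congr 1
      rw [Nat.cast_sub hd]
      push_cast; ring
    have h4 : (((latticeBox d (K + 1)) \ (latticeBox d K)).card : ℝ) * ((K : ℝ) + 1) ^ (-(2 * s)) ≤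
        2 * d * 3 ^ d * ((K : ℝ) + 1) ^ ((d : ℝ) - 2 * s - 1) := by
      rw [← h3, ← mul_assoc]
      gcongr
      exact card_shell_le K
    have h5 : 2 * d * 3 ^ d * ((K : ℝ) + 1) ^ ((d : ℝ) - 2 * s - 1) =
        2 * (d : ℝ) ^ 2 * 3 ^ d / (d - 2 * s) *
          ((d - 2 * s) / d * ((K : ℝ) + 1) ^ ((d : ℝ) - 2 * s - 1)) := by
      have : (d : ℝ) ≠ 0 := by positivity
      field_simp
    have h6 : 2 * (d : ℝ) ^ 2 * 3 ^ d / (d - 2 * s) *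
          ((d - 2 * s) / d * ((K : ℝ) + 1) ^ ((d : ℝ) - 2 * s - 1)) ≤
        2 * (d : ℝ) ^ 2 * 3 ^ d / (d - 2 * s) *
          (((K : ℝ) + 1) ^ ((d : ℝ) - 2 * s) - (K : ℝ) ^ ((d : ℝ) - 2 * s)) := by
      gcongr
    push_cast
    linarith

/-- Lattice sums of `(1+|n|²)^{-s}` over a ball of radius `A` are `O(A^{d-2s}/(d-2s))`, uniformly
in `s`. -/
lemma sum_weight_le {d : ℕ} (hd : 1 ≤ d) {s : ℝ} (hs : 0 < s) (hsd : s < (d : ℝ) / 2)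
    {A : ℝ} (hA : 0 ≤ A) (F : Finset (Fin d → ℤ))
    (hF : ∀ n ∈ F, 1 + ∑ i, ((n i : ℝ)) ^ 2 ≤ A ^ 2) :
    ∑ n ∈ F, (1 + ∑ i, ((n i : ℝ)) ^ 2) ^ (-s) ≤
      2 * (d : ℝ) ^ 2 * 3 ^ d / (d - 2 * s) * A ^ ((d : ℝ) - 2 * s) := by
  have he : 0 < (d : ℝ) - 2 * s := by linarith
  obtain rfl | ⟨n₀, hn₀⟩ := F.eq_empty_or_nonempty
  · simp only [Finset.sum_empty]
    positivity
  have hA1 : 1 ≤ A := by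
    have h0 : 0 ≤ ∑ i, ((n₀ i : ℝ)) ^ 2 := by positivity
    have := hF n₀ hn₀
    nlinarith
  have hsub : F ⊆ latticeBox d ⌊A⌋₊ := by
    intro n hn
    rw [mem_latticeBox]
    intro i
    have hi3 : (n i : ℝ) ^ 2 ≤ ∑ j, ((n j : ℝ)) ^ 2 :=
      Finset.single_le_sum (f := fun j => (n j : ℝ) ^ 2) (fun j _ => sq_nonneg _)
        (Finset.mem_univ i)
    have h1 : |(n i : ℝ)| ≤ A := abs_le_of_sq_le_sq (by linarith [hF n hn]) hA
    have h2 : ((n i).natAbs : ℝ) ≤ A := by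
      rwa [Nat.cast_natAbs, Int.cast_abs]
    have h3 := Nat.le_floor h2
    rw [Int.abs_eq_natAbs]
    exact_mod_cast h3
  refine (Finset.sum_le_sum_of_subset_of_nonneg hsub fun n _ _ => by positivity).trans ?_
  refine (sum_latticeBox_le hd hs hsd _ (by rwa [Nat.one_le_floor_iff])).trans ?_
  gcongr
  exact Nat.floor_le hA

end LatticeSum

/-! ### Low and high frequencies -/

section LowHigh

/-- The part of the Fourier series of `u` with frequencies in `F`. -/
noncomputable def lowPart {d : ℕ} (u : (Fin d → ℝ) → ℂ) (F : Finset (Fin d → ℤ))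
    (x : Fin d → ℝ) : ℂ :=
  ∑ m ∈ F, fourierCoeffCube u m * character m x

lemma continuous_lowPart {d : ℕ} (u : (Fin d → ℝ) → ℂ) (F : Finset (Fin d → ℤ)) :
    Continuous (lowPart u F) := by
  unfold lowPart
  exact continuous_finsetSum _ fun m _ =>
    continuous_const.mul (contDiff_character (k := 0) m).continuous

lemma norm_lowPart_le {d : ℕ} (u : (Fin d → ℝ) → ℂ) (F : Finset (Fin d → ℤ)) (x : Fin d → ℝ) :
    ‖lowPart u F x‖ ≤ ∑ m ∈ F, ‖fourierCoeffCube u m‖ := by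
  refine (norm_sum_le _ _).trans (le_of_eq ?_)
  simp [norm_character]

lemma fourierCoeffCube_sub_lowPart {d : ℕ} {u : (Fin d → ℝ) → ℂ} (hu : Continuous u)
    (F : Finset (Fin d → ℤ)) (n : Fin d → ℤ) [Decidable (n ∈ F)] :
    fourierCoeffCube (fun x => u x - lowPart u F x) n =
      if n ∈ F then 0 else fourierCoeffCube u n := by
  have hχ : ∀ m : Fin d → ℤ, Continuous (character m) := fun m =>
    (contDiff_character (k := 0) m).continuous
  have hI : ∀ {g : (Fin d → ℝ) → ℂ}, Continuous g → IntegrableOn g (Icc (-1 : Fin d → ℝ) 1) :=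
    fun hg => hg.continuousOn.integrableOn_compact isCompact_Icc
  have h1 : fourierCoeffCube (fun x => u x - lowPart u F x) n =
      fourierCoeffCube u n - ∑ m ∈ F, fourierCoeffCube u m * fourierCoeffCube (character m) n := by
    rw [fourierCoeffCube_eq, fourierCoeffCube_eq u]
    simp only [sub_mul]
    rw [integral_sub (hI (g := fun x => u x * character (-n) x) (hu.mul (hχ _)))
      (hI (g := fun x => lowPart u F x * character (-n) x)
        ((continuous_lowPart u F).mul (hχ _))), mul_sub]
    congr 1
    simp only [lowPart, Finset.sum_mul]
    rw [integral_finsetSum _ fun m _ => hI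
      (g := fun x => fourierCoeffCube u m * character m x * character (-n) x)
      ((continuous_const.mul (hχ m)).mul (hχ _)), Finset.mul_sum]
    refine Finset.sum_congr rfl fun m _ => ?_
    rw [fourierCoeffCube_eq (character m)]
    simp only [mul_assoc, integral_const_mul]
    ring
  rw [h1]
  simp only [fourierCoeffCube_character, mul_ite, mul_one, mul_zero]
  rw [Finset.sum_ite_eq]
  split_ifs <;> simp

/-- Parseval's identity for the high frequencies, those outside `F`. -/
lemma hasSum_sq_high {d : ℕ} {u : (Fin d → ℝ) → ℂ} (hu : Continuous u)
    (F : Finset (Fin d → ℤ)) [DecidablePred (· ∈ F)] :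
    HasSum (fun n => if n ∈ F then 0 else 2 ^ d * ‖fourierCoeffCube u n‖ ^ 2)
      (∫ x in Icc (-1 : Fin d → ℝ) 1, ‖u x - lowPart u F x‖ ^ 2) := by
  have h := (hasSum_sq_fourierCoeffCube (hu.sub (continuous_lowPart u F))).mul_left ((2 : ℝ) ^ d)
  rw [← mul_assoc, mul_inv_cancel₀ (by positivity), one_mul] at h
  refine h.congr_fun fun n => ?_
  have := fourierCoeffCube_sub_lowPart hu F n
  simp only [Pi.sub_def] at *
  rw [this]
  split_ifs <;> simp

end LowHigh

/-! ### Comparison of distribution functions -/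

section Main

/-- The Sobolev weight `1 + |n|²`. -/
noncomputable def weight {d : ℕ} (n : Fin d → ℤ) : ℝ := 1 + ∑ i, ((n i : ℝ)) ^ 2

lemma one_le_weight {d : ℕ} (n : Fin d → ℤ) : 1 ≤ weight n := by
  have : 0 ≤ ∑ i, ((n i : ℝ)) ^ 2 := by positivity
  unfold weight; linarith

lemma weight_pos {d : ℕ} (n : Fin d → ℤ) : 0 < weight n := by linarith [one_le_weight n]

lemma finite_weight_le {d : ℕ} (B : ℝ) : {n : Fin d → ℤ | weight n ≤ B}.Finite := by
  refine (latticeBox d ⌊B⌋₊).finite_toSet.subset fun n hn => ?_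
  rw [Finset.mem_coe, mem_latticeBox]
  intro i
  have hi : (n i : ℝ) ^ 2 ≤ ∑ j, ((n j : ℝ)) ^ 2 :=
    Finset.single_le_sum (f := fun j => (n j : ℝ) ^ 2) (fun j _ => sq_nonneg _)
      (Finset.mem_univ i)
  have hn' : 1 + ∑ i, ((n i : ℝ)) ^ 2 ≤ B := hn
  have h2 : ((n i).natAbs : ℝ) ≤ B := by
    rw [Nat.cast_natAbs, Int.cast_abs]
    nlinarith [sq_abs (n i : ℝ), sq_nonneg (|(n i : ℝ)| - 1)]
  rw [Int.abs_eq_natAbs]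
  exact_mod_cast Nat.le_floor h2

/-- When `b²` dominates `M²/(d-2s)`, the frequencies `n` with `b (1+|n|²)^{(d-2s)/4} ≤ t` contribute
at most `t/2` to the sup norm, by the Cauchy–Schwarz inequality. -/
lemma exists_low {d : ℕ} (hd : 1 ≤ d) {s : ℝ} (hs : 0 < s) (hsd : s < (d : ℝ) / 2)
    {u : (Fin d → ℝ) → ℂ}
    (hsum : Summable (fun n : Fin d → ℤ => weight n ^ s * ‖fourierCoeffCube u n‖ ^ 2))
    {M : ℝ} (hMs : ∑' n : Fin d → ℤ, weight n ^ s * ‖fourierCoeffCube u n‖ ^ 2 ≤ M ^ 2)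
    {b : ℝ} (hb : 0 < b) (hbM : 8 * (d : ℝ) ^ 2 * 3 ^ d / (d - 2 * s) * M ^ 2 ≤ b ^ 2)
    {t : ℝ} (ht : 0 < t) :
    ∃ F : Finset (Fin d → ℤ), (∀ n, n ∈ F ↔ b * weight n ^ (((d : ℝ) - 2 * s) / 4) ≤ t) ∧
      ∀ x, ‖lowPart u F x‖ ≤ t / 2 := by
  have he : 0 < (d : ℝ) - 2 * s := by linarith
  set e := (d : ℝ) - 2 * s with hedef
  set A : ℝ := (t / b) ^ (2 / e) with hA
  have htb : 0 < t / b := by positivity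
  have hA0 : 0 < A := Real.rpow_pos_of_pos htb _
  have hAe : A ^ e = (t / b) ^ 2 := by
    rw [hA, ← Real.rpow_mul htb.le, ← Real.rpow_natCast]
    congr 1
    push_cast
    field_simp
  have hiff : ∀ n : Fin d → ℤ, b * weight n ^ (e / 4) ≤ t → weight n ≤ A ^ 2 := by
    intro n hn
    have h1 : weight n ^ (e / 4) ≤ t / b := by rw [le_div_iff₀ hb]; linarith
    have h2 := Real.rpow_le_rpow (Real.rpow_nonneg (weight_pos n).le _) h1
      (by positivity : 0 ≤ 4 / e)
    rw [← Real.rpow_mul (weight_pos n).le] at h2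
    have h3 : e / 4 * (4 / e) = 1 := by field_simp
    rw [h3, Real.rpow_one] at h2
    refine h2.trans (le_of_eq ?_)
    rw [hA, ← Real.rpow_natCast, ← Real.rpow_mul htb.le]
    congr 1
    push_cast
    ring
  have hfin : {n : Fin d → ℤ | b * weight n ^ (e / 4) ≤ t}.Finite :=
    (finite_weight_le (A ^ 2)).subset hiff
  refine ⟨hfin.toFinset, fun n => by simp, fun x => (norm_lowPart_le _ _ _).trans ?_⟩
  set F := hfin.toFinset
  have hF : ∀ n ∈ F, 1 + ∑ i, ((n i : ℝ)) ^ 2 ≤ A ^ 2 := fun n hn => hiff n (by simpa [F] using hn)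
  have hW := sum_weight_le hd hs hsd hA0.le F hF
  rw [← hedef, hAe] at hW
  have hCS := Finset.sum_mul_sq_le_sq_mul_sq F (fun n => weight n ^ (-s / 2))
    (fun n => weight n ^ (s / 2) * ‖fourierCoeffCube u n‖)
  have h1 : ∀ n : Fin d → ℤ, weight n ^ (-s / 2) * (weight n ^ (s / 2) * ‖fourierCoeffCube u n‖) =
      ‖fourierCoeffCube u n‖ := by
    intro n
    rw [← mul_assoc, ← Real.rpow_add (weight_pos n)]
    have : -s / 2 + s / 2 = 0 := by ring
    rw [this, Real.rpow_zero, one_mul]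
  have h2 : ∀ n : Fin d → ℤ, ∀ r : ℝ, (weight n ^ (r / 2)) ^ 2 = weight n ^ r := by
    intro n r
    rw [← Real.rpow_natCast, ← Real.rpow_mul (weight_pos n).le]
    congr 1
    push_cast; ring
  simp only [h1, mul_pow, h2] at hCS
  have h3 : ∑ n ∈ F, weight n ^ s * ‖fourierCoeffCube u n‖ ^ 2 ≤ M ^ 2 :=
    (hsum.sum_le_tsum F fun n _ =>
      mul_nonneg (Real.rpow_nonneg (weight_pos n).le _) (sq_nonneg _)).trans hMs
  have h4 : (∑ n ∈ F, ‖fourierCoeffCube u n‖) ^ 2 ≤ (t / 2) ^ 2 := by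
    calc _ ≤ (∑ n ∈ F, weight n ^ (-s)) * ∑ n ∈ F, weight n ^ s * ‖fourierCoeffCube u n‖ ^ 2 := hCS
      _ ≤ (2 * (d : ℝ) ^ 2 * 3 ^ d / e * (t / b) ^ 2) * M ^ 2 := by
        refine mul_le_mul hW h3 (Finset.sum_nonneg fun n _ =>
          mul_nonneg (Real.rpow_nonneg (weight_pos n).le _) (sq_nonneg _)) (by positivity)
      _ = (8 * (d : ℝ) ^ 2 * 3 ^ d / e * M ^ 2) * ((t / b) ^ 2 / 4) := by ring
      _ ≤ b ^ 2 * ((t / b) ^ 2 / 4) := by gcongr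
      _ = (t / 2) ^ 2 := by field_simp; norm_num
  exact le_of_abs_le (abs_le_of_sq_le_sq h4 (by positivity))

open scoped ENNReal in
/-- Comparison of distribution functions: the measure `|u|² dx` of `{|u| > t}` is controlled by the
energy of the frequencies `n` with `t < b (1+|n|²)^{(d-2s)/4}`. -/
lemma measure_superlevel_le {d : ℕ} (hd : 1 ≤ d) {s : ℝ} (hs : 0 < s) (hsd : s < (d : ℝ) / 2)
    {u : (Fin d → ℝ) → ℂ} (hu : Continuous u)
    (hsum : Summable (fun n : Fin d → ℤ => weight n ^ s * ‖fourierCoeffCube u n‖ ^ 2))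
    {M : ℝ} (hMs : ∑' n : Fin d → ℤ, weight n ^ s * ‖fourierCoeffCube u n‖ ^ 2 ≤ M ^ 2)
    {b : ℝ} (hb : 0 < b) (hbM : 8 * (d : ℝ) ^ 2 * 3 ^ d / (d - 2 * s) * M ^ 2 ≤ b ^ 2)
    {t : ℝ} (ht : 0 < t) :
    ((volume.restrict (Icc (-1 : Fin d → ℝ) 1)).withDensity
        (fun x => ENNReal.ofReal (‖u x‖ ^ 2))) {x | t < ‖u x‖} ≤
      ((Measure.count : Measure (Fin d → ℤ)).withDensity
        (fun n => ENNReal.ofReal (4 * (2 ^ d * ‖fourierCoeffCube u n‖ ^ 2))))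
          {n | t < b * weight n ^ (((d : ℝ) - 2 * s) / 4)} := by
  classical
  obtain ⟨F, hF, hlow⟩ := exists_low hd hs hsd hsum hMs hb hbM ht
  have hmeas : MeasurableSet {x | t < ‖u x‖} := measurableSet_lt measurable_const hu.norm.measurable
  have hcu : Continuous fun x => 4 * ‖u x - lowPart u F x‖ ^ 2 :=
    continuous_const.mul ((hu.sub (continuous_lowPart u F)).norm.pow 2)
  have hhigh := (hasSum_sq_high hu F).mul_left 4
  calc _ = ∫⁻ x in {x | t < ‖u x‖}, ENNReal.ofReal (‖u x‖ ^ 2)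
          ∂(volume.restrict (Icc (-1 : Fin d → ℝ) 1)) := withDensity_apply _ hmeas
    _ ≤ ∫⁻ x in {x | t < ‖u x‖}, ENNReal.ofReal (4 * ‖u x - lowPart u F x‖ ^ 2)
          ∂(volume.restrict (Icc (-1 : Fin d → ℝ) 1)) := by
        refine setLIntegral_mono hcu.measurable.ennreal_ofReal fun x hx => ENNReal.ofReal_le_ofReal ?_
        have hx' : t < ‖u x‖ := hx
        have h1 : ‖u x‖ ≤ ‖u x - lowPart u F x‖ + ‖lowPart u F x‖ := by
          simpa using norm_add_le (u x - lowPart u F x) (lowPart u F x)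
        have h2 : ‖u x‖ ≤ 2 * ‖u x - lowPart u F x‖ := by linarith [hlow x]
        nlinarith [norm_nonneg (u x)]
    _ ≤ ∫⁻ x in Icc (-1 : Fin d → ℝ) 1, ENNReal.ofReal (4 * ‖u x - lowPart u F x‖ ^ 2) :=
        lintegral_mono' Measure.restrict_le_self le_rfl
    _ = ENNReal.ofReal (∫ x in Icc (-1 : Fin d → ℝ) 1, 4 * ‖u x - lowPart u F x‖ ^ 2) :=
        (ofReal_integral_eq_lintegral_ofReal
          (hcu.continuousOn.integrableOn_compact isCompact_Icc)
          (Filter.Eventually.of_forall fun x => by positivity)).symm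
    _ = ∑' n, ENNReal.ofReal (4 * if n ∈ F then 0 else 2 ^ d * ‖fourierCoeffCube u n‖ ^ 2) := by
        rw [integral_const_mul, ← hhigh.tsum_eq, ENNReal.ofReal_tsum_of_nonneg _ hhigh.summable]
        intro n
        split_ifs <;> positivity
    _ = _ := by
        rw [withDensity_apply _ (Set.to_countable _).measurableSet,
          ← lintegral_indicator (Set.to_countable _).measurableSet, lintegral_count]
        refine tsum_congr fun n => ?_
        by_cases hn : n ∈ F
        · have := (hF n).1 hn
          rw [indicator_of_notMem (by simpa using this)]
          simp [hn]
        · have := mt (hF n).2 hn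
          rw [indicator_of_mem (by simpa using this)]
          simp [hn]

/-- Integration of `measure_superlevel_le` over the levels `t` with the weight `(p-2) t^{p-3}`, where
`p = 2d/(d-2s)`. -/
lemma lintegral_rpow_le {d : ℕ} (hd : 1 ≤ d) {s : ℝ} (hs : 0 < s) (hsd : s < (d : ℝ) / 2)
    {u : (Fin d → ℝ) → ℂ} (hu : Continuous u)
    (hsum : Summable (fun n : Fin d → ℤ => weight n ^ s * ‖fourierCoeffCube u n‖ ^ 2))
    {M : ℝ} (hMs : ∑' n : Fin d → ℤ, weight n ^ s * ‖fourierCoeffCube u n‖ ^ 2 ≤ M ^ 2)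
    {b : ℝ} (hb : 0 < b) (hbM : 8 * (d : ℝ) ^ 2 * 3 ^ d / (d - 2 * s) * M ^ 2 ≤ b ^ 2) :
    ∫⁻ x in Icc (-1 : Fin d → ℝ) 1, ENNReal.ofReal (‖u x‖ ^ (2 * (d : ℝ) / ((d : ℝ) - 2 * s))) ≤
      ENNReal.ofReal (4 * 2 ^ d * b ^ (2 * (d : ℝ) / ((d : ℝ) - 2 * s) - 2) * M ^ 2) := by
  have he : 0 < (d : ℝ) - 2 * s := by linarith
  set p := 2 * (d : ℝ) / ((d : ℝ) - 2 * s) with hp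
  have hq : 0 < p - 2 := by
    rw [hp, sub_pos, lt_div_iff₀ he]; linarith
  have hqe : ((d : ℝ) - 2 * s) / 4 * (p - 2) = s := by
    rw [hp]; field_simp; ring
  set ν := (volume.restrict (Icc (-1 : Fin d → ℝ) 1)).withDensity
    (fun x => ENNReal.ofReal (‖u x‖ ^ 2)) with hν
  set η := (Measure.count : Measure (Fin d → ℤ)).withDensity
    (fun n => ENNReal.ofReal (4 * (2 ^ d * ‖fourierCoeffCube u n‖ ^ 2))) with hη
  have hbw : ∀ n : Fin d → ℤ, 0 < b * weight n ^ (((d : ℝ) - 2 * s) / 4) := fun n =>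
    mul_pos hb (Real.rpow_pos_of_pos (weight_pos n) _)
  calc _ = ∫⁻ x, ENNReal.ofReal (‖u x‖ ^ (p - 2)) ∂ν := by
        rw [hν, lintegral_withDensity_eq_lintegral_mul _ (by fun_prop)
          ((hu.norm.measurable.pow_const _).ennreal_ofReal)]
        refine lintegral_congr fun x => ?_
        rw [Pi.mul_apply, ← ENNReal.ofReal_mul (by positivity), ← Real.rpow_natCast,
          ← Real.rpow_add_of_nonneg (norm_nonneg _) (by positivity) hq.le]
        congr 2
        push_cast; ring
    _ = ENNReal.ofReal (p - 2) * ∫⁻ t in Ioi 0, ν {x | t < ‖u x‖} *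
          ENNReal.ofReal (t ^ (p - 2 - 1)) :=
        lintegral_rpow_eq_lintegral_meas_lt_mul _ (Filter.Eventually.of_forall fun x => norm_nonneg _)
          hu.norm.measurable.aemeasurable hq
    _ ≤ ENNReal.ofReal (p - 2) * ∫⁻ t in Ioi 0,
          η {n | t < b * weight n ^ (((d : ℝ) - 2 * s) / 4)} * ENNReal.ofReal (t ^ (p - 2 - 1)) := by
        refine mul_le_mul_right (setLIntegral_mono' measurableSet_Ioi fun t ht => ?_) _
        exact mul_le_mul_left
          (measure_superlevel_le hd hs hsd hu hsum hMs hb hbM ht) _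
    _ = ∫⁻ n, ENNReal.ofReal ((b * weight n ^ (((d : ℝ) - 2 * s) / 4)) ^ (p - 2)) ∂η :=
        (lintegral_rpow_eq_lintegral_meas_lt_mul _ (Filter.Eventually.of_forall fun n => (hbw n).le)
          (measurable_of_countable _).aemeasurable hq).symm
    _ = ∑' n : Fin d → ℤ, ENNReal.ofReal (4 * 2 ^ d * b ^ (p - 2) *
          (weight n ^ s * ‖fourierCoeffCube u n‖ ^ 2)) := by
        rw [hη, lintegral_withDensity_eq_lintegral_mul _ (measurable_of_countable _)
          (measurable_of_countable _), lintegral_count]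
        refine tsum_congr fun n => ?_
        rw [Pi.mul_apply, ← ENNReal.ofReal_mul (by positivity), Real.mul_rpow hb.le
          (Real.rpow_nonneg (weight_pos n).le _), ← Real.rpow_mul (weight_pos n).le, hqe]
        congr 1
        ring
    _ = ENNReal.ofReal (4 * 2 ^ d * b ^ (p - 2) *
          ∑' n : Fin d → ℤ, weight n ^ s * ‖fourierCoeffCube u n‖ ^ 2) := by
        rw [← tsum_mul_left, ENNReal.ofReal_tsum_of_nonneg _ (hsum.mul_left _)]
        intro n
        have := Real.rpow_nonneg (weight_pos n).le s
        positivity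
    _ ≤ _ := by
        refine ENNReal.ofReal_le_ofReal ?_
        gcongr

/-- The estimate for any positive upper bound `M` of the Sobolev norm. -/
lemma sobolev_of_bound {d : ℕ} (hd : 1 ≤ d) {s : ℝ} (hs : 0 < s) (hsd : s < (d : ℝ) / 2)
    {u : (Fin d → ℝ) → ℂ} (hu : Continuous u)
    (hsum : Summable (fun n : Fin d → ℤ => weight n ^ s * ‖fourierCoeffCube u n‖ ^ 2))
    {M : ℝ} (hM : 0 < M)
    (hMs : ∑' n : Fin d → ℤ, weight n ^ s * ‖fourierCoeffCube u n‖ ^ 2 ≤ M ^ 2) :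
    (∫ x in Icc (-1 : Fin d → ℝ) 1,
        ‖u x‖ ^ (2 * (d : ℝ) / ((d : ℝ) - 2 * s))) ^ (((d : ℝ) - 2 * s) / (2 * (d : ℝ)))
      ≤ 4 * 2 ^ d * (4 * d * 3 ^ d) * Real.sqrt (2 * (d : ℝ) / ((d : ℝ) - 2 * s)) * M := by
  have he : 0 < (d : ℝ) - 2 * s := by linarith
  have hd' : (1 : ℝ) ≤ d := by exact_mod_cast hd
  have h3 : (1 : ℝ) ≤ 3 ^ d := one_le_pow₀ (by norm_num)
  have h2d : (1 : ℝ) ≤ 2 ^ d := one_le_pow₀ (by norm_num)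
  have hinv : ((d : ℝ) - 2 * s) / (2 * (d : ℝ)) = (2 * (d : ℝ) / ((d : ℝ) - 2 * s))⁻¹ := by
    rw [inv_div]
  rw [hinv]
  set p := 2 * (d : ℝ) / ((d : ℝ) - 2 * s) with hp
  have hp2 : 2 < p := by
    rw [hp, lt_div_iff₀ he]; linarith
  set c : ℝ := 4 * d * 3 ^ d * Real.sqrt p with hc
  have hsp : 1 ≤ Real.sqrt p := Real.one_le_sqrt.2 (by linarith)
  have hc1 : 1 ≤ c := by
    have : (1 : ℝ) ≤ 4 * d * 3 ^ d := by nlinarith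
    nlinarith
  have hbM : 8 * (d : ℝ) ^ 2 * 3 ^ d / (d - 2 * s) * M ^ 2 ≤ (c * M) ^ 2 := by
    rw [mul_pow]
    gcongr
    rw [hc, mul_pow, Real.sq_sqrt (by linarith), hp]
    have : (4 * (d : ℝ) * 3 ^ d) ^ 2 * (2 * d / (d - 2 * s)) =
      (32 * d ^ 3 * (3 ^ d) ^ 2) / (d - 2 * s) := by ring
    rw [this]
    gcongr 1
    have h5 : (d : ℝ) ^ 2 * 3 ^ d ≤ (d : ℝ) ^ 3 * (3 ^ d) ^ 2 := by
      gcongr ?_ * ?_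
      · exact pow_le_pow_right₀ hd' (by norm_num)
      · exact le_self_pow₀ h3 (by norm_num)
    nlinarith [show 0 ≤ (d : ℝ) ^ 2 * 3 ^ d by positivity]
  have hb : 0 < c * M := by positivity
  have hL := lintegral_rpow_le hd hs hsd hu hsum hMs hb hbM
  rw [← hp] at hL
  have hI : ∫ x in Icc (-1 : Fin d → ℝ) 1, ‖u x‖ ^ p ≤ 4 * 2 ^ d * (c * M) ^ (p - 2) * M ^ 2 := by
    rw [integral_eq_lintegral_of_nonneg_ae
      (Filter.Eventually.of_forall fun x => Real.rpow_nonneg (norm_nonneg _) _)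
      (hu.norm.measurable.pow_const _).aestronglyMeasurable]
    exact ENNReal.toReal_le_of_le_ofReal (by positivity) hL
  have hI2 : 4 * 2 ^ d * (c * M) ^ (p - 2) * M ^ 2 ≤ (4 * 2 ^ d * (c * M)) ^ p := by
    rw [Real.mul_rpow (by positivity) hb.le]
    have h6 : (4 * 2 ^ d : ℝ) ≤ (4 * 2 ^ d : ℝ) ^ p :=
      Real.self_le_rpow_of_one_le (by linarith) (by linarith)
    have h7 : (c * M) ^ p = (c * M) ^ (p - 2) * (c * M) ^ 2 := by
      rw [← Real.rpow_natCast, ← Real.rpow_add hb]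
      congr 1
      push_cast; ring
    have h8 : M ^ 2 ≤ (c * M) ^ 2 := by
      gcongr
      nlinarith
    rw [h7, mul_assoc]
    gcongr
  calc _ ≤ ((4 * 2 ^ d * (c * M)) ^ p) ^ p⁻¹ := by
        refine Real.rpow_le_rpow (integral_nonneg fun x => by positivity) (hI.trans hI2)
          (by positivity)
    _ = 4 * 2 ^ d * (c * M) := Real.rpow_rpow_inv (by positivity) (by positivity)
    _ = _ := by rw [hc]; ring

end Main

/-- **Sobolev embedding on the torus with explicit growth of the constant**: there is a
constant `C_d` depending only on `d` such that for `0 < s < d/2` and `p = 2d/(d−2s)`,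
every smooth `2`-periodic `u : ℝ^d → ℂ` satisfies
`‖u‖_{L^p([−1,1]^d)} ≤ C_d √p (∑_{n ∈ ℤ^d} (1+|n|²)^s |û_n|²)^{1/2}`. -/
theorem sobolev_embedding_torus_sqrt_p (d : ℕ) (hd : 1 ≤ d) :
    ∃ C : ℝ, ∀ s : ℝ, 0 < s → s < (d : ℝ) / 2 →
      ∀ u : (Fin d → ℝ) → ℂ, ContDiff ℝ (⊤ : ℕ∞) u →
        (∀ (x : Fin d → ℝ) (i : Fin d), u (Function.update x i (x i + 2)) = u x) →
        (∫ x in Icc (-1 : Fin d → ℝ) 1,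
            ‖u x‖ ^ (2 * (d : ℝ) / ((d : ℝ) - 2 * s))) ^ (((d : ℝ) - 2 * s) / (2 * (d : ℝ)))
          ≤ C * Real.sqrt (2 * (d : ℝ) / ((d : ℝ) - 2 * s)) *
            (∑' n : Fin d → ℤ,
              (1 + ∑ i, ((n i : ℝ)) ^ 2) ^ s * ‖fourierCoeffCube u n‖ ^ 2) ^ ((1:ℝ)/2) := by
  refine ⟨4 * 2 ^ d * (4 * d * 3 ^ d), fun s hs hsd u hu hper => ?_⟩
  have hsum : Summable (fun n : Fin d → ℤ => weight n ^ s * ‖fourierCoeffCube u n‖ ^ 2) :=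
    summable_sobolev s hu hper
  have hd' : (1 : ℝ) ≤ d := by exact_mod_cast hd
  have he : 0 < (d : ℝ) - 2 * s := by linarith
  change _ ≤ _ * (∑' n : Fin d → ℤ, weight n ^ s * ‖fourierCoeffCube u n‖ ^ 2) ^ ((1:ℝ)/2)
  set S := ∑' n : Fin d → ℤ, weight n ^ s * ‖fourierCoeffCube u n‖ ^ 2 with hS
  have hS0 : 0 ≤ S := tsum_nonneg fun n =>
    mul_nonneg (Real.rpow_nonneg (weight_pos n).le _) (sq_nonneg _)
  rw [← Real.sqrt_eq_rpow]
  set K : ℝ := 4 * 2 ^ d * (4 * d * 3 ^ d) * Real.sqrt (2 * (d : ℝ) / ((d : ℝ) - 2 * s)) with hK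
  have hK0 : 0 < K := by positivity
  -- the norm may vanish, so the estimate is applied to slightly larger bounds
  refine le_of_forall_pos_le_add fun δ hδ => ?_
  have hεpos : 0 < δ / K := by positivity
  have hMpos : 0 < Real.sqrt S + δ / K := by positivity
  have hMs : S ≤ (Real.sqrt S + δ / K) ^ 2 := by
    nlinarith [Real.sq_sqrt hS0, Real.sqrt_nonneg S]
  refine (sobolev_of_bound hd hs hsd hu.continuous hsum hMpos hMs).trans (le_of_eq ?_)
  rw [← hK]
  field_simp
end

section
/- Gagliardo–Nirenberg inequality with √p growth for zero-mean functions on the 2D torus: There exists a constant C such that for every real number p with 1 ≤ p < ∞ and every smooth function u : ℝ² → ℝ that is 2-periodic in each variable and satisfies ∫_{[−1,1]²} u(x) dx = 0, one has ‖u‖_{L^{2p}([−1,1]²)} ≤ C √p ‖u‖_{L²([−1,1]²)}^{1/p} ‖∇u‖_{L²([−1,1]²)}^{1−1/p}. -/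
open MeasureTheory Set

/-!
The proof compares `u` with its averages over squares of half-side `R` and then optimizes in `R`.
The norm of `ℝ × ℝ` is the sup norm, so `closedBall 0 1` is the period square `Q = [-1,1]²`.

Write `g = ‖Du‖`. The fundamental theorem of calculus on the segments `[x, x + R z]`, averaged over
`z ∈ Q`, gives `4 |u x| ≤ A x + D x`, where `A x = ∫_Q |u (x + R z)| dz` and
`D x = ∫_Q ∫_0^R g (x + s z) ds dz`.

* Cauchy–Schwarz bounds `A²` by `4 ∫_Q |u (x + R z)|² dz`, which is both at most `4 R⁻² ‖u‖₂²`
  pointwise and integrable with integral `16 ‖u‖₂²`; hence `∫ A^{2p} ≤ 4^{p+1} R^{-2(p-1)} ‖u‖₂^{2p}`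
  (`lintegral_average_pow_le`).
* Rescaling and Tonelli give `D x ≤ ∫_{‖y‖ ≤ R} ‖y‖⁻¹ g (x + y) dy`. The growth `√p` comes from the
  splitting `‖y‖⁻¹ = ‖y‖^{-(1 - 1/(2p))} ‖y‖^{-1/(2p)}` in the Cauchy–Schwarz inequality: the
  integral of `‖y‖^{-(2 - 1/p)}` over the ball is `8 p R^{1/p}`, and Hölder's inequality for the
  other factor leads to `∫ D^{2p} ≤ (8 p R^{1/p})^p · 8 R · (∫ g²)^p` (`lintegral_segment_pow_le`).

With `R = 1` and `p = 1` the second bound also yields the Poincaré inequality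
`‖u‖₂² ≤ 8 ‖∇u‖₂²` for zero-mean `u` (`poincare_square`). It makes the choice
`R² = ‖u‖₂² / (8 ‖∇u‖₂²) ≤ 1` admissible, for which both terms are of the form
`Cᵖ pᵖ ‖u‖₂² ‖∇u‖₂^{2(p-1)}` (`optimize_scale`); the `2p`-th root gives the claim with `C = √8`.
The estimates are carried out with `ℝ≥0∞`-valued integrals, so that no integrability is needed.
-/

open scoped ENNReal
open Metric (closedBall)

/-! ### The kernel `‖y‖⁻¹` in the plane -/

/-- Polar coordinates for the sup norm of the plane: the integral of `‖y‖^{-(2-b)}` is at most `(8 / b) R^b` over the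
ball of radius `R`. The factor `1 / b` is the source of the growth in `p`. -/
theorem lintegral_weight {R b : ℝ} (hR : 0 < R) (hb : 0 < b) :
    ∫⁻ y in closedBall (0 : ℝ × ℝ) R, (‖y‖ₑ⁻¹) ^ (2 - b) ≤ ENNReal.ofReal (8 / b * R ^ b) := by
  set f : ℝ → ℝ := (Iic R).indicator (fun t => t ^ (b - 2)) with hf
  have hdim : Module.finrank ℝ (ℝ × ℝ) = 2 := by simp
  have hsub : EqOn (fun y : ℝ => y ^ (Module.finrank ℝ (ℝ × ℝ) - 1) • f y)
      ((Ioc 0 R).indicator fun t => t ^ (b - 1)) (Ioi 0) := by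
    intro t ht
    have ht' : (0 : ℝ) < t := ht
    by_cases h : t ≤ R
    · simp only [hdim, hf, smul_eq_mul]
      rw [indicator_of_mem (by exact h), indicator_of_mem (by exact ⟨ht', h⟩)]
      rw [show b - 1 = 1 + (b - 2) by ring, Real.rpow_add ht']
      simp
    · simp only [hdim, hf, smul_eq_mul]
      rw [indicator_of_notMem (by exact h), indicator_of_notMem (by exact fun h' => h h'.2)]
      simp
  have hI : IntegrableOn (fun t : ℝ => t ^ (b - 1)) (Ioc 0 R) :=
    (intervalIntegral.intervalIntegrable_rpow' (by linarith)).1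
  have hint : Integrable (fun y : ℝ × ℝ => f ‖y‖) := by
    rw [integrable_fun_norm_addHaar volume (f := f), integrableOn_congr_fun hsub measurableSet_Ioi]
    exact ((integrable_indicator_iff measurableSet_Ioc).2 hI).integrableOn
  have hval : ∫ y : ℝ × ℝ, f ‖y‖ = 8 / b * R ^ b := by
    rw [integral_fun_norm_addHaar volume f, setIntegral_congr_fun measurableSet_Ioi hsub,
      setIntegral_indicator measurableSet_Ioc]
    have : Ioi (0 : ℝ) ∩ Ioc 0 R = Ioc 0 R := inter_eq_right.2 fun x hx => hx.1
    rw [this, ← intervalIntegral.integral_of_le hR.le, integral_rpow (Or.inl (by linarith)), hdim]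
    have hball : (volume : Measure (ℝ × ℝ)).real (Metric.ball 0 1) = 4 := by
      rw [show (0 : ℝ × ℝ) = (0, 0) from rfl, ← ball_prod_same, Measure.volume_eq_prod,
        measureReal_prod_prod]
      simp; norm_num
    rw [hball]
    simp [Real.zero_rpow hb.ne']
    ring
  have hnn : ∀ t, 0 ≤ t → 0 ≤ f t := fun t ht => by
    rw [hf]; exact indicator_apply_nonneg fun _ => Real.rpow_nonneg ht _
  rw [← hval, ofReal_integral_eq_lintegral_ofReal hint (Filter.Eventually.of_forall fun y => hnn _ (norm_nonneg _))]
  rw [← lintegral_indicator Metric.isClosed_closedBall.measurableSet]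
  apply lintegral_mono_ae
  have h0 : ∀ᵐ y : ℝ × ℝ, y ≠ 0 := by simp [ae_iff]
  filter_upwards [h0] with y hy
  have hy' : 0 < ‖y‖ := norm_pos_iff.2 hy
  by_cases h : ‖y‖ ≤ R
  · rw [indicator_of_mem (by simpa using h), hf, indicator_of_mem (by exact h)]
    rw [← ofReal_norm, ← ENNReal.ofReal_inv_of_pos hy',
      ENNReal.ofReal_rpow_of_pos (by positivity), Real.inv_rpow hy'.le, ← Real.rpow_neg hy'.le]
    simp
  · rw [indicator_of_notMem (by simpa using h)]
    simp

theorem lintegral_ball_scale {f : ℝ × ℝ → ℝ≥0∞} (hf : Measurable f) {s : ℝ} (hs : 0 < s) :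
    ∫⁻ z in closedBall (0 : ℝ × ℝ) 1, f (s • z) =
      ENNReal.ofReal (s ^ 2)⁻¹ * ∫⁻ y in closedBall (0 : ℝ × ℝ) s, f y := by
  have hm : Measurable fun z : ℝ × ℝ => s • z := by fun_prop
  have h1 := Measure.map_addHaar_smul (volume : Measure (ℝ × ℝ)) hs.ne'
  have h2 := lintegral_map (μ := volume) (hf.indicator (Metric.isClosed_closedBall (x := (0 : ℝ × ℝ)) (ε := s)).measurableSet) hm
  rw [h1, lintegral_smul_measure, lintegral_indicator Metric.isClosed_closedBall.measurableSet] at h2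
  have h3 : |(s ^ Module.finrank ℝ (ℝ × ℝ))⁻¹| = (s ^ 2)⁻¹ := by
    simp
  rw [h3, smul_eq_mul] at h2
  rw [h2, ← lintegral_indicator Metric.isClosed_closedBall.measurableSet]
  congr 1; ext z
  simp only [indicator, mem_closedBall_zero_iff, norm_smul, Real.norm_eq_abs, abs_of_pos hs]
  have : s * ‖z‖ ≤ s ↔ ‖z‖ ≤ 1 := by
    constructor
    · intro h; by_contra h'; push Not at h'; nlinarith
    · intro h; nlinarith
  simp only [this]

theorem lintegral_inv_sq {r : ℝ} (hr : 0 < r) (R : ℝ) :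
    ∫⁻ s in Ioc 0 R, (Ici r).indicator (fun s => ENNReal.ofReal (s ^ 2)⁻¹) s ≤ ENNReal.ofReal r⁻¹ := by
  have hI := integrableOn_Ioi_rpow_of_lt (a := -2) (by norm_num) hr
  have hv := integral_Ioi_rpow_of_lt (a := -2) (by norm_num) hr
  have : r⁻¹ = ∫ s in Ioi r, s ^ (-2 : ℝ) := by
    rw [hv]; norm_num [Real.rpow_neg_one]
  rw [this, ofReal_integral_eq_lintegral_ofReal hI]
  · refine (setLIntegral_le_lintegral _ _).trans ?_
    rw [lintegral_indicator measurableSet_Ici, setLIntegral_congr Ioi_ae_eq_Ici.symm]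
    refine setLIntegral_mono' measurableSet_Ioi fun s hs => ?_
    have : 0 < s := hr.trans hs
    rw [Real.rpow_neg this.le]; norm_num
  · filter_upwards [self_mem_ae_restrict measurableSet_Ioi] with s hs
    exact Real.rpow_nonneg (hr.trans hs).le _

/-- Integrating over the segments `{s z : 0 < s ≤ R}`, `z` in the unit ball, produces the kernel
`‖y‖⁻¹`, since `∫_{s ≥ ‖y‖} s⁻² ds = ‖y‖⁻¹`. -/
theorem lintegral_ball_segment_le {h : ℝ × ℝ → ℝ≥0∞} (hh : Measurable h) (R : ℝ) :
    ∫⁻ z in closedBall (0 : ℝ × ℝ) 1, ∫⁻ s in Ioc 0 R, h (s • z) ≤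
      ∫⁻ y in closedBall (0 : ℝ × ℝ) R, ‖y‖ₑ⁻¹ * h y := by
  rw [lintegral_lintegral_swap (by fun_prop)]
  have e1 : ∀ s ∈ Ioc 0 R, ∫⁻ z in closedBall (0 : ℝ × ℝ) 1, h (s • z) =
      ∫⁻ y in closedBall (0 : ℝ × ℝ) R,
        (Ici ‖y‖).indicator (fun s => ENNReal.ofReal (s ^ 2)⁻¹) s * h y := by
    intro s hs
    rw [lintegral_ball_scale hh hs.1, ← lintegral_const_mul _ hh,
      ← lintegral_indicator Metric.isClosed_closedBall.measurableSet,
      ← lintegral_indicator Metric.isClosed_closedBall.measurableSet]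
    congr 1; ext y
    have := hs.2
    by_cases h1 : ‖y‖ ≤ s
    · simp [indicator, h1, h1.trans this]
    · simp [indicator, h1]
  rw [setLIntegral_congr_fun measurableSet_Ioc e1, lintegral_lintegral_swap]
  · refine lintegral_mono_ae (ae_restrict_of_ae ?_)
    have h0 : ∀ᵐ y : ℝ × ℝ, y ≠ 0 := by simp [ae_iff]
    filter_upwards [h0] with y hy
    have hy' : 0 < ‖y‖ := norm_pos_iff.2 hy
    rw [lintegral_mul_const]
    · gcongr
      rw [← ofReal_norm, ← ENNReal.ofReal_inv_of_pos hy']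
      exact lintegral_inv_sq hy' R
    · exact Measurable.indicator (by fun_prop) measurableSet_Ici
  · refine Measurable.aemeasurable ?_
    refine Measurable.mul ?_ (by fun_prop)
    have : Measurable ({q : ℝ × (ℝ × ℝ) | ‖q.2‖ ≤ q.1}.indicator
        (fun q => ENNReal.ofReal (q.1 ^ 2)⁻¹)) :=
      Measurable.indicator (by fun_prop) (measurableSet_le (by fun_prop) (by fun_prop))
    exact this

/-! ### Integrals of periodic functions over the period square -/

theorem lintegral_periodic_shift {h : ℝ → ℝ≥0∞} (hm : Measurable h) (hp : ∀ x, h (x + 2) = h x)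
    (a : ℝ) : ∫⁻ x in Icc (-1 : ℝ) 1, h (x + a) = ∫⁻ x in Icc (-1 : ℝ) 1, h x := by
  have hper : Function.Periodic h 2 := hp
  rw [setLIntegral_congr Ioc_ae_eq_Icc.symm, setLIntegral_congr Ioc_ae_eq_Icc.symm]
  have h1 : ∫⁻ x in Ioc (-1 : ℝ) 1, h (x + a) = ∫⁻ x in Ioc (-1 + a) (-1 + a + 2), h x := by
    have := (measurePreserving_add_right (volume : Measure ℝ) a).setLIntegral_comp_preimage
      (s := Ioc (-1 + a) (-1 + a + 2)) measurableSet_Ioc hm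
    rw [← this]
    congr 2
    ext x; simp only [mem_Ioc, mem_preimage]
    constructor <;> rintro ⟨h1, h2⟩ <;> constructor <;> linarith
  have h2 : (Ioc (-1 : ℝ) 1) = Ioc (-1) (-1 + 2) := by norm_num
  rw [h1, h2]
  refine (isAddFundamentalDomain_Ioc two_pos _).setLIntegral_eq
    (isAddFundamentalDomain_Ioc two_pos _) h ?_
  rintro ⟨g, hg⟩ x
  obtain ⟨n, rfl⟩ := AddSubgroup.mem_zmultiples_iff.1 hg
  have := hper.zsmul n x
  rw [AddSubgroup.mk_vadd, vadd_eq_add, add_comm]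
  exact this

theorem closedBall_eq_square :
    closedBall (0 : ℝ × ℝ) 1 = Icc (-1 : ℝ) 1 ×ˢ Icc (-1 : ℝ) 1 := by
  rw [show (0 : ℝ × ℝ) = (0, 0) from rfl, ← closedBall_prod_same, Real.closedBall_eq_Icc]
  norm_num

/-- `2`-periodicity in each variable: such functions are the functions on the torus. -/
def DoublyPeriodic {α : Type*} (f : ℝ × ℝ → α) : Prop :=
  (∀ x y : ℝ, f (x + 2, y) = f (x, y)) ∧ ∀ x y : ℝ, f (x, y + 2) = f (x, y)

theorem DoublyPeriodic.comp {α β : Type*} {f : ℝ × ℝ → α} (hp : DoublyPeriodic f) (F : α → β) :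
    DoublyPeriodic (fun x => F (f x)) :=
  ⟨fun x y => congrArg F (hp.1 x y), fun x y => congrArg F (hp.2 x y)⟩

theorem setLIntegral_square {f : ℝ × ℝ → ℝ≥0∞} (hf : Measurable f) :
    ∫⁻ x in closedBall (0 : ℝ × ℝ) 1, f x =
      ∫⁻ x in Icc (-1 : ℝ) 1, ∫⁻ y in Icc (-1 : ℝ) 1, f (x, y) := by
  rw [closedBall_eq_square, Measure.volume_eq_prod, ← Measure.prod_restrict,
    lintegral_prod _ hf.aemeasurable]

theorem DoublyPeriodic.lintegral_shift {f : ℝ × ℝ → ℝ≥0∞} (hp : DoublyPeriodic f)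
    (hf : Measurable f) (a : ℝ × ℝ) :
    ∫⁻ x in closedBall (0 : ℝ × ℝ) 1, f (x + a) = ∫⁻ x in closedBall (0 : ℝ × ℝ) 1, f x := by
  rw [setLIntegral_square (f := fun x => f (x + a)) (by fun_prop), setLIntegral_square hf]
  have e1 : ∀ x : ℝ, ∫⁻ y in Icc (-1 : ℝ) 1, f ((x, y) + a) =
      ∫⁻ y in Icc (-1 : ℝ) 1, f (x + a.1, y) := fun x =>
    lintegral_periodic_shift (h := fun y => f (x + a.1, y)) (by fun_prop) (fun y => hp.2 _ _) a.2
  simp_rw [e1]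
  refine lintegral_periodic_shift (h := fun x => ∫⁻ y in Icc (-1 : ℝ) 1, f (x, y)) ?_ ?_ a.1
  · exact hf.lintegral_prod_right'
  · intro x; simp_rw [hp.1]

theorem DoublyPeriodic.integral_shift {u : ℝ × ℝ → ℝ} (hp : DoublyPeriodic u)
    (hu : Continuous u) (a : ℝ × ℝ) :
    ∫ x in closedBall (0 : ℝ × ℝ) 1, u (a + x) =
      ∫ x in Icc (-1 : ℝ) 1, ∫ y in Icc (-1 : ℝ) 1, u (x, y) := by
  have hK : IsCompact (Icc (-1 : ℝ) 1 ×ˢ Icc (-1 : ℝ) 1) := isCompact_Icc.prod isCompact_Icc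
  have h1D : ∀ (h : ℝ → ℝ), (∀ x, h (x + 2) = h x) → ∀ b : ℝ,
      ∫ x in Icc (-1 : ℝ) 1, h (b + x) = ∫ x in Icc (-1 : ℝ) 1, h x := by
    intro h hh b
    have hper : Function.Periodic h 2 := hh
    simp_rw [integral_Icc_eq_integral_Ioc, ← intervalIntegral.integral_of_le
      (show (-1 : ℝ) ≤ 1 by norm_num), intervalIntegral.integral_comp_add_left h]
    have := hper.intervalIntegral_add_eq (b + -1) (-1)
    convert this using 2 <;> ring
  rw [closedBall_eq_square, Measure.volume_eq_prod, setIntegral_prod]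
  · have e1 : ∀ x : ℝ, ∫ y in Icc (-1 : ℝ) 1, u (a + (x, y)) =
      ∫ y in Icc (-1 : ℝ) 1, u (a.1 + x, y) := fun x =>
      h1D (fun y => u (a.1 + x, y)) (fun y => hp.2 _ _) a.2
    simp_rw [e1]
    exact h1D (fun x => ∫ y in Icc (-1 : ℝ) 1, u (x, y)) (fun x => by simp_rw [hp.1]) a.1
  · rw [← Measure.volume_eq_prod]
    exact (by fun_prop : Continuous fun x => u (a + x)).continuousOn.integrableOn_compact hK

/-! ### Averages and segment integrals -/

theorem enorm_sub_le_segment {u : ℝ × ℝ → ℝ} (hu : ContDiff ℝ 1 u) (x : ℝ × ℝ) {z : ℝ × ℝ}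
    (hz : ‖z‖ ≤ 1) {R : ℝ} (hR : 0 ≤ R) :
    ‖u (x + R • z) - u x‖ₑ ≤ ∫⁻ s in Ioc 0 R, ‖fderiv ℝ u (x + s • z)‖ₑ := by
  have hd : Continuous (fderiv ℝ u) := hu.continuous_fderiv (by norm_num)
  have hderiv : ∀ s : ℝ, HasDerivAt (fun s : ℝ => u (x + s • z)) (fderiv ℝ u (x + s • z) z) s := by
    intro s
    have h1 : HasDerivAt (fun s : ℝ => x + s • z) z s := by
      simpa using ((hasDerivAt_id s).smul_const z).const_add x
    exact ((hu.differentiable (by norm_num)) _).hasFDerivAt.comp_hasDerivAt s h1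
  have hc : Continuous fun s : ℝ => fderiv ℝ u (x + s • z) z := by fun_prop
  have h := intervalIntegral.integral_eq_sub_of_hasDerivAt (a := 0) (b := R)
    (fun s _ => hderiv s) (hc.intervalIntegrable _ _)
  simp only [zero_smul, add_zero] at h
  rw [← h, intervalIntegral.integral_of_le hR]
  refine (enorm_integral_le_lintegral_enorm _).trans (lintegral_mono fun s => ?_)
  rw [← ofReal_norm, ← ofReal_norm]
  refine ENNReal.ofReal_le_ofReal ?_
  calc _ ≤ ‖fderiv ℝ u (x + s • z)‖ * ‖z‖ := ContinuousLinearMap.le_opNorm _ _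
    _ ≤ _ := mul_le_of_le_one_right (norm_nonneg _) hz

theorem volume_square : volume (closedBall (0 : ℝ × ℝ) 1) = 4 := by
  rw [closedBall_eq_square, Measure.volume_eq_prod, Measure.prod_prod]
  simp [Real.volume_Icc]
  rw [← ENNReal.ofReal_mul (by norm_num)]; norm_num

/-- A ball of radius at most `1` is contained in one translated period square. -/
theorem setLIntegral_ball_le {f : ℝ × ℝ → ℝ≥0∞} (hp : DoublyPeriodic f)
    (hf : Measurable f) {R : ℝ} (hR : R ≤ 1) (x : ℝ × ℝ) :
    ∫⁻ y in closedBall (0 : ℝ × ℝ) R, f (x + y) ≤ ∫⁻ y in closedBall (0 : ℝ × ℝ) 1, f y := by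
  rw [← hp.lintegral_shift hf x]
  simp_rw [add_comm x]
  exact lintegral_mono_set (Metric.closedBall_subset_closedBall hR)

/-- Integrals of averages at scale `R`: an `L^∞` bound for the average of `f²`, interpolated with the
`L¹` bound. -/
theorem lintegral_average_pow_le {f : ℝ × ℝ → ℝ≥0∞} (hp : DoublyPeriodic f)
    (hf : Measurable f) {R : ℝ} (hR0 : 0 < R) (hR : R ≤ 1) {p : ℝ} (h1p : 1 ≤ p) :
    ∫⁻ x in closedBall (0 : ℝ × ℝ) 1, (∫⁻ z in closedBall (0 : ℝ × ℝ) 1, f (x + R • z)) ^ (2 * p) ≤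
      4 ^ (p + 1) * ENNReal.ofReal (R ^ 2)⁻¹ ^ (p - 1) *
        (∫⁻ x in closedBall (0 : ℝ × ℝ) 1, f x ^ (2 : ℝ)) ^ p := by
  set U := ∫⁻ x in closedBall (0 : ℝ × ℝ) 1, f x ^ (2 : ℝ) with hU
  set M : ℝ × ℝ → ℝ≥0∞ := fun x => ∫⁻ z in closedBall (0 : ℝ × ℝ) 1, f (x + R • z) ^ (2 : ℝ) with hM
  have hf2 : Measurable fun x => f x ^ (2 : ℝ) := by fun_prop
  have hA : ∀ x, (∫⁻ z in closedBall (0 : ℝ × ℝ) 1, f (x + R • z)) ≤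
      M x ^ (1 / 2 : ℝ) * 4 ^ (1 / 2 : ℝ) := by
    intro x
    have := ENNReal.lintegral_mul_norm_pow_le (μ := volume.restrict (closedBall (0 : ℝ × ℝ) 1))
      (f := fun z => f (x + R • z) ^ (2 : ℝ)) (g := fun _ => 1) (by fun_prop) (by fun_prop)
      (p := 1 / 2) (q := 1 / 2) (by norm_num) (by norm_num) (by norm_num)
    have e : ∀ y : ℝ≥0∞, (y ^ (2 : ℝ)) ^ (1 / 2 : ℝ) = y := fun y => by
      rw [← ENNReal.rpow_mul]; norm_num
    simp only [e, ENNReal.one_rpow, mul_one, lintegral_const, one_mul, Measure.restrict_apply_univ,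
      volume_square] at this
    exact this
  have hMU : ∀ x, M x ≤ ENNReal.ofReal (R ^ 2)⁻¹ * U := by
    intro x
    rw [hM]
    simp only
    rw [lintegral_ball_scale (f := fun y => f (x + y) ^ (2 : ℝ)) (by fun_prop) hR0]
    gcongr
    exact setLIntegral_ball_le (hp.comp (· ^ (2 : ℝ))) hf2 hR x
  have hpt : ∀ x, (∫⁻ z in closedBall (0 : ℝ × ℝ) 1, f (x + R • z)) ^ (2 * p) ≤
      (4 ^ p * (ENNReal.ofReal (R ^ 2)⁻¹ * U) ^ (p - 1)) * M x := by
    intro x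
    calc _ ≤ (M x ^ (1 / 2 : ℝ) * 4 ^ (1 / 2 : ℝ)) ^ (2 * p) := by gcongr; exact hA x
      _ = 4 ^ p * (M x ^ (p - 1) * M x ^ (1 : ℝ)) := by
        rw [ENNReal.mul_rpow_of_nonneg _ _ (by positivity), ← ENNReal.rpow_mul, ← ENNReal.rpow_mul,
          ← ENNReal.rpow_add_of_nonneg _ _ (by linarith) (by norm_num), mul_comm]
        congr 2 <;> ring
      _ ≤ 4 ^ p * ((ENNReal.ofReal (R ^ 2)⁻¹ * U) ^ (p - 1) * M x ^ (1 : ℝ)) := by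
        gcongr
        exact hMU x
      _ = _ := by rw [ENNReal.rpow_one, mul_assoc]
  have hMm : Measurable M := by
    refine Measurable.lintegral_prod_right' (f := fun q : (ℝ × ℝ) × (ℝ × ℝ) => f (q.1 + R • q.2) ^ (2 : ℝ)) ?_
    fun_prop
  have hMint : ∫⁻ x in closedBall (0 : ℝ × ℝ) 1, M x = 4 * U := by
    rw [hM, lintegral_lintegral_swap (by fun_prop)]
    have : ∀ z, ∫⁻ x in closedBall (0 : ℝ × ℝ) 1, f (x + R • z) ^ (2 : ℝ) = U := fun z =>
      (hp.comp (· ^ (2 : ℝ))).lintegral_shift hf2 _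
    simp_rw [this]
    simp [volume_square, mul_comm]
  calc _ ≤ ∫⁻ x in closedBall (0 : ℝ × ℝ) 1,
        (4 ^ p * (ENNReal.ofReal (R ^ 2)⁻¹ * U) ^ (p - 1)) * M x := lintegral_mono hpt
    _ = (4 ^ p * (ENNReal.ofReal (R ^ 2)⁻¹ * U) ^ (p - 1)) * (4 * U) := by
      rw [lintegral_const_mul _ hMm, hMint]
    _ = (4 ^ p * 4 ^ (1 : ℝ)) * ENNReal.ofReal (R ^ 2)⁻¹ ^ (p - 1) * (U ^ (p - 1) * U ^ (1 : ℝ)) := by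
      rw [ENNReal.mul_rpow_of_nonneg _ _ (by linarith)]
      simp only [ENNReal.rpow_one]; ring
    _ = _ := by
      rw [← ENNReal.rpow_add_of_nonneg _ _ (by linarith) (by norm_num),
        ← ENNReal.rpow_add_of_nonneg _ _ (by linarith) (by norm_num)]
      congr 2; ring

/-- The Young-type inequality behind the `√p` growth: the integral operator with kernel
`‖y‖⁻¹ 1_{‖y‖ ≤ R}` maps `L²` to `L^{2p}` with norm of order `√p R^{1/p}`. -/
theorem lintegral_segment_pow_le {g : ℝ × ℝ → ℝ≥0∞} (hp : DoublyPeriodic g)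
    (hg : Measurable g) {R : ℝ} (hR0 : 0 < R) (hR : R ≤ 1) {p : ℝ} (h1p : 1 ≤ p) :
    ∫⁻ x in closedBall (0 : ℝ × ℝ) 1,
      (∫⁻ z in closedBall (0 : ℝ × ℝ) 1, ∫⁻ s in Ioc 0 R, g (x + s • z)) ^ (2 * p) ≤
      ENNReal.ofReal (8 * p * R ^ (1 / p)) ^ p * ENNReal.ofReal (8 * R) *
        (∫⁻ x in closedBall (0 : ℝ × ℝ) 1, g x ^ (2 : ℝ)) ^ p := by
  set G := ∫⁻ x in closedBall (0 : ℝ × ℝ) 1, g x ^ (2 : ℝ) with hG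
  have hp0 : 0 < p := by linarith
  have hip : 1 / p ≤ 1 := by rw [div_le_one hp0]; exact h1p
  have hip0 : 0 < 1 / p := by positivity
  have hg2 : Measurable fun x => g x ^ (2 : ℝ) := by fun_prop
  set P := ENNReal.ofReal (8 * p * R ^ (1 / p)) with hP
  set N : ℝ × ℝ → ℝ≥0∞ := fun x =>
    ∫⁻ y in closedBall (0 : ℝ × ℝ) R, ‖y‖ₑ⁻¹ * g (x + y) ^ (2 : ℝ) with hN
  have hCS : ∀ x, (∫⁻ z in closedBall (0 : ℝ × ℝ) 1, ∫⁻ s in Ioc 0 R, g (x + s • z)) ≤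
      P ^ (1 / 2 : ℝ) * (N x ^ (1 / p) * G ^ (1 - 1 / p)) ^ (1 / 2 : ℝ) := by
    intro x
    refine (lintegral_ball_segment_le (h := fun y => g (x + y)) (by fun_prop) R).trans ?_
    have h1 := ENNReal.lintegral_mul_norm_pow_le (μ := volume.restrict (closedBall (0 : ℝ × ℝ) R))
      (f := fun y => ‖y‖ₑ⁻¹ ^ (2 - 1 / p)) (g := fun y => ‖y‖ₑ⁻¹ ^ (1 / p) * g (x + y) ^ (2 : ℝ))
      (by fun_prop) (by fun_prop)
      (p := 1 / 2) (q := 1 / 2) (by norm_num) (by norm_num) (by norm_num)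
    have e1 : ∀ y : ℝ × ℝ, (‖y‖ₑ⁻¹ ^ (2 - 1 / p)) ^ (1 / 2 : ℝ) *
        (‖y‖ₑ⁻¹ ^ (1 / p) * g (x + y) ^ (2 : ℝ)) ^ (1 / 2 : ℝ) = ‖y‖ₑ⁻¹ * g (x + y) := by
      intro y
      rw [ENNReal.mul_rpow_of_nonneg _ _ (by norm_num), ← ENNReal.rpow_mul, ← ENNReal.rpow_mul,
        ← ENNReal.rpow_mul, ← mul_assoc,
        ← ENNReal.rpow_add_of_nonneg _ _ (by nlinarith) (by positivity)]
      have a1 : (2 - 1 / p) * (1 / 2) + 1 / p * (1 / 2) = 1 := by ring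
      rw [a1]; norm_num
    simp_rw [e1] at h1
    refine h1.trans ?_
    have h2 := ENNReal.lintegral_mul_norm_pow_le (μ := volume.restrict (closedBall (0 : ℝ × ℝ) R))
      (f := fun y => ‖y‖ₑ⁻¹ * g (x + y) ^ (2 : ℝ)) (g := fun y => g (x + y) ^ (2 : ℝ))
      (by fun_prop) (by fun_prop)
      (p := 1 / p) (q := 1 - 1 / p) hip0.le (by linarith) (by ring)
    have e2 : ∀ y : ℝ × ℝ, (‖y‖ₑ⁻¹ * g (x + y) ^ (2 : ℝ)) ^ (1 / p) *
        (g (x + y) ^ (2 : ℝ)) ^ (1 - 1 / p) = ‖y‖ₑ⁻¹ ^ (1 / p) * g (x + y) ^ (2 : ℝ) := by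
      intro y
      rw [ENNReal.mul_rpow_of_nonneg _ _ hip0.le, mul_assoc,
        ← ENNReal.rpow_add_of_nonneg _ _ hip0.le (by linarith)]
      rw [show 1 / p + (1 - 1 / p) = 1 by ring, ENNReal.rpow_one]
    simp_rw [e2] at h2
    gcongr
    · have := lintegral_weight hR0 hip0
      rw [hP]
      convert this using 3
      field_simp
    · refine h2.trans ?_
      gcongr
      exact setLIntegral_ball_le (hp.comp (· ^ (2 : ℝ))) hg2 hR x
  have hpt : ∀ x, (∫⁻ z in closedBall (0 : ℝ × ℝ) 1, ∫⁻ s in Ioc 0 R, g (x + s • z)) ^ (2 * p) ≤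
      P ^ p * G ^ (p - 1) * N x := by
    intro x
    calc _ ≤ (P ^ (1 / 2 : ℝ) * (N x ^ (1 / p) * G ^ (1 - 1 / p)) ^ (1 / 2 : ℝ)) ^ (2 * p) := by
          gcongr; exact hCS x
      _ = _ := by
        rw [ENNReal.mul_rpow_of_nonneg _ _ (by positivity), ← ENNReal.rpow_mul, ← ENNReal.rpow_mul,
          show (1 / 2 : ℝ) * (2 * p) = p by ring, ENNReal.mul_rpow_of_nonneg _ _ (by positivity),
          ← ENNReal.rpow_mul, ← ENNReal.rpow_mul, show 1 / p * p = 1 by field_simp,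
          show (1 - 1 / p) * p = p - 1 by field_simp, ENNReal.rpow_one]
        ring
  have hNm : Measurable N := by
    refine Measurable.lintegral_prod_right' (f := fun q : (ℝ × ℝ) × (ℝ × ℝ) => ‖q.2‖ₑ⁻¹ * g (q.1 + q.2) ^ (2 : ℝ)) ?_
    fun_prop
  have hNint : ∫⁻ x in closedBall (0 : ℝ × ℝ) 1, N x ≤ ENNReal.ofReal (8 * R) * G := by
    rw [hN, lintegral_lintegral_swap (by fun_prop)]
    have : ∀ y, ∫⁻ x in closedBall (0 : ℝ × ℝ) 1, ‖y‖ₑ⁻¹ * g (x + y) ^ (2 : ℝ) = ‖y‖ₑ⁻¹ * G :=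
      fun y => by
        rw [lintegral_const_mul _ (by fun_prop)]
        congr 1
        exact (hp.comp (· ^ (2 : ℝ))).lintegral_shift hg2 _
    simp_rw [this]
    rw [lintegral_mul_const _ (by fun_prop)]
    gcongr
    have := lintegral_weight hR0 one_pos
    rw [show (2 : ℝ) - 1 = 1 by norm_num, Real.rpow_one, div_one] at this
    simpa only [ENNReal.rpow_one] using this
  calc _ ≤ ∫⁻ x in closedBall (0 : ℝ × ℝ) 1, P ^ p * G ^ (p - 1) * N x := lintegral_mono hpt
    _ = P ^ p * G ^ (p - 1) * ∫⁻ x in closedBall (0 : ℝ × ℝ) 1, N x := lintegral_const_mul _ hNm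
    _ ≤ P ^ p * G ^ (p - 1) * (ENNReal.ofReal (8 * R) * G) := by gcongr
    _ = P ^ p * ENNReal.ofReal (8 * R) * (G ^ (p - 1) * G ^ (1 : ℝ)) := by
      rw [ENNReal.rpow_one]; ring
    _ = _ := by
      rw [← ENNReal.rpow_add_of_nonneg _ _ (by linarith) (by norm_num)]
      congr 2; ring

/-! ### Passage between real and extended nonnegative integrals -/

theorem lintegral_square_eq_ofReal {f : ℝ × ℝ → ℝ} (hf : Continuous f) (h0 : ∀ x, 0 ≤ f x) :
    ∫⁻ x in closedBall (0 : ℝ × ℝ) 1, ENNReal.ofReal (f x) =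
      ENNReal.ofReal (∫ x in Icc (-1 : ℝ) 1, ∫ y in Icc (-1 : ℝ) 1, f (x, y)) := by
  have hK : IsCompact (Icc (-1 : ℝ) 1 ×ˢ Icc (-1 : ℝ) 1) := isCompact_Icc.prod isCompact_Icc
  have hi : IntegrableOn f (Icc (-1 : ℝ) 1 ×ˢ Icc (-1 : ℝ) 1) volume :=
    hf.continuousOn.integrableOn_compact hK
  rw [closedBall_eq_square, ← ofReal_integral_eq_lintegral_ofReal hi
    (Filter.Eventually.of_forall h0), Measure.volume_eq_prod, setIntegral_prod _
      (by rwa [← Measure.volume_eq_prod])]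

theorem integral_square_nonneg {f : ℝ × ℝ → ℝ} (h0 : ∀ x, 0 ≤ f x) :
    0 ≤ ∫ x in Icc (-1 : ℝ) 1, ∫ y in Icc (-1 : ℝ) 1, f (x, y) :=
  integral_nonneg fun x => integral_nonneg fun y => h0 (x, y)

theorem DoublyPeriodic.fderiv {u : ℝ × ℝ → ℝ} (hp : DoublyPeriodic u) :
    DoublyPeriodic (fderiv ℝ u) := by
  constructor
  · intro x y
    have h : (fun q : ℝ × ℝ => u (q + (2, 0))) = u := by
      ext ⟨a, b⟩; simpa using hp.1 a b
    have := fderiv_comp_add_right (𝕜 := ℝ) (f := u) (x := (x, y)) (2, 0)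
    rw [h] at this
    simpa using this.symm
  · intro x y
    have h : (fun q : ℝ × ℝ => u (q + (0, 2))) = u := by
      ext ⟨a, b⟩; simpa using hp.2 a b
    have := fderiv_comp_add_right (𝕜 := ℝ) (f := u) (x := (x, y)) (0, 2)
    rw [h] at this
    simpa using this.symm

theorem deriv_fst_eq {u : ℝ × ℝ → ℝ} (hu : ContDiff ℝ 1 u) (x y : ℝ) :
    deriv (fun t => u (t, y)) x = fderiv ℝ u (x, y) (1, 0) := by
  have h1 : HasDerivAt (fun t : ℝ => (t, y)) ((1 : ℝ), (0 : ℝ)) x :=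
    (hasDerivAt_id x).prodMk (hasDerivAt_const x y)
  exact (((hu.differentiable (by norm_num)) (x, y)).hasFDerivAt.comp_hasDerivAt x h1).deriv

theorem deriv_snd_eq {u : ℝ × ℝ → ℝ} (hu : ContDiff ℝ 1 u) (x y : ℝ) :
    deriv (fun t => u (x, t)) y = fderiv ℝ u (x, y) (0, 1) := by
  have h1 : HasDerivAt (fun t : ℝ => (x, t)) ((0 : ℝ), (1 : ℝ)) y :=
    (hasDerivAt_const y x).prodMk (hasDerivAt_id y)
  exact (((hu.differentiable (by norm_num)) (x, y)).hasFDerivAt.comp_hasDerivAt y h1).deriv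

/-- For the sup norm on `ℝ × ℝ` the operator norm of `L` is at most `|L (1,0)| + |L (0,1)|`. -/
theorem sq_norm_le_sq_partials (L : ℝ × ℝ →L[ℝ] ℝ) :
    ‖L‖ ^ 2 ≤ 2 * ((L (1, 0)) ^ 2 + (L (0, 1)) ^ 2) := by
  have h : ‖L‖ ≤ |L (1, 0)| + |L (0, 1)| := by
    refine L.opNorm_le_bound (by positivity) ?_
    rintro ⟨a, b⟩
    have e : L (a, b) = a * L (1, 0) + b * L (0, 1) := by
      have : ((a, b) : ℝ × ℝ) = a • (1, 0) + b • (0, 1) := by simp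
      rw [this, map_add, map_smul, map_smul]; rfl
    have ha : |a| ≤ ‖((a, b) : ℝ × ℝ)‖ := norm_fst_le (a, b)
    have hb : |b| ≤ ‖((a, b) : ℝ × ℝ)‖ := norm_snd_le (a, b)
    rw [e, Real.norm_eq_abs]
    calc _ ≤ |a * L (1, 0)| + |b * L (0, 1)| := abs_add_le _ _
      _ = |a| * |L (1, 0)| + |b| * |L (0, 1)| := by rw [abs_mul, abs_mul]
      _ ≤ ‖((a, b) : ℝ × ℝ)‖ * |L (1, 0)| + ‖((a, b) : ℝ × ℝ)‖ * |L (0, 1)| := by gcongr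
      _ = _ := by ring
  calc ‖L‖ ^ 2 ≤ (|L (1, 0)| + |L (0, 1)|) ^ 2 := by gcongr
    _ ≤ 2 * (|L (1, 0)| ^ 2 + |L (0, 1)| ^ 2) := add_sq_le
    _ = _ := by simp

theorem lintegral_fderiv_sq_le {u : ℝ × ℝ → ℝ} (hu : ContDiff ℝ 1 u) :
    ∫⁻ x in closedBall (0 : ℝ × ℝ) 1, ‖fderiv ℝ u x‖ₑ ^ (2 : ℝ) ≤
      ENNReal.ofReal (2 * ∫ x in Icc (-1:ℝ) 1, ∫ y in Icc (-1:ℝ) 1,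
              ((deriv (fun t => u (t, y)) x) ^ 2 + (deriv (fun t => u (x, t)) y) ^ 2)) := by
  have hd : Continuous (fderiv ℝ u) := hu.continuous_fderiv (by norm_num)
  have h := lintegral_square_eq_ofReal
    (f := fun q => 2 * ((fderiv ℝ u q (1, 0)) ^ 2 + (fderiv ℝ u q (0, 1)) ^ 2)) (by fun_prop)
    (fun q => by positivity)
  simp_rw [deriv_fst_eq hu, deriv_snd_eq hu]
  simp_rw [integral_const_mul] at h
  rw [← h]
  refine lintegral_mono fun q => ?_
  rw [← ofReal_norm, ENNReal.ofReal_rpow_of_nonneg (norm_nonneg _) (by norm_num)]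
  refine ENNReal.ofReal_le_ofReal ?_
  simpa using sq_norm_le_sq_partials (fderiv ℝ u q)

theorem lintegral_enorm_rpow {u : ℝ × ℝ → ℝ} (hu : Continuous u) {r : ℝ} (hr : 0 ≤ r) :
    ∫⁻ x in closedBall (0 : ℝ × ℝ) 1, ‖u x‖ₑ ^ r =
      ENNReal.ofReal (∫ x in Icc (-1 : ℝ) 1, ∫ y in Icc (-1 : ℝ) 1, |u (x, y)| ^ r) := by
  rw [← lintegral_square_eq_ofReal (f := fun q => |u q| ^ r)
    (hu.abs.rpow_const fun _ => Or.inr hr) (fun q => by positivity)]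
  refine lintegral_congr fun q => ?_
  rw [← ofReal_norm, ENNReal.ofReal_rpow_of_nonneg (norm_nonneg _) hr, Real.norm_eq_abs]

/-! ### Poincaré inequality and the optimal scale -/

/-- Poincaré inequality on the torus: for zero-mean `u` the average of `u` over a translated period
square vanishes, so `4 |u x|` is bounded by the segment integrals with `R = 1`. -/
theorem poincare_square {u : ℝ × ℝ → ℝ} (hu : ContDiff ℝ 1 u) (hp : DoublyPeriodic u)
    (h0 : (∫ x in Icc (-1:ℝ) 1, ∫ y in Icc (-1:ℝ) 1, u (x, y)) = 0) :
    (∫ x in Icc (-1:ℝ) 1, ∫ y in Icc (-1:ℝ) 1, (u (x, y)) ^ 2) ≤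
      8 * ∫ x in Icc (-1:ℝ) 1, ∫ y in Icc (-1:ℝ) 1,
              ((deriv (fun t => u (t, y)) x) ^ 2 + (deriv (fun t => u (x, t)) y) ^ 2) := by
  have hd : Continuous (fderiv ℝ u) := hu.continuous_fderiv (by norm_num)
  have hpt : ∀ x, 4 * ‖u x‖ₑ ≤
      ∫⁻ z in closedBall (0 : ℝ × ℝ) 1, ∫⁻ s in Ioc (0 : ℝ) 1, ‖fderiv ℝ u (x + s • z)‖ₑ := by
    intro x
    have hint : IntegrableOn (fun z => u (x + z)) (closedBall (0 : ℝ × ℝ) 1) :=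
      (hu.continuous.comp (by fun_prop : Continuous fun z => x + z)).continuousOn.integrableOn_compact
        (isCompact_closedBall _ _)
    have hi : ∫ z in closedBall (0 : ℝ × ℝ) 1, (u (x + z) - u x) = - (4 * u x) := by
      have hconst : IntegrableOn (fun _ => u x) (closedBall (0 : ℝ × ℝ) 1) :=
        continuousOn_const.integrableOn_compact (isCompact_closedBall _ _)
      rw [integral_sub hint hconst, hp.integral_shift hu.continuous, h0]
      simp [Measure.real, volume_square]
    have he : 4 * ‖u x‖ₑ = ‖∫ z in closedBall (0 : ℝ × ℝ) 1, (u (x + z) - u x)‖ₑ := by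
      rw [hi, enorm_neg, enorm_mul]
      congr 1
      rw [← ofReal_norm]; norm_num
    rw [he]
    refine (enorm_integral_le_lintegral_enorm _).trans ?_
    refine setLIntegral_mono' Metric.isClosed_closedBall.measurableSet fun z hz => ?_
    have := enorm_sub_le_segment hu x (z := z) (by simpa using hz) (R := 1) zero_le_one
    simpa using this
  have hD := lintegral_segment_pow_le (g := fun x => ‖fderiv ℝ u x‖ₑ) (hp.fderiv.comp _)
    (by fun_prop) one_pos le_rfl le_rfl
  have h2 : ∫⁻ x in closedBall (0 : ℝ × ℝ) 1, (4 * ‖u x‖ₑ) ^ (2 * 1 : ℝ) ≤ _ :=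
    (lintegral_mono fun x => ENNReal.rpow_le_rpow (hpt x) (by norm_num)).trans hD
  set V := ∫ x in Icc (-1:ℝ) 1, ∫ y in Icc (-1:ℝ) 1,
              ((deriv (fun t => u (t, y)) x) ^ 2 + (deriv (fun t => u (x, t)) y) ^ 2) with hV
  have hV0 : 0 ≤ V := integral_nonneg fun x => integral_nonneg fun y => by positivity
  have hG := lintegral_fderiv_sq_le hu
  rw [← hV] at hG
  have e : ∀ x, (4 * ‖u x‖ₑ) ^ (2 * 1 : ℝ) = ENNReal.ofReal 16 * ‖u x‖ₑ ^ (2 : ℝ) := by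
    intro x
    rw [mul_one, ENNReal.mul_rpow_of_nonneg _ _ (by norm_num)]
    congr 1
    norm_num
  have hc : Continuous u := hu.continuous
  simp_rw [e] at h2
  rw [lintegral_const_mul _ (by fun_prop), lintegral_enorm_rpow hc (by norm_num),
    ← ENNReal.ofReal_mul (by norm_num)] at h2
  have h3 := h2.trans (mul_le_mul_right (ENNReal.rpow_le_rpow hG zero_le_one) _)
  rw [ENNReal.rpow_one, ENNReal.rpow_one, ← ENNReal.ofReal_mul (by positivity),
    ← ENNReal.ofReal_mul (by positivity), ENNReal.ofReal_le_ofReal_iff (by positivity)] at h3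
  norm_num at h3
  linarith

/-- The bound for `∫ |u|^{2p}` at a free scale `R`, as an inequality between real numbers. -/
theorem two_scale_bound {u : ℝ × ℝ → ℝ} (hu : ContDiff ℝ 1 u) (hp : DoublyPeriodic u)
    {R : ℝ} (hR0 : 0 < R) (hR : R ≤ 1) {p : ℝ} (h1p : 1 ≤ p) :
    (4 : ℝ) ^ (2 * p) *
        (∫ x in Icc (-1:ℝ) 1, ∫ y in Icc (-1:ℝ) 1, |u (x, y)| ^ (2 * p)) ≤
      2 ^ (2 * p - 1) *
        (4 ^ (p + 1) * ((R ^ 2)⁻¹) ^ (p - 1) *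
            (∫ x in Icc (-1:ℝ) 1, ∫ y in Icc (-1:ℝ) 1, (u (x, y)) ^ 2) ^ p +
          (8 * p * R ^ (1 / p)) ^ p * (8 * R) *
            (2 * ∫ x in Icc (-1:ℝ) 1, ∫ y in Icc (-1:ℝ) 1,
              ((deriv (fun t => u (t, y)) x) ^ 2 + (deriv (fun t => u (x, t)) y) ^ 2)) ^ p) := by
  have hd : Continuous (fderiv ℝ u) := hu.continuous_fderiv (by norm_num)
  have hc : Continuous u := hu.continuous
  set A : ℝ × ℝ → ℝ≥0∞ := fun x => ∫⁻ z in closedBall (0 : ℝ × ℝ) 1, ‖u (x + R • z)‖ₑ with hA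
  set D : ℝ × ℝ → ℝ≥0∞ := fun x =>
    ∫⁻ z in closedBall (0 : ℝ × ℝ) 1, ∫⁻ s in Ioc (0 : ℝ) R, ‖fderiv ℝ u (x + s • z)‖ₑ with hD
  have hAm : Measurable A := by
    refine Measurable.lintegral_prod_right'
      (f := fun q : (ℝ × ℝ) × (ℝ × ℝ) => ‖u (q.1 + R • q.2)‖ₑ) ?_
    exact (hc.measurable.comp (by fun_prop)).enorm
  have hpt : ∀ x, 4 * ‖u x‖ₑ ≤ A x + D x := by
    intro x
    have e : 4 * ‖u x‖ₑ = ∫⁻ z in closedBall (0 : ℝ × ℝ) 1, ‖u x‖ₑ := by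
      simp [volume_square, mul_comm]
    have hm : Measurable fun z : ℝ × ℝ => ‖u (x + R • z)‖ₑ :=
      (hc.measurable.comp (by fun_prop)).enorm
    rw [e]
    simp only [hA, hD]
    rw [← lintegral_add_left hm]
    refine setLIntegral_mono' Metric.isClosed_closedBall.measurableSet fun z hz => ?_
    have h1 := enorm_sub_le_segment hu x (z := z) (by simpa using hz) hR0.le
    calc ‖u x‖ₑ = ‖u (x + R • z) - (u (x + R • z) - u x)‖ₑ := by congr 1; ring
      _ ≤ ‖u (x + R • z)‖ₑ + ‖u (x + R • z) - u x‖ₑ := enorm_sub_le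
      _ ≤ _ := by gcongr
  have hbA := lintegral_average_pow_le (f := fun x => ‖u x‖ₑ) (hp.comp _) (by fun_prop) hR0 hR h1p
  have hbD := lintegral_segment_pow_le (g := fun x => ‖fderiv ℝ u x‖ₑ) (hp.fderiv.comp _)
    (by fun_prop) hR0 hR h1p
  have hG := lintegral_fderiv_sq_le hu
  set V := ∫ x in Icc (-1:ℝ) 1, ∫ y in Icc (-1:ℝ) 1,
              ((deriv (fun t => u (t, y)) x) ^ 2 + (deriv (fun t => u (x, t)) y) ^ 2) with hV
  have hV0 : 0 ≤ V := integral_nonneg fun x => integral_nonneg fun y => by positivity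
  have hU := lintegral_enorm_rpow hc (r := 2) (by norm_num)
  have eU : (∫ x in Icc (-1:ℝ) 1, ∫ y in Icc (-1:ℝ) 1, |u (x, y)| ^ (2 : ℝ)) =
    ∫ x in Icc (-1:ℝ) 1, ∫ y in Icc (-1:ℝ) 1, (u (x, y)) ^ 2 := by simp
  rw [eU] at hU
  set U := ∫ x in Icc (-1:ℝ) 1, ∫ y in Icc (-1:ℝ) 1, (u (x, y)) ^ 2 with hUdef
  have hU0 : 0 ≤ U := integral_nonneg fun x => integral_nonneg fun y => by positivity
  have hp0 : 0 < p := by linarith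
  have hL := lintegral_enorm_rpow hc (r := 2 * p) (by positivity)
  have key : ENNReal.ofReal (4 ^ (2 * p)) * ∫⁻ x in closedBall (0 : ℝ × ℝ) 1, ‖u x‖ₑ ^ (2 * p) ≤
      2 ^ (2 * p - 1) * (4 ^ (p + 1) * ENNReal.ofReal (R ^ 2)⁻¹ ^ (p - 1) * ENNReal.ofReal U ^ p +
        ENNReal.ofReal (8 * p * R ^ (1 / p)) ^ p * ENNReal.ofReal (8 * R) *
          ENNReal.ofReal (2 * V) ^ p) := by
    calc _ = ∫⁻ x in closedBall (0 : ℝ × ℝ) 1, (4 * ‖u x‖ₑ) ^ (2 * p) := by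
          rw [← lintegral_const_mul _ (by fun_prop)]
          refine lintegral_congr fun x => ?_
          rw [ENNReal.mul_rpow_of_nonneg _ _ (by positivity),
            ← ENNReal.ofReal_rpow_of_nonneg (by norm_num) (by positivity)]
          norm_num
      _ ≤ ∫⁻ x in closedBall (0 : ℝ × ℝ) 1, 2 ^ (2 * p - 1) * (A x ^ (2 * p) + D x ^ (2 * p)) := by
          refine lintegral_mono fun x => ?_
          exact (ENNReal.rpow_le_rpow (hpt x) (by positivity)).trans
            (ENNReal.rpow_add_le_mul_rpow_add_rpow _ _ (by linarith))
      _ = 2 ^ (2 * p - 1) * ((∫⁻ x in closedBall (0 : ℝ × ℝ) 1, A x ^ (2 * p)) +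
            ∫⁻ x in closedBall (0 : ℝ × ℝ) 1, D x ^ (2 * p)) := by
          rw [lintegral_const_mul' _ _ (by
            exact ENNReal.rpow_ne_top_of_nonneg (by linarith) (by norm_num)), lintegral_add_left (by fun_prop)]
      _ ≤ _ := by
          rw [← hU]
          gcongr
          exact hbD.trans (by gcongr)
  rw [hL, ← ENNReal.ofReal_mul (by positivity)] at key
  have e2 : (2 : ℝ≥0∞) = ENNReal.ofReal 2 := by norm_num
  have e4 : (4 : ℝ≥0∞) = ENNReal.ofReal 4 := by norm_num
  rw [e2, e4, ENNReal.ofReal_rpow_of_nonneg (by positivity) (by linarith),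
    ENNReal.ofReal_rpow_of_nonneg (by positivity) (by linarith),
    ENNReal.ofReal_rpow_of_nonneg (by positivity) (by linarith),
    ENNReal.ofReal_rpow_of_nonneg hU0 hp0.le,
    ENNReal.ofReal_rpow_of_nonneg (by positivity) hp0.le,
    ENNReal.ofReal_rpow_of_nonneg (by positivity) hp0.le,
    ← ENNReal.ofReal_mul (by positivity), ← ENNReal.ofReal_mul (by positivity),
    ← ENNReal.ofReal_mul (by positivity), ← ENNReal.ofReal_mul (by positivity),
    ← ENNReal.ofReal_add (by positivity) (by positivity), ← ENNReal.ofReal_mul (by positivity),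
    ENNReal.ofReal_le_ofReal_iff (by positivity)] at key
  exact key

/-- The choice `R² = U / (8 V)`, where `U = ‖u‖₂²` and `V = ‖∇u‖₂²`, balances the two terms. -/
theorem optimize_scale {p L U V : ℝ} (h1p : 1 ≤ p) (hU : 0 < U) (hUV : U ≤ 8 * V)
    (h : ∀ R : ℝ, 0 < R → R ≤ 1 → (4 : ℝ) ^ (2 * p) * L ≤ 2 ^ (2 * p - 1) *
        (4 ^ (p + 1) * ((R ^ 2)⁻¹) ^ (p - 1) * U ^ p +
          (8 * p * R ^ (1 / p)) ^ p * (8 * R) * (2 * V) ^ p)) :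
    L ≤ (8 * p) ^ p * U * V ^ (p - 1) := by
  have hV : 0 < V := by linarith
  have hp0 : 0 < p := by linarith
  set R := Real.sqrt (U / (8 * V)) with hRdef
  have hR2 : R ^ 2 = U / (8 * V) := Real.sq_sqrt (by positivity)
  have hR0 : 0 < R := Real.sqrt_pos.2 (by positivity)
  have hR1 : R ≤ 1 := by
    rw [hRdef, Real.sqrt_le_one, div_le_one (by positivity)]; exact hUV
  have h1 := h R hR0 hR1
  have hs : ∀ a : ℝ, 0 < a → a ^ p = a ^ (p - 1) * a := fun a ha => by
    rw [← Real.rpow_add_one ha.ne']; ring_nf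
  have t1 : 4 ^ (p + 1) * ((R ^ 2)⁻¹) ^ (p - 1) * U ^ p = 32 ^ p / 2 * (U * V ^ (p - 1)) := by
    rw [hR2, inv_div, Real.div_rpow (by positivity) hU.le, Real.mul_rpow (by norm_num) hV.le,
      hs U hU, show (32 : ℝ) = 4 * 8 by norm_num, Real.mul_rpow (by norm_num) (by norm_num), hs 8 (by norm_num),
      Real.rpow_add_one (by norm_num)]
    have : U ^ (p - 1) ≠ 0 := (Real.rpow_pos_of_pos hU _).ne'
    field_simp
    ring
  have t2 : (8 * p * R ^ (1 / p)) ^ p * (8 * R) * (2 * V) ^ p =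
      16 ^ p * p ^ p * (U * V ^ (p - 1)) := by
    have : (R ^ (1 / p)) ^ p = R := by
      rw [← Real.rpow_mul hR0.le]; field_simp; simp
    rw [Real.mul_rpow (by positivity) (by positivity), this, Real.mul_rpow (by norm_num) hp0.le,
      Real.mul_rpow (by norm_num) hV.le, show (16 : ℝ) = 8 * 2 by norm_num,
      Real.mul_rpow (by norm_num) (by norm_num), hs V hV]
    have e : R * (8 * R) * V = U := by
      have : R * (8 * R) * V = 8 * R ^ 2 * V := by ring
      rw [this, hR2]; field_simp
    calc _ = 8 ^ p * p ^ p * 2 ^ p * V ^ (p - 1) * (R * (8 * R) * V) := by ring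
      _ = _ := by rw [e]; ring
  rw [t1, t2] at h1
  have hpp : 1 ≤ p ^ p := Real.one_le_rpow h1p hp0.le
  have h16 : (16 : ℝ) ^ p ≤ 32 ^ p := Real.rpow_le_rpow (by norm_num) (by norm_num) hp0.le
  have hW : 0 < U * V ^ (p - 1) := mul_pos hU (Real.rpow_pos_of_pos hV _)
  have e4 : (4 : ℝ) ^ (2 * p) = 16 ^ p := by
    rw [Real.rpow_mul (by norm_num)]; norm_num
  have e2 : (2 : ℝ) ^ (2 * p - 1) = 4 ^ p / 2 := by
    rw [Real.rpow_sub_one (by norm_num), Real.rpow_mul (by norm_num)]; norm_num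
  have e8 : (16 : ℝ) ^ p * 8 ^ p = 4 ^ p * 32 ^ p := by
    rw [← Real.mul_rpow (by norm_num) (by norm_num), ← Real.mul_rpow (by norm_num) (by norm_num)]
    norm_num
  rw [e4, e2] at h1
  have h16p : (0 : ℝ) < 16 ^ p := by positivity
  refine le_of_mul_le_mul_left ?_ h16p
  have hsum : 32 ^ p / 2 + 16 ^ p * p ^ p ≤ 2 * (32 ^ p * p ^ p) := by
    have a1 : (32 : ℝ) ^ p ≤ 32 ^ p * p ^ p := le_mul_of_one_le_right (by positivity) hpp
    have a2 : (16 : ℝ) ^ p * p ^ p ≤ 32 ^ p * p ^ p := by gcongr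
    have : (0 : ℝ) < 32 ^ p := by positivity
    linarith
  calc 16 ^ p * L ≤ 4 ^ p / 2 * (32 ^ p / 2 + 16 ^ p * p ^ p) * (U * V ^ (p - 1)) := by
        linarith
    _ ≤ 4 ^ p / 2 * (2 * (32 ^ p * p ^ p)) * (U * V ^ (p - 1)) := by gcongr
    _ = (4 ^ p * 32 ^ p) * p ^ p * (U * V ^ (p - 1)) := by ring
    _ = _ := by
      rw [← e8, Real.mul_rpow (by norm_num) hp0.le]; ring

/-- **Gagliardo–Nirenberg inequality with `√p` growth for zero-mean functions on the
2D torus**: `‖u‖_{L^{2p}} ≤ C √p ‖u‖_{L²}^{1/p} ‖∇u‖_{L²}^{1−1/p}` with `C`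
independent of `p`. -/
theorem gagliardo_nirenberg_sqrt_p_zero_mean :
    ∃ C : ℝ, ∀ p : ℝ, 1 ≤ p → ∀ u : ℝ × ℝ → ℝ, ContDiff ℝ (⊤ : ℕ∞) u →
      (∀ x y : ℝ, u (x + 2, y) = u (x, y)) →
      (∀ x y : ℝ, u (x, y + 2) = u (x, y)) →
      (∫ x in Icc (-1:ℝ) 1, ∫ y in Icc (-1:ℝ) 1, u (x, y)) = 0 →
      (∫ x in Icc (-1:ℝ) 1, ∫ y in Icc (-1:ℝ) 1, |u (x, y)| ^ (2 * p)) ^ (1 / (2 * p))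
        ≤ C * Real.sqrt p *
          ((∫ x in Icc (-1:ℝ) 1, ∫ y in Icc (-1:ℝ) 1,
              (u (x, y)) ^ 2) ^ ((1:ℝ)/2)) ^ (1 / p) *
          ((∫ x in Icc (-1:ℝ) 1, ∫ y in Icc (-1:ℝ) 1,
              ((deriv (fun t => u (t, y)) x) ^ 2
                + (deriv (fun t => u (x, t)) y) ^ 2)) ^ ((1:ℝ)/2)) ^ (1 - 1 / p) := by
  refine ⟨Real.sqrt 8, fun p h1p u hu hx hy h0 => ?_⟩
  have hu1 : ContDiff ℝ 1 u := hu.of_le (by exact_mod_cast le_top)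
  have hc : Continuous u := hu1.continuous
  have hp : DoublyPeriodic u := ⟨hx, hy⟩
  have hp0 : 0 < p := by linarith
  have hP := poincare_square hu1 hp h0
  have hS := fun (R : ℝ) (hR0 : 0 < R) (hR : R ≤ 1) => two_scale_bound hu1 hp hR0 hR h1p
  have hL := lintegral_enorm_rpow hc (r := 2 * p) (by positivity)
  have hU := lintegral_enorm_rpow hc (r := 2) (by norm_num)
  have eU : (∫ x in Icc (-1:ℝ) 1, ∫ y in Icc (-1:ℝ) 1, |u (x, y)| ^ (2 : ℝ)) =
    ∫ x in Icc (-1:ℝ) 1, ∫ y in Icc (-1:ℝ) 1, (u (x, y)) ^ 2 := by simp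
  rw [eU] at hU
  set V := ∫ x in Icc (-1:ℝ) 1, ∫ y in Icc (-1:ℝ) 1,
              ((deriv (fun t => u (t, y)) x) ^ 2 + (deriv (fun t => u (x, t)) y) ^ 2) with hVdef
  have hV0 : 0 ≤ V := integral_nonneg fun x => integral_nonneg fun y => by positivity
  set U := ∫ x in Icc (-1:ℝ) 1, ∫ y in Icc (-1:ℝ) 1, (u (x, y)) ^ 2 with hUdef
  have hU0 : 0 ≤ U := integral_nonneg fun x => integral_nonneg fun y => by positivity
  set L := ∫ x in Icc (-1:ℝ) 1, ∫ y in Icc (-1:ℝ) 1, |u (x, y)| ^ (2 * p) with hLdef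
  have hL0 : 0 ≤ L := integral_nonneg fun x => integral_nonneg fun y => by positivity
  -- If `‖u‖₂ = 0`, the optimal scale degenerates, but then `u` vanishes almost everywhere.
  rcases hU0.eq_or_lt with hz | hUpos
  · have hLz : L = 0 := by
      rw [← hz, ENNReal.ofReal_zero, lintegral_eq_zero_iff (by fun_prop)] at hU
      have : ∫⁻ x in closedBall (0 : ℝ × ℝ) 1, ‖u x‖ₑ ^ (2 * p) = 0 := by
        rw [lintegral_eq_zero_iff (by fun_prop)]
        filter_upwards [hU] with x hx
        have : ‖u x‖ₑ = 0 := by simpa using hx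
        simp [this, hp0]
      rw [this] at hL
      exact le_antisymm (ENNReal.ofReal_eq_zero.1 hL.symm) hL0
    rw [hLz, Real.zero_rpow (by positivity)]
    positivity
  · have hb := optimize_scale h1p hUpos hP hS
    calc L ^ (1 / (2 * p)) ≤ ((8 * p) ^ p * U * V ^ (p - 1)) ^ (1 / (2 * p)) := by gcongr
      _ = _ := by
        rw [Real.mul_rpow (by positivity) (by positivity), Real.mul_rpow (by positivity) hU0,
          ← Real.rpow_mul (by positivity), ← Real.rpow_mul hV0, ← Real.rpow_mul hU0,
          ← Real.rpow_mul hV0, ← Real.sqrt_mul (by norm_num), Real.sqrt_eq_rpow]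
        rw [show p * (1 / (2 * p)) = 1 / 2 by field_simp,
          show (p - 1) * (1 / (2 * p)) = 1 / 2 * (1 - 1 / p) by field_simp,
          show 1 / (2 * p) = 1 / 2 * (1 / p) by field_simp]
end

section
/- Gagliardo–Nirenberg inequality with √p growth on the 2D torus: There exists a constant C such that for every real number p with 1 ≤ p < ∞ and every smooth function u : ℝ² → ℝ that is 2-periodic in each variable, one has ‖u‖_{L^{2p}([−1,1]²)} ≤ C √p ( ‖u‖_{L²([−1,1]²)}^{1/p} ‖∇u‖_{L²([−1,1]²)}^{1−1/p} + ‖u‖_{L²([−1,1]²)} ). -/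
open MeasureTheory Set

/-!
The proof represents `u` by its derivatives along segments issuing from a point into a cone, and
estimates the resulting integral operator by Hölder's inequality with a weight.

Fix a scale `0 < r ≤ 1`. For every slope `s ∈ (0, 1]`, the function
`t ↦ (1 - t / r) u(x + t, y + t s)` equals `u(x, y)` at `t = 0` and vanishes at `t = r`. Integrating
its derivative over `t`, and then averaging over `s`, gives (`enorm_le_cone`)
`|u(x, y)| ≤ ∫∫ √G(x + t, y + t s) ds dt` with `G = 3 (u² / r² + |∇u|²)`, where `(t, s)` ranges over
`(0, r] × (0, 1]`.

Two applications of Hölder's inequality (`weighted_holder`) bound the `2p`-th power of the right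
side by the product of `(∫ t^{-(1 - 1/p)} dt)^p = (p r^{1/p})^p`, of `∫∫ G ds dt`, and of
`(∫∫ t G ds dt)^{p-1}`. The first factor is the source of the growth `√p`. Since `t ds dt` is the
area element of the cone in the coordinates `(t, s)`, the last integral is at most `∫ G` over the
torus (`cone_weighted_le`); by translation invariance, the middle one, integrated over `(x, y)`,
equals `r ∫ G` (`cone_average`). Hence `∫ |u|^{2p} ≤ (p r^{1/p})^p r (∫ G)^p`, that is, with
`A = ‖u‖₂` and `B = ‖∇u‖₂`,
`‖u‖_{2p} ≤ √3 √p r^{1/p} (A / r + B)`.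
The choice `r = min(1, A / B)` yields the claim with `C = 2√3`.
-/

open scoped ENNReal

/-! ### Hölder's inequality with a weight -/

/-- Cauchy–Schwarz for `√g = τ^{-a/2} (τ^a g)^{1/2}` with `a = 1 - 1/p`, followed by Hölder's
inequality for `τ^a g = g^{1/p} (τ g)^{1 - 1/p}`. -/
theorem weighted_holder {α : Type*} [MeasurableSpace α] {ν : Measure α} {τ g : α → ℝ≥0∞}
    (hτ : Measurable τ) (hg : Measurable g) (hτ0 : ∀ᵐ q ∂ν, τ q ≠ 0 ∧ τ q ≠ ∞)
    {p : ℝ} (hp : 1 ≤ p) :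
    (∫⁻ q, g q ^ (1 / 2 : ℝ) ∂ν) ^ (2 * p) ≤
      (∫⁻ q, τ q ^ (-(1 - 1 / p)) ∂ν) ^ p * (∫⁻ q, g q ∂ν) *
        (∫⁻ q, τ q * g q ∂ν) ^ (p - 1) := by
  have hp0 : 0 < p := by linarith
  have ha : 0 ≤ 1 - 1 / p := by
    rw [sub_nonneg, div_le_one hp0]; exact hp
  have h1 : ∫⁻ q, g q ^ (1 / 2 : ℝ) ∂ν ≤
      (∫⁻ q, τ q ^ (-(1 - 1 / p)) ∂ν) ^ (1 / 2 : ℝ) *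
        (∫⁻ q, τ q ^ (1 - 1 / p) * g q ∂ν) ^ (1 / 2 : ℝ) := by
    refine le_trans (le_of_eq ?_) (ENNReal.lintegral_mul_norm_pow_le (by fun_prop) (by fun_prop)
      (by norm_num) (by norm_num) (by norm_num))
    refine lintegral_congr_ae ?_
    filter_upwards [hτ0] with q hq
    rw [← ENNReal.mul_rpow_of_nonneg _ _ (by norm_num), ← mul_assoc,
      ← ENNReal.rpow_add _ _ hq.1 hq.2]
    simp
  have h2 : ∫⁻ q, τ q ^ (1 - 1 / p) * g q ∂ν ≤
      (∫⁻ q, g q ∂ν) ^ (1 / p) * (∫⁻ q, τ q * g q ∂ν) ^ (1 - 1 / p) := by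
    refine le_trans (le_of_eq ?_) (ENNReal.lintegral_mul_norm_pow_le (by fun_prop) (by fun_prop)
      (by positivity) ha (by ring))
    refine lintegral_congr fun q => ?_
    rw [ENNReal.mul_rpow_of_nonneg _ _ ha, mul_left_comm,
      ← ENNReal.rpow_add_of_nonneg _ _ (by positivity) ha]
    simp
  have h3 := h1.trans (mul_le_mul_right (ENNReal.rpow_le_rpow h2 (by norm_num : (0:ℝ) ≤ 1/2)) _)
  refine (ENNReal.rpow_le_rpow h3 (by positivity : 0 ≤ 2 * p)).trans (le_of_eq ?_)
  rw [ENNReal.mul_rpow_of_nonneg _ _ (by positivity), ← ENNReal.rpow_mul, ← ENNReal.rpow_mul,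
    ENNReal.mul_rpow_of_nonneg _ _ (by positivity), ← ENNReal.rpow_mul, ← ENNReal.rpow_mul,
    ← mul_assoc]
  have e1 : 1 / 2 * (2 * p) = p := by ring
  have e2 : 1 / p * p = 1 := by field_simp
  have e3 : (1 - 1 / p) * p = p - 1 := by field_simp
  rw [e1, e2, e3, ENNReal.rpow_one]

/-! ### Integrals of 2-periodic functions -/

theorem setLIntegral_periodic {g : ℝ → ℝ≥0∞} (hg : ∀ x, g (x + 2) = g x) (a b : ℝ) :
    ∫⁻ x in Ioc a (a + 2), g x = ∫⁻ x in Ioc b (b + 2), g x := by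
  have h2 : (0 : ℝ) < 2 := by norm_num
  refine (isAddFundamentalDomain_Ioc h2 a).setLIntegral_eq (isAddFundamentalDomain_Ioc h2 b) g ?_
  rintro ⟨c, hc⟩ x
  obtain ⟨n, rfl⟩ := AddSubgroup.mem_zmultiples_iff.1 hc
  have hper : Function.Periodic g 2 := hg
  have := hper.zsmul n x
  rw [add_comm] at this
  exact this

theorem setLIntegral_Icc_eq_Ioc {g : ℝ → ℝ≥0∞} (hg : ∀ x, g (x + 2) = g x) (a : ℝ) :
    ∫⁻ x in Icc (-1 : ℝ) 1, g x = ∫⁻ x in Ioc a (a + 2), g x := by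
  rw [← restrict_Ioc_eq_restrict_Icc, setLIntegral_periodic hg a (-1)]
  norm_num

theorem setLIntegral_Icc_add {g : ℝ → ℝ≥0∞} (hg : ∀ x, g (x + 2) = g x) (c : ℝ) :
    ∫⁻ x in Icc (-1 : ℝ) 1, g (x + c) = ∫⁻ x in Icc (-1 : ℝ) 1, g x := by
  have h := (measurePreserving_add_right (volume : Measure ℝ) c).setLIntegral_comp_preimage_emb
    (measurableEmbedding_addRight c) g (Ioc (-1 + c) (1 + c))
  rw [setLIntegral_Icc_eq_Ioc hg (-1 + c), ← restrict_Ioc_eq_restrict_Icc]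
  simp only [preimage_add_const_Ioc, add_sub_cancel_right] at h
  rw [h]; congr 3; ring

/-! ### The cone operator on the torus -/

theorem lintegral_rpow_weight {r p : ℝ} (hr : 0 < r) (hp : 1 ≤ p) :
    ∫⁻ q : ℝ × ℝ, ENNReal.ofReal q.1 ^ (-(1 - 1 / p))
      ∂((volume.restrict (Ioc 0 r)).prod (volume.restrict (Ioc (0:ℝ) 1))) =
      ENNReal.ofReal (p * r ^ (1 / p)) := by
  have hp0 : 0 < p := by linarith
  have ha : -1 < -(1 - 1 / p) := by
    have : 0 < 1 / p := by positivity
    linarith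
  rw [lintegral_prod _ (by fun_prop)]
  simp only [lintegral_const, Measure.restrict_apply_univ, Real.volume_Ioc]
  simp only [sub_zero, ENNReal.ofReal_one, mul_one]
  have : ∫⁻ t in Ioc 0 r, ENNReal.ofReal t ^ (-(1 - 1 / p)) =
      ∫⁻ t in Ioc 0 r, ENNReal.ofReal (t ^ (-(1 - 1 / p))) :=
    setLIntegral_congr_fun measurableSet_Ioc fun t ht => ENNReal.ofReal_rpow_of_pos ht.1
  rw [this, ← ofReal_integral_eq_lintegral_ofReal, ← intervalIntegral.integral_of_le hr.le,
    integral_rpow (Or.inl ha)]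
  · congr 1
    have e : -(1 - 1 / p) + 1 = 1 / p := by ring
    rw [e, Real.zero_rpow (by positivity)]
    field_simp
    ring
  · exact (intervalIntegrable_iff_integrableOn_Ioc_of_le hr.le).1
      (intervalIntegral.intervalIntegrable_rpow' ha)
  · exact (ae_restrict_mem measurableSet_Ioc).mono fun t ht => Real.rpow_nonneg ht.1.le _

/-- With the weight `t`, the integral over the cone with apex `(x, y)` is a plain area integral,
since the area element is `t ds dt`; for `r ≤ 1` the cone lies in one period cell. -/
theorem cone_weighted_le {g : ℝ × ℝ → ℝ≥0∞} (hg : Measurable g)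
    (h1 : ∀ x y, g (x + 2, y) = g (x, y)) (h2 : ∀ x y, g (x, y + 2) = g (x, y))
    {r : ℝ} (hr1 : r ≤ 1) (x y : ℝ) :
    ∫⁻ q : ℝ × ℝ, ENNReal.ofReal q.1 * g (x + q.1, y + q.1 * q.2)
      ∂((volume.restrict (Ioc 0 r)).prod (volume.restrict (Ioc (0:ℝ) 1))) ≤
      ∫⁻ x in Icc (-1:ℝ) 1, ∫⁻ y in Icc (-1:ℝ) 1, g (x, y) := by
  rw [lintegral_prod _ (by fun_prop)]
  have step : ∀ t ∈ Ioc 0 r, ∫⁻ s in Ioc (0:ℝ) 1, ENNReal.ofReal t * g (x + t, y + t * s) ≤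
      ∫⁻ y in Icc (-1:ℝ) 1, g (t + x, y) := by
    intro t ht
    have hd := lintegral_image_eq_lintegral_abs_deriv_mul (f := fun s => y + t * s)
      (f' := fun _ => t) (measurableSet_Ioc (a := (0:ℝ)) (b := 1))
      (fun s _ => by
        simpa using! (((hasDerivAt_id s).const_mul t).const_add y).hasDerivWithinAt)
      (fun a _ b _ hab => by simpa [ht.1.ne'] using hab) (fun z => g (x + t, z))
    simp only [abs_of_pos ht.1] at hd
    rw [← hd, setLIntegral_Icc_eq_Ioc (fun z => h2 _ z) y, add_comm t x]
    refine lintegral_mono_set ?_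
    rintro _ ⟨s, hs, rfl⟩
    have := mul_pos ht.1 hs.1
    have := mul_le_mul (ht.2.trans hr1) hs.2 hs.1.le zero_le_one
    constructor <;> dsimp only <;> linarith
  refine (setLIntegral_mono' measurableSet_Ioc step).trans ?_
  refine (lintegral_mono_set (Ioc_subset_Ioc_right (by linarith : r ≤ 0 + 2))).trans ?_
  have hper : ∀ ξ, ∫⁻ y in Icc (-1:ℝ) 1, g (ξ + 2, y) = ∫⁻ y in Icc (-1:ℝ) 1, g (ξ, y) :=
    fun ξ => by simp only [h1]
  rw [← setLIntegral_Icc_eq_Ioc (g := fun t => ∫⁻ y in Icc (-1:ℝ) 1, g (t + x, y))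
    (fun t => by rw [← hper (t + x), add_right_comm]),
    setLIntegral_Icc_add (g := fun t => ∫⁻ y in Icc (-1:ℝ) 1, g (t, y)) hper]

/-- Integrated over all apexes, the unweighted cone integral is a superposition of translates of
the integral over the torus. -/
theorem cone_average {g : ℝ × ℝ → ℝ≥0∞} (hg : Measurable g)
    (h1 : ∀ x y, g (x + 2, y) = g (x, y)) (h2 : ∀ x y, g (x, y + 2) = g (x, y)) (r : ℝ) :
    ∫⁻ x in Icc (-1:ℝ) 1, ∫⁻ y in Icc (-1:ℝ) 1, ∫⁻ q : ℝ × ℝ, g (x + q.1, y + q.1 * q.2)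
      ∂((volume.restrict (Ioc 0 r)).prod (volume.restrict (Ioc (0:ℝ) 1))) =
      ENNReal.ofReal r * ∫⁻ x in Icc (-1:ℝ) 1, ∫⁻ y in Icc (-1:ℝ) 1, g (x, y) := by
  have e1 : ∀ x : ℝ, ∫⁻ y in Icc (-1:ℝ) 1, ∫⁻ q : ℝ × ℝ, g (x + q.1, y + q.1 * q.2)
      ∂((volume.restrict (Ioc 0 r)).prod (volume.restrict (Ioc (0:ℝ) 1))) =
      ∫⁻ q : ℝ × ℝ, (∫⁻ y in Icc (-1:ℝ) 1, g (x + q.1, y))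
      ∂((volume.restrict (Ioc 0 r)).prod (volume.restrict (Ioc (0:ℝ) 1))) := by
    intro x
    rw [lintegral_lintegral_swap (by fun_prop)]
    refine lintegral_congr fun q => ?_
    exact setLIntegral_Icc_add (g := fun y => g (x + q.1, y)) (fun y => h2 _ y) _
  simp only [e1]
  have hm : Measurable fun ξ : ℝ => ∫⁻ y in Icc (-1:ℝ) 1, g (ξ, y) :=
    hg.lintegral_prod_right'
  rw [lintegral_lintegral_swap (f := fun (x : ℝ) (q : ℝ × ℝ) =>
    ∫⁻ y in Icc (-1:ℝ) 1, g (x + q.1, y))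
    (hm.comp (measurable_fst.add (measurable_fst.comp measurable_snd))).aemeasurable]
  have e2 : ∀ q : ℝ × ℝ, ∫⁻ x in Icc (-1:ℝ) 1, ∫⁻ y in Icc (-1:ℝ) 1, g (x + q.1, y) =
      ∫⁻ x in Icc (-1:ℝ) 1, ∫⁻ y in Icc (-1:ℝ) 1, g (x, y) := fun q =>
    setLIntegral_Icc_add (g := fun x => ∫⁻ y in Icc (-1:ℝ) 1, g (x, y))
      (fun x => by simp only [h1]) _
  simp only [e2, lintegral_const, ← univ_prod_univ, Measure.prod_prod, Measure.restrict_apply_univ,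
    Real.volume_Ioc]
  simp [mul_comm]

/-- The `L^{2p}` bound for the operator that integrates `√g` over cones of height `r`. -/
theorem cone_operator_bound {g : ℝ × ℝ → ℝ≥0∞} (hg : Measurable g)
    (h1 : ∀ x y, g (x + 2, y) = g (x, y)) (h2 : ∀ x y, g (x, y + 2) = g (x, y))
    {r p : ℝ} (hr : 0 < r) (hr1 : r ≤ 1) (hp : 1 ≤ p) :
    ∫⁻ x in Icc (-1:ℝ) 1, ∫⁻ y in Icc (-1:ℝ) 1,
      (∫⁻ q : ℝ × ℝ, g (x + q.1, y + q.1 * q.2) ^ (1 / 2 : ℝ)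
        ∂((volume.restrict (Ioc 0 r)).prod (volume.restrict (Ioc (0:ℝ) 1)))) ^ (2 * p) ≤
      ENNReal.ofReal (p * r ^ (1 / p)) ^ p * ENNReal.ofReal r *
        (∫⁻ x in Icc (-1:ℝ) 1, ∫⁻ y in Icc (-1:ℝ) 1, g (x, y)) ^ p := by
  set ν := (volume.restrict (Ioc 0 r)).prod (volume.restrict (Ioc (0:ℝ) 1)) with hν
  set N := ∫⁻ x in Icc (-1:ℝ) 1, ∫⁻ y in Icc (-1:ℝ) 1, g (x, y) with hN
  have hpos : ∀ᵐ q : ℝ × ℝ ∂ν, ENNReal.ofReal q.1 ≠ 0 ∧ ENNReal.ofReal q.1 ≠ ∞ := by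
    rw [hν, Measure.prod_restrict]
    filter_upwards [ae_restrict_mem (measurableSet_Ioc.prod measurableSet_Ioc)] with q hq
    exact ⟨by simpa using hq.1.1, ENNReal.ofReal_ne_top⟩
  have key : ∀ x y : ℝ, (∫⁻ q : ℝ × ℝ, g (x + q.1, y + q.1 * q.2) ^ (1 / 2 : ℝ) ∂ν) ^ (2 * p) ≤
      ENNReal.ofReal (p * r ^ (1 / p)) ^ p * N ^ (p - 1) *
        ∫⁻ q : ℝ × ℝ, g (x + q.1, y + q.1 * q.2) ∂ν := by
    intro x y
    refine (weighted_holder (τ := fun q : ℝ × ℝ => ENNReal.ofReal q.1)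
      (g := fun q : ℝ × ℝ => g (x + q.1, y + q.1 * q.2)) (by fun_prop) (by fun_prop) hpos hp).trans ?_
    rw [lintegral_rpow_weight hr hp, mul_right_comm]
    gcongr
    exact cone_weighted_le hg h1 h2 hr1 x y
  have hm : Measurable fun z : ℝ × ℝ => ∫⁻ q : ℝ × ℝ, g (z.1 + q.1, z.2 + q.1 * q.2) ∂ν := by
    refine Measurable.lintegral_prod_right' (f := fun w : (ℝ × ℝ) × (ℝ × ℝ) =>
      g (w.1.1 + w.2.1, w.1.2 + w.2.1 * w.2.2)) (by fun_prop)
  refine (lintegral_mono fun x => lintegral_mono fun y => key x y).trans (le_of_eq ?_)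
  have hmx : ∀ x : ℝ, Measurable fun y : ℝ =>
      ∫⁻ q : ℝ × ℝ, g (x + q.1, y + q.1 * q.2) ∂ν := fun x => hm.comp measurable_prodMk_left
  simp only [lintegral_const_mul _ (hmx _)]
  rw [lintegral_const_mul _ hm.lintegral_prod_right', cone_average hg h1 h2]
  rw [← hN]
  have : N ^ p = N ^ (p - 1) * N := by
    conv_rhs => rw [← ENNReal.rpow_one N]
    rw [← ENNReal.rpow_mul, one_mul, ← ENNReal.rpow_add_of_nonneg _ _ (by linarith) zero_le_one]
    simp
  rw [this]; ring

/-! ### The function and its gradient -/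

theorem ofReal_integral_square {f : ℝ × ℝ → ℝ} (hf : Continuous f) (h0 : ∀ z, 0 ≤ f z) :
    ENNReal.ofReal (∫ x in Icc (-1:ℝ) 1, ∫ y in Icc (-1:ℝ) 1, f (x, y)) =
      ∫⁻ x in Icc (-1:ℝ) 1, ∫⁻ y in Icc (-1:ℝ) 1, ENNReal.ofReal (f (x, y)) := by
  have hi : IntegrableOn f (Icc (-1:ℝ) 1 ×ˢ Icc (-1:ℝ) 1) (volume.prod volume) :=
    hf.continuousOn.integrableOn_compact (isCompact_Icc.prod isCompact_Icc)
  rw [← setIntegral_prod f hi, ofReal_integral_eq_lintegral_ofReal hi (ae_of_all _ h0),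
    ← Measure.prod_restrict, lintegral_prod _ (by fun_prop)]

/-- Pointwise control of `u` by the cone integral: the derivative of `t ↦ (1 - t/r) u(x+t, y+ts)`
is a sum of three terms, whose square is at most three times the sum of squares. -/
theorem enorm_le_cone {u : ℝ × ℝ → ℝ} (hu : ContDiff ℝ 1 u) {r : ℝ} (hr : 0 < r) (x y : ℝ) :
    ‖u (x, y)‖ₑ ≤ ∫⁻ q : ℝ × ℝ, ENNReal.ofReal
        (3 * ((u (x + q.1, y + q.1 * q.2) / r) ^ 2
          + ((fderiv ℝ u (x + q.1, y + q.1 * q.2) (1, 0)) ^ 2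
          + (fderiv ℝ u (x + q.1, y + q.1 * q.2) (0, 1)) ^ 2))) ^ (1 / 2 : ℝ)
        ∂((volume.restrict (Ioc 0 r)).prod (volume.restrict (Ioc (0:ℝ) 1))) := by
  have hc : Continuous u := hu.continuous
  have hc' : Continuous (fderiv ℝ u) := hu.continuous_fderiv (by norm_num)
  rw [lintegral_prod_symm _ (by fun_prop)]
  have step : ∀ s ∈ Ioc (0:ℝ) 1, ‖u (x, y)‖ₑ ≤ ∫⁻ t in Ioc 0 r, ENNReal.ofReal
        (3 * ((u (x + t, y + t * s) / r) ^ 2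
          + ((fderiv ℝ u (x + t, y + t * s) (1, 0)) ^ 2
          + (fderiv ℝ u (x + t, y + t * s) (0, 1)) ^ 2))) ^ (1 / 2 : ℝ) := by
    intro s hs
    have hder : ∀ t : ℝ, HasDerivAt (fun t => (1 - t / r) * u (x + t, y + t * s))
        (-(1 / r) * u (x + t, y + t * s) + (1 - t / r) *
          (fderiv ℝ u (x + t, y + t * s) (1, 0) + s * fderiv ℝ u (x + t, y + t * s) (0, 1))) t := by
      intro t
      have h1 : HasDerivAt (fun t : ℝ => 1 - t / r) (-(1 / r)) t := by
        simpa using! ((hasDerivAt_id t).div_const r).const_sub 1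
      have h2 : HasDerivAt (fun t : ℝ => (x + t, y + t * s)) ((1 : ℝ), s) t := by
        have ha : HasDerivAt (fun t : ℝ => x + t) 1 t := (hasDerivAt_id t).const_add x
        have hb : HasDerivAt (fun t : ℝ => y + t * s) s t := by
          simpa using! ((hasDerivAt_id t).mul_const s).const_add y
        exact ha.prodMk hb
      have h3 := ((hu.differentiable (by norm_num)) (x + t, y + t * s)).hasFDerivAt.comp_hasDerivAt t h2
      have e : fderiv ℝ u (x + t, y + t * s) (1, s) =
          fderiv ℝ u (x + t, y + t * s) (1, 0) + s * fderiv ℝ u (x + t, y + t * s) (0, 1) := by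
        have : ((1 : ℝ), s) = (1, 0) + s • (0, 1) := by simp
        rw [this, map_add, map_smul, smul_eq_mul]
      rw [e] at h3
      exact h1.mul h3
    have hcont : Continuous fun t : ℝ => -(1 / r) * u (x + t, y + t * s) + (1 - t / r) *
          (fderiv ℝ u (x + t, y + t * s) (1, 0) + s * fderiv ℝ u (x + t, y + t * s) (0, 1)) := by
      fun_prop
    have hftc := intervalIntegral.integral_eq_sub_of_hasDerivAt (a := 0) (b := r)
      (fun t _ => hder t) (hcont.intervalIntegrable _ _)
    rw [intervalIntegral.integral_of_le hr.le] at hftc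
    have hval : ‖u (x, y)‖ₑ = ‖∫ t in Ioc 0 r, -(1 / r) * u (x + t, y + t * s) + (1 - t / r) *
          (fderiv ℝ u (x + t, y + t * s) (1, 0) + s * fderiv ℝ u (x + t, y + t * s) (0, 1))‖ₑ := by
      rw [hftc]; simp [hr.ne']
    rw [hval]
    refine (enorm_integral_le_lintegral_enorm _).trans
      (setLIntegral_mono' measurableSet_Ioc fun t ht => ?_)
    rw [Real.enorm_eq_ofReal_abs, ENNReal.ofReal_rpow_of_nonneg (by positivity) (by norm_num),
      ← Real.sqrt_eq_rpow]
    refine ENNReal.ofReal_le_ofReal (Real.abs_le_sqrt ?_)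
    generalize fderiv ℝ u (x + t, y + t * s) (1, 0) = b
    generalize fderiv ℝ u (x + t, y + t * s) (0, 1) = c
    have hk0 : 0 ≤ 1 - t / r := by rw [sub_nonneg, div_le_one hr]; exact ht.2
    have hk1 : 1 - t / r ≤ 1 := by
      have : 0 ≤ t / r := div_nonneg ht.1.le hr.le
      linarith
    have ea : -(1 / r) * u (x + t, y + t * s) = -(u (x + t, y + t * s) / r) := by ring
    rw [ea]
    generalize u (x + t, y + t * s) / r = a
    generalize 1 - t / r = k at hk0 hk1
    have hb : (k * b) ^ 2 ≤ b ^ 2 := by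
      rw [mul_pow]; exact mul_le_of_le_one_left (sq_nonneg _) (pow_le_one₀ hk0 hk1)
    have hc : (k * s * c) ^ 2 ≤ c ^ 2 := by
      rw [mul_pow]
      exact mul_le_of_le_one_left (sq_nonneg _)
        (pow_le_one₀ (mul_nonneg hk0 hs.1.le) (mul_le_one₀ hk1 hs.1.le hs.2))
    nlinarith [sq_nonneg (-a - k * b), sq_nonneg (-a - k * s * c), sq_nonneg (k * b - k * s * c)]
  refine le_trans (le_of_eq ?_) (setLIntegral_mono' measurableSet_Ioc step)
  simp

/-- The estimate `‖u‖_{2p}^{2p} ≤ (p r^{1/p})^p r (3 (‖u‖₂² / r² + ‖∇u‖₂²))^p` at scale `r`. -/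
theorem lp_bound_at_scale {u : ℝ × ℝ → ℝ} (hu : ContDiff ℝ 1 u)
    (h1 : ∀ x y : ℝ, u (x + 2, y) = u (x, y)) (h2 : ∀ x y : ℝ, u (x, y + 2) = u (x, y))
    {r p : ℝ} (hr : 0 < r) (hr1 : r ≤ 1) (hp : 1 ≤ p) :
    ∫ x in Icc (-1:ℝ) 1, ∫ y in Icc (-1:ℝ) 1, |u (x, y)| ^ (2 * p) ≤
      (p * r ^ (1 / p)) ^ p * r *
        (3 * ((∫ x in Icc (-1:ℝ) 1, ∫ y in Icc (-1:ℝ) 1, (u (x, y)) ^ 2) / r ^ 2 +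
          ∫ x in Icc (-1:ℝ) 1, ∫ y in Icc (-1:ℝ) 1,
            ((fderiv ℝ u (x, y) (1, 0)) ^ 2 + (fderiv ℝ u (x, y) (0, 1)) ^ 2))) ^ p := by
  have hp0 : 0 < p := by linarith
  have hc : Continuous u := hu.continuous
  have hc' : Continuous (fderiv ℝ u) := hu.continuous_fderiv (by norm_num)
  set G : ℝ × ℝ → ℝ := fun z => 3 * ((u z / r) ^ 2 +
    ((fderiv ℝ u z (1, 0)) ^ 2 + (fderiv ℝ u z (0, 1)) ^ 2)) with hG
  have hGc : Continuous G := by fun_prop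
  have hG0 : ∀ z, 0 ≤ G z := fun z => by positivity
  have hd1 : ∀ x y, fderiv ℝ u (x + 2, y) = fderiv ℝ u (x, y) := fun x y => by
    have := fderiv_comp_add_right (𝕜 := ℝ) (f := u) (x := (x, y)) ((2 : ℝ), (0 : ℝ))
    rw [Prod.mk_add_mk, add_zero] at this
    rw [← this]
    congr 1
    funext z
    have hz : z + ((2 : ℝ), (0 : ℝ)) = (z.1 + 2, z.2) := by ext <;> simp
    rw [hz]
    exact h1 z.1 z.2
  have hd2 : ∀ x y, fderiv ℝ u (x, y + 2) = fderiv ℝ u (x, y) := fun x y => by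
    have := fderiv_comp_add_right (𝕜 := ℝ) (f := u) (x := (x, y)) ((0 : ℝ), (2 : ℝ))
    rw [Prod.mk_add_mk, add_zero] at this
    rw [← this]
    congr 1
    funext z
    have hz : z + ((0 : ℝ), (2 : ℝ)) = (z.1, z.2 + 2) := by ext <;> simp
    rw [hz]
    exact h2 z.1 z.2
  have hGint : ∫ x in Icc (-1:ℝ) 1, ∫ y in Icc (-1:ℝ) 1, G (x, y) =
      3 * ((∫ x in Icc (-1:ℝ) 1, ∫ y in Icc (-1:ℝ) 1, (u (x, y)) ^ 2) / r ^ 2 +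
          ∫ x in Icc (-1:ℝ) 1, ∫ y in Icc (-1:ℝ) 1,
            ((fderiv ℝ u (x, y) (1, 0)) ^ 2 + (fderiv ℝ u (x, y) (0, 1)) ^ 2)) := by
    have hi : ∀ f : ℝ × ℝ → ℝ, Continuous f →
        IntegrableOn f (Icc (-1:ℝ) 1 ×ˢ Icc (-1:ℝ) 1) (volume.prod volume) := fun f hf =>
      hf.continuousOn.integrableOn_compact (isCompact_Icc.prod isCompact_Icc)
    rw [← setIntegral_prod G (hi _ hGc), ← setIntegral_prod (fun z => u z ^ 2) (hi _ (by fun_prop)),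
      ← setIntegral_prod (fun z => (fderiv ℝ u z (1, 0)) ^ 2 + (fderiv ℝ u z (0, 1)) ^ 2)
        (hi _ (by fun_prop)), hG, integral_const_mul,
      integral_add (hi _ (by fun_prop)) (hi _ (by fun_prop)), ← integral_div]
    simp only [div_pow]
  have hRHS : 0 ≤ ∫ x in Icc (-1:ℝ) 1, ∫ y in Icc (-1:ℝ) 1, G (x, y) :=
    integral_nonneg fun x => integral_nonneg fun y => hG0 _
  rw [← hGint, ← ENNReal.ofReal_le_ofReal_iff (by positivity),
    ofReal_integral_square (f := fun z => |u z| ^ (2 * p))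
      (hc.abs.rpow_const fun _ => Or.inr (by positivity)) (fun z => by positivity),
    ENNReal.ofReal_mul (by positivity), ENNReal.ofReal_mul (by positivity),
    ← ENNReal.ofReal_rpow_of_nonneg (by positivity) hp0.le,
    ← ENNReal.ofReal_rpow_of_nonneg hRHS hp0.le, ofReal_integral_square hGc hG0]
  refine le_trans (lintegral_mono fun x => lintegral_mono fun y => ?_)
    (cone_operator_bound (g := fun z => ENNReal.ofReal (G z)) (by fun_prop)
      (fun x y => by simp only [hG, h1, hd1]) (fun x y => by simp only [hG, h2, hd2]) hr hr1 hp)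
  rw [← ENNReal.ofReal_rpow_of_nonneg (abs_nonneg _) (by positivity), ← Real.enorm_eq_ofReal_abs]
  exact ENNReal.rpow_le_rpow (enorm_le_cone hu hr x y) (by positivity)

/-- Choice of the scale, with `A = ‖u‖₂` and `B = ‖∇u‖₂`: `r = A / B` when `0 < A ≤ B`, `r = 1` when
`B < A`, and `r → 0` when `A = 0`. -/
theorem optimize_scale_s8 {p I A B : ℝ} (hp : 1 ≤ p) (hI : 0 ≤ I) (hA : 0 ≤ A) (hB : 0 ≤ B)
    (h : ∀ r : ℝ, 0 < r → r ≤ 1 → I ≤ (p * r ^ (1 / p)) ^ p * r * (3 * (A ^ 2 / r ^ 2 + B ^ 2)) ^ p) :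
    I ^ (1 / (2 * p)) ≤ 2 * √3 * √p * (A ^ (1 / p) * B ^ (1 - 1 / p) + A) := by
  have hp0 : 0 < p := by linarith
  have key : ∀ r : ℝ, 0 < r → r ≤ 1 →
      I ^ (1 / (2 * p)) ≤ √3 * √p * (r ^ (1 / p) * (A / r + B)) := by
    intro r hr hr1
    have e1 : (p * r ^ (1 / p)) ^ p * r * (3 * (A ^ 2 / r ^ 2 + B ^ 2)) ^ p =
        (p * (r ^ (1 / p)) ^ 2 * (3 * (A ^ 2 / r ^ 2 + B ^ 2))) ^ p := by
      have : (r ^ (1 / p)) ^ p = r := by rw [← Real.rpow_mul hr.le]; simp [hp0.ne']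
      have e : p * (r ^ (1 / p)) ^ 2 = p * r ^ (1 / p) * r ^ (1 / p) := by ring
      rw [e, Real.mul_rpow (x := p * r ^ (1 / p) * r ^ (1 / p)) (by positivity) (by positivity),
        Real.mul_rpow (x := p * r ^ (1 / p)) (by positivity) (by positivity), this]
    have h' := Real.rpow_le_rpow hI (h r hr hr1) (by positivity : 0 ≤ 1 / (2 * p))
    rw [e1, ← Real.rpow_mul (by positivity)] at h'
    have e2 : p * (1 / (2 * p)) = 1 / 2 := by field_simp
    rw [e2, ← Real.sqrt_eq_rpow] at h'
    refine h'.trans (Real.sqrt_le_iff.2 ⟨by positivity, ?_⟩)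
    rw [mul_pow, mul_pow, mul_pow, Real.sq_sqrt (by norm_num), Real.sq_sqrt hp0.le, ← div_pow]
    have hAr : 0 ≤ A / r := by positivity
    have : (A / r) ^ 2 + B ^ 2 ≤ (A / r + B) ^ 2 := by nlinarith [mul_nonneg hAr hB]
    calc p * (r ^ (1 / p)) ^ 2 * (3 * ((A / r) ^ 2 + B ^ 2))
        ≤ p * (r ^ (1 / p)) ^ 2 * (3 * (A / r + B) ^ 2) := by gcongr
      _ = 3 * p * ((r ^ (1 / p)) ^ 2 * (A / r + B) ^ 2) := by ring
  have hP : 0 ≤ A ^ (1 / p) * B ^ (1 - 1 / p) := by positivity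
  have hC : 0 ≤ √3 * √p := by positivity
  rcases hA.eq_or_lt with rfl | hA0
  · have hlim : Filter.Tendsto (fun r : ℝ => √3 * √p * (r ^ (1 / p) * (0 / r + B)))
        (nhdsWithin 0 (Ioi 0)) (nhds 0) := by
      have h0 : Filter.Tendsto (fun r : ℝ => r ^ (1 / p)) (nhdsWithin 0 (Ioi 0)) (nhds 0) := by
        have := (Real.continuousAt_rpow_const 0 (1 / p) (Or.inr (by positivity))).tendsto
        rw [Real.zero_rpow (by positivity)] at this
        exact this.mono_left nhdsWithin_le_nhds
      simpa using! (h0.mul_const B).const_mul (√3 * √p)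
    have hle : I ^ (1 / (2 * p)) ≤ 0 := by
      refine ge_of_tendsto hlim ?_
      filter_upwards [Ioc_mem_nhdsGT (zero_lt_one' ℝ)] with r hr using key r hr.1 hr.2
    refine hle.trans (by positivity)
  · rcases le_or_gt A B with hAB | hAB
    · have hB0 : 0 < B := hA0.trans_le hAB
      refine (key (A / B) (by positivity) ((div_le_one hB0).2 hAB)).trans ?_
      have e : (A / B) ^ (1 / p) * (A / (A / B) + B) = 2 * (A ^ (1 / p) * B ^ (1 - 1 / p)) := by
        rw [Real.div_rpow hA hB, Real.rpow_sub hB0, Real.rpow_one, div_div_cancel₀ hA0.ne']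
        ring
      rw [e]
      nlinarith [mul_nonneg hC hA]
    · refine (key 1 one_pos le_rfl).trans ?_
      rw [Real.one_rpow, one_mul, div_one]
      nlinarith [mul_nonneg hC hP, mul_nonneg hC (sub_nonneg.2 hAB.le)]

/-- **Gagliardo–Nirenberg inequality with `√p` growth on the 2D torus**:
`‖u‖_{L^{2p}} ≤ C √p (‖u‖_{L²}^{1/p} ‖∇u‖_{L²}^{1−1/p} + ‖u‖_{L²})` with `C`
independent of `p`. -/
theorem gagliardo_nirenberg_sqrt_p_torus :
    ∃ C : ℝ, ∀ p : ℝ, 1 ≤ p → ∀ u : ℝ × ℝ → ℝ, ContDiff ℝ (⊤ : ℕ∞) u →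
      (∀ x y : ℝ, u (x + 2, y) = u (x, y)) →
      (∀ x y : ℝ, u (x, y + 2) = u (x, y)) →
      (∫ x in Icc (-1:ℝ) 1, ∫ y in Icc (-1:ℝ) 1, |u (x, y)| ^ (2 * p)) ^ (1 / (2 * p))
        ≤ C * Real.sqrt p *
          (((∫ x in Icc (-1:ℝ) 1, ∫ y in Icc (-1:ℝ) 1,
              (u (x, y)) ^ 2) ^ ((1:ℝ)/2)) ^ (1 / p) *
           ((∫ x in Icc (-1:ℝ) 1, ∫ y in Icc (-1:ℝ) 1,
              ((deriv (fun t => u (t, y)) x) ^ 2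
                + (deriv (fun t => u (x, t)) y) ^ 2)) ^ ((1:ℝ)/2)) ^ (1 - 1 / p)
           + (∫ x in Icc (-1:ℝ) 1, ∫ y in Icc (-1:ℝ) 1,
              (u (x, y)) ^ 2) ^ ((1:ℝ)/2)) := by
  refine ⟨2 * √3, fun p hp u hu h1 h2 => ?_⟩
  have hu1 : ContDiff ℝ 1 u := hu.of_le (by exact_mod_cast le_top)
  have hdiff : Differentiable ℝ u := hu1.differentiable (by norm_num)
  have hdx : ∀ x y : ℝ, deriv (fun t => u (t, y)) x = fderiv ℝ u (x, y) (1, 0) := fun x y =>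
    ((hdiff (x, y)).hasFDerivAt.comp_hasDerivAt x
      ((hasDerivAt_id x).prodMk (hasDerivAt_const x y))).deriv
  have hdy : ∀ x y : ℝ, deriv (fun t => u (x, t)) y = fderiv ℝ u (x, y) (0, 1) := fun x y =>
    ((hdiff (x, y)).hasFDerivAt.comp_hasDerivAt y
      ((hasDerivAt_const y x).prodMk (hasDerivAt_id y))).deriv
  simp only [hdx, hdy]
  have hsq : ∀ a : ℝ, 0 ≤ a → (a ^ ((1:ℝ) / 2)) ^ 2 = a := fun a ha => by
    rw [← Real.sqrt_eq_rpow, Real.sq_sqrt ha]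
  have hA : 0 ≤ ∫ x in Icc (-1:ℝ) 1, ∫ y in Icc (-1:ℝ) 1, (u (x, y)) ^ 2 :=
    integral_nonneg fun x => integral_nonneg fun y => sq_nonneg _
  have hB : 0 ≤ ∫ x in Icc (-1:ℝ) 1, ∫ y in Icc (-1:ℝ) 1,
      ((fderiv ℝ u (x, y) (1, 0)) ^ 2 + (fderiv ℝ u (x, y) (0, 1)) ^ 2) :=
    integral_nonneg fun x => integral_nonneg fun y => by positivity
  refine optimize_scale_s8 hp (integral_nonneg fun x => integral_nonneg fun y => by positivity)
    (Real.rpow_nonneg hA _) (Real.rpow_nonneg hB _) fun r hr hr1 => ?_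
  rw [hsq _ hA, hsq _ hB]
  exact lp_bound_at_scale hu1 h1 h2 hr hr1 hp
end
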